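/- Let K be a number field and h ≥ 2 an integer. Then ∑_{𝔪 ∈ S_h(x)} ω(𝔪)² = (κ_K/ζ_K(h))·x·(log log x)² + (κ_K(2ℭ₁ + 1)/ζ_K(h))·x·log log x + (κ_K·ℭ₂/ζ_K(h))·x + O_h(x·log log x/log x) as the real number x → ∞, where the implied constant depends only on h and K. -/

import Mathlib

open Filter Topology Asymptotics NumberField

noncomputable section

/-- The number of distinct (nonzero) prime ideals dividing the ideal `I`. -/
def omegaK {K : Type*} [Field K] [NumberField K] (I : Ideal (𝓞 K)) : ℕ :=
  {p : Ideal (𝓞 K) | p.IsPrime ∧ p ≠ ⊥ ∧ p ∣ I}.ncard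

/-- The ideal `I` is `h`-free: no prime ideal divides it to order `h`. -/
def HFreeI {K : Type*} [Field K] [NumberField K] (h : ℕ) (I : Ideal (𝓞 K)) : Prop :=
  ∀ p : Ideal (𝓞 K), p.IsPrime → p ≠ ⊥ → ¬ p ^ h ∣ I

/-- The ideal `I` is `h`-full: every prime ideal dividing it divides it to
order at least `h`. -/
def HFullI {K : Type*} [Field K] [NumberField K] (h : ℕ) (I : Ideal (𝓞 K)) : Prop :=
  ∀ p : Ideal (𝓞 K), p.IsPrime → p ≠ ⊥ → p ∣ I → p ^ h ∣ I

/-- The ideal-counting constant `κ_K = 2^{r₁} (2π)^{r₂} h_K R_K / (w_K √|d_K|)`. -/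
def kappaK (K : Type*) [Field K] [NumberField K] : ℝ :=
  (2 ^ InfinitePlace.nrRealPlaces K * (2 * Real.pi) ^ InfinitePlace.nrComplexPlaces K *
      (classNumber K) * Units.regulator K) /
    ((Units.torsionOrder K : ℕ) * Real.sqrt |(discr K : ℝ)|)

/-- The Dedekind zeta value `ζ_K(h) = ∑_{𝔞 ≠ 0} N(𝔞)^{-h}`. -/
def zetaK (K : Type*) [Field K] [NumberField K] (h : ℕ) : ℝ :=
  ∑' I : {I : Ideal (𝓞 K) // I ≠ ⊥}, 1 / (Ideal.absNorm I.val : ℝ) ^ h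

/-- `A` is the Mertens constant `𝔄` for the prime ideals of `K`:
`𝔄 = lim (∑_{N(𝔭) ≤ x} 1/N(𝔭) − log log x)`. -/
def MertensK (K : Type*) [Field K] [NumberField K] (A : ℝ) : Prop :=
  Tendsto (fun x : ℝ =>
      (∑ᶠ p ∈ {p : Ideal (𝓞 K) | p.IsPrime ∧ p ≠ ⊥ ∧ (Ideal.absNorm p : ℝ) ≤ x},
        1 / (Ideal.absNorm p : ℝ)) - Real.log (Real.log x))
    atTop (𝓝 A)

/-- The constant `𝔅 = -π²/6`. -/
def BconstK : ℝ := -(Real.pi ^ 2) / 6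

/-- The constant `ℭ₁` for `K`, given the Mertens constant `A`. -/
def C1K (K : Type*) [Field K] [NumberField K] (h : ℕ) (A : ℝ) : ℝ :=
  A - ∑' p : {p : Ideal (𝓞 K) // p.IsPrime ∧ p ≠ ⊥},
    ((Ideal.absNorm p.val : ℝ) - 1) /
      ((Ideal.absNorm p.val : ℝ) * ((Ideal.absNorm p.val : ℝ) ^ h - 1))

/-- The constant `ℭ₂` for `K`, given the Mertens constant `A`. -/
def C2K (K : Type*) [Field K] [NumberField K] (h : ℕ) (A : ℝ) : ℝ :=
  C1K K h A ^ 2 + C1K K h A + BconstK -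
    ∑' p : {p : Ideal (𝓞 K) // p.IsPrime ∧ p ≠ ⊥},
      (((Ideal.absNorm p.val : ℝ) ^ (h - 1) - 1) /
        ((Ideal.absNorm p.val : ℝ) ^ h - 1)) ^ 2

/-- The constant `γ_h` for `K`. -/
def gammaK (K : Type*) [Field K] [NumberField K] (h : ℕ) : ℝ :=
  ∏' p : {p : Ideal (𝓞 K) // p.IsPrime ∧ p ≠ ⊥},
    (1 + ((Ideal.absNorm p.val : ℝ) - (Ideal.absNorm p.val : ℝ) ^ (1 / (h : ℝ))) /
      ((Ideal.absNorm p.val : ℝ) ^ 2 *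
        ((Ideal.absNorm p.val : ℝ) ^ (1 / (h : ℝ)) - 1)))

/-- The convergent series `𝔏_h(r)` for `K`. -/
def LhK (K : Type*) [Field K] [NumberField K] (h : ℕ) (r : ℝ) : ℝ :=
  ∑' p : {p : Ideal (𝓞 K) // p.IsPrime ∧ p ≠ ⊥},
    1 / ((Ideal.absNorm p.val : ℝ) ^ (r / (h : ℝ) - 1) *
      ((Ideal.absNorm p.val : ℝ) -
        (Ideal.absNorm p.val : ℝ) ^ (1 - 1 / (h : ℝ)) + 1))

/-- The constant `𝔇₁` for `K`, given the Mertens constant `A`. -/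
def D1K (K : Type*) [Field K] [NumberField K] (h : ℕ) (A : ℝ) : ℝ :=
  A - Real.log (h : ℝ) + LhK K h ((h : ℝ) + 1) - LhK K h (2 * (h : ℝ))

/-- The constant `𝔇₂` for `K`, given the Mertens constant `A`. -/
def D2K (K : Type*) [Field K] [NumberField K] (h : ℕ) (A : ℝ) : ℝ :=
  D1K K h A ^ 2 + D1K K h A + BconstK -
    ∑' p : {p : Ideal (𝓞 K) // p.IsPrime ∧ p ≠ ⊥},
      ((Ideal.absNorm p.val : ℝ) -
        (Ideal.absNorm p.val : ℝ) ^ (1 - 1 / (h : ℝ)) + 1)⁻¹ ^ 2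

/-- points within `ε` of a point on the other side of `X` -/
def nearBd {E : Type*} [NormedAddCommGroup E] (X : Set E) (ε : ℝ) : Set E :=
  {y | ∃ y', ‖y' - y‖ ≤ ε ∧ ¬ (y ∈ X ↔ y' ∈ X)}

open MeasureTheory Pointwise in
theorem lattice_count_bounds {E : Type*} [NormedAddCommGroup E] [NormedSpace ℝ E]
    [FiniteDimensional ℝ E] [MeasurableSpace E] [BorelSpace E] (μ : Measure E)
    [μ.IsAddHaarMeasure] {ι : Type*} [Fintype ι] (b : Module.Basis ι ℝ E) (X : Set E)
    (hXb : Bornology.IsBounded X) (D : ℝ)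
    (hD : ∀ z ∈ ZSpan.fundamentalDomain b, ‖z‖ ≤ D) :
    (((X ∩ (Submodule.span ℤ (Set.range b) : Set E)).ncard : ENNReal) *
        μ (ZSpan.fundamentalDomain b) ≤ μ X + μ (nearBd X D)) ∧
    μ X ≤ ((X ∩ (Submodule.span ℤ (Set.range b) : Set E)).ncard : ENNReal) *
        μ (ZSpan.fundamentalDomain b) + μ (nearBd X D) := by
  classical
  set Λ := Submodule.span ℤ (Set.range b) with hΛ
  set F := ZSpan.fundamentalDomain b with hF
  have : ProperSpace E := FiniteDimensional.proper ℝ E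
  have hfin : (X ∩ (Λ : Set E)).Finite := ZSpan.setFinite_inter b hXb
  have hFm : MeasurableSet F := ZSpan.fundamentalDomain_measurableSet b
  set S := hfin.toFinset with hS
  have hcard : (X ∩ (Λ : Set E)).ncard = S.card := by
    rw [Set.ncard_eq_toFinset_card _ hfin]
  have hU : μ (⋃ l ∈ S, l +ᵥ F) = (S.card : ENNReal) * μ F := by
    rw [measure_biUnion_finset]
    · simp [measure_vadd]
    · intro x hx y hy hxy
      simp only [hS, Finset.mem_coe, Set.Finite.mem_toFinset] at hx hy
      rw [Function.onFun, Set.disjoint_left]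
      rintro z ⟨u, hu, rfl⟩ ⟨v, hv, hvz⟩
      apply hxy
      simp only [vadd_eq_add] at hvz
      have h1 : ZSpan.fract b (y + v) = v := by
        rw [ZSpan.fract_zSpan_add b v hy.2]; exact (ZSpan.fract_eq_self (b := b)).2 hv
      have h2 : ZSpan.fract b (x + u) = u := by
        rw [ZSpan.fract_zSpan_add b u hx.2]; exact (ZSpan.fract_eq_self (b := b)).2 hu
      rw [hvz, h2] at h1
      subst h1
      exact (add_right_cancel hvz).symm
    · intro x _
      exact hFm.const_vadd x
  rw [hcard, ← hU]
  constructor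
  · refine (measure_mono ?_).trans (measure_union_le _ _)
    intro y hy
    simp only [Set.mem_iUnion] at hy
    obtain ⟨l, hl, z, hz, rfl⟩ := hy
    simp only [hS, Set.Finite.mem_toFinset] at hl
    by_cases h : l +ᵥ z ∈ X
    · exact Or.inl h
    · refine Or.inr ⟨l, ?_, ?_⟩
      · simp only [vadd_eq_add]
        rw [sub_add_cancel_left, norm_neg]; exact hD z hz
      · simp only [h, hl.1]; simp
  · refine (measure_mono ?_).trans (measure_union_le _ _)
    intro y hy
    by_cases h : ((ZSpan.floor b y : Λ) : E) ∈ X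
    · left
      simp only [Set.mem_iUnion]
      refine ⟨(ZSpan.floor b y : Λ), ?_, ZSpan.fract b y, ZSpan.fract_mem_fundamentalDomain b y, ?_⟩
      · simp only [hS, Set.Finite.mem_toFinset]
        exact ⟨h, (ZSpan.floor b y).2⟩
      · simp [ZSpan.fract_apply]
    · right
      refine ⟨(ZSpan.floor b y : Λ), ?_, ?_⟩
      · rw [← norm_neg, neg_sub, ← ZSpan.fract_apply]
        exact hD _ (ZSpan.fract_mem_fundamentalDomain b y)
      · simp [h, hy]

open MeasureTheory Pointwise in
theorem lattice_count_asymp {E : Type*} [NormedAddCommGroup E] [NormedSpace ℝ E]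
    [FiniteDimensional ℝ E] [MeasurableSpace E] [BorelSpace E] (μ : Measure E)
    [μ.IsAddHaarMeasure] {ι : Type*} [Fintype ι] (b : Module.Basis ι ℝ E) (X : Set E)
    (hXb : Bornology.IsBounded X) (C : ℝ)
    (hC : ∀ ε : ℝ, 0 < ε → ε ≤ 1 → μ (nearBd X ε) ≤ ENNReal.ofReal (C * Real.sqrt ε)) :
    ∃ c C' t0 : ℝ, 1 ≤ t0 ∧ ∀ t : ℝ, t0 ≤ t →
      |(((t • X) ∩ (Submodule.span ℤ (Set.range b) : Set E)).ncard : ℝ)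
        - c * t ^ (Module.finrank ℝ E)| ≤ C' * (t ^ (Module.finrank ℝ E) / Real.sqrt t) := by
  obtain ⟨D0, hD0⟩ := isBounded_iff_forall_norm_le.1 (ZSpan.fundamentalDomain_isBounded b)
  set D := max D0 1 with hDdef
  have hD : ∀ z ∈ ZSpan.fundamentalDomain b, ‖z‖ ≤ D := fun z hz => (hD0 z hz).trans (le_max_left _ _)
  have hD1 : 1 ≤ D := le_max_right _ _
  set n := Module.finrank ℝ E
  set F := ZSpan.fundamentalDomain b with hF
  have hFtop : μ F ≠ ⊤ := (ZSpan.fundamentalDomain_isBounded b).measure_lt_top.ne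
  have hF0 : μ F ≠ 0 := ZSpan.measure_fundamentalDomain_ne_zero b
  have hXtop : μ X ≠ ⊤ := hXb.measure_lt_top.ne
  set f := (μ F).toReal with hf
  have hfpos : 0 < f := ENNReal.toReal_pos hF0 hFtop
  refine ⟨(μ X).toReal / f, |C| * Real.sqrt D / f, D, hD1, fun t ht => ?_⟩
  have ht0 : 0 < t := by linarith
  have hsub : nearBd (t • X) D ⊆ t • nearBd X (D / t) := by
    rintro y ⟨y', h1, h2⟩
    rw [Set.mem_smul_set_iff_inv_smul_mem₀ ht0.ne', Set.mem_smul_set_iff_inv_smul_mem₀ ht0.ne'] at h2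
    rw [Set.mem_smul_set_iff_inv_smul_mem₀ ht0.ne']
    refine ⟨t⁻¹ • y', ?_, h2⟩
    rw [← smul_sub, norm_smul, Real.norm_of_nonneg (by positivity), div_eq_inv_mul]
    gcongr
  have hnb : μ (nearBd (t • X) D) ≤ ENNReal.ofReal (t ^ n * (|C| * Real.sqrt (D / t))) := by
    refine (measure_mono hsub).trans ?_
    rw [Measure.addHaar_smul, abs_of_nonneg (by positivity), ENNReal.ofReal_mul (by positivity)]
    gcongr
    refine (hC _ (by positivity) ((div_le_one ht0).2 ht)).trans (ENNReal.ofReal_le_ofReal ?_)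
    gcongr
    exact le_abs_self C
  have htX : μ (t • X) = ENNReal.ofReal (t ^ n * (μ X).toReal) := by
    rw [Measure.addHaar_smul, abs_of_nonneg (by positivity), ENNReal.ofReal_mul (by positivity),
      ENNReal.ofReal_toReal hXtop]
  have hb : Bornology.IsBounded (t • X) := hXb.smul₀ t
  obtain ⟨h1, h2⟩ := lattice_count_bounds μ b (t • X) hb D hD
  set m := ((t • X) ∩ (Submodule.span ℤ (Set.range b) : Set E)).ncard
  have hm : (m : ENNReal) * μ F = ENNReal.ofReal (m * f) := by
    rw [ENNReal.ofReal_mul (by positivity), ENNReal.ofReal_natCast, ENNReal.ofReal_toReal hFtop]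
  rw [← hF, hm, htX] at h1 h2
  have h1' := h1.trans (add_le_add_right hnb _)
  have h2' := h2.trans (add_le_add_right hnb _)
  rw [← ENNReal.ofReal_add (by positivity) (by positivity), ENNReal.ofReal_le_ofReal_iff (by positivity)] at h1' h2'
  rw [Real.sqrt_div (by positivity)] at h1' h2'
  have e1 : (m : ℝ) - (μ X).toReal / f * t ^ n = (m * f - t ^ n * (μ X).toReal) / f := by
    field_simp
  have e2 : |C| * Real.sqrt D / f * (t ^ n / Real.sqrt t) = (t ^ n * (|C| * (Real.sqrt D / Real.sqrt t))) / f := by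
    field_simp
  rw [e1, e2, abs_div, abs_of_pos hfpos]
  gcongr
  rw [abs_le]; constructor <;> linarith

section slab
open NumberField NumberField.InfinitePlace NumberField.mixedEmbedding
  NumberField.mixedEmbedding.fundamentalCone NumberField.Units NumberField.Units.dirichletUnitTheorem
open MeasureTheory ENNReal Module

open scoped Classical in
theorem vol_slab_formula (K : Type*) [Field K] [NumberField K] :
    ∃ C0 : ENNReal, C0 ≠ ⊤ ∧ ∀ S : Set (realSpace K), MeasurableSet S →
      volume ((normAtAllPlaces : mixedSpace K → realSpace K) ⁻¹' (expMapBasis '' S)) =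
        C0 * ∫⁻ x in S, .ofReal (Real.exp (x w₀ * (finrank ℚ K : ℕ))) := by
  refine ⟨2 ^ nrRealPlaces K * ENNReal.ofReal (2 * Real.pi) ^ nrComplexPlaces K *
    (2⁻¹ ^ nrComplexPlaces K * ENNReal.ofReal (regulator K) * (finrank ℚ K)),
    by finiteness, fun S hS => ?_⟩
  · have hm : MeasurableSet ((normAtAllPlaces : mixedSpace K → realSpace K) ⁻¹' (expMapBasis '' S)) := by
      refine MeasurableSet.preimage ?_ (continuous_normAtAllPlaces K).measurable
      exact MeasurableSet.image_of_continuousOn_injOn hS (continuous_expMapBasis K).continuousOn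
        (injective_expMapBasis K).injOn
    rw [volume_eq_two_pow_mul_two_pi_pow_mul_integral Set.preimage_image_preimage hm,
      normAtAllPlaces_image_preimage_expMapBasis,
      setLIntegral_expMapBasis_image hS (by fun_prop)]
    simp_rw [ENNReal.inv_mul_cancel_right
      (Finset.prod_ne_zero_iff.mpr fun _ _ ↦ ofReal_ne_zero_iff.mpr (expMapBasis_pos _ _))
      (prod_ne_top fun _ _ ↦ ofReal_ne_top)]
    simp_rw [← mul_assoc]

open scoped Classical in
theorem lint_box (K : Type*) [Field K] [NumberField K] (n : ℕ) (s : InfinitePlace K → Set ℝ) :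
    ∫⁻ (x : realSpace K) in Set.univ.pi s, .ofReal (Real.exp (x w₀ * n)) =
      ∏ w, (if w = w₀ then ∫⁻ t in s w, .ofReal (Real.exp (t * n)) else volume (s w)) := by
  rw [volume_pi, Measure.restrict_pi_pi, lintegral_eq_lmarginal_univ 0,
    lmarginal_erase' _ (by fun_prop) (Finset.mem_univ w₀)]
  simp_rw [Function.update_self, lmarginal, lintegral_const, Measure.pi_univ,
    Measure.restrict_apply_univ]
  rw [← Finset.mul_prod_erase _ _ (Finset.mem_univ w₀), if_pos rfl]
  congr 1
  rw [Finset.prod_coe_sort (Finset.univ.erase w₀) (fun w => volume (s w))]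
  refine Finset.prod_congr rfl fun w hw => ?_
  rw [if_neg (Finset.ne_of_mem_erase hw)]

open scoped Classical in
/-- the slab -/
def slabK (K : Type*) [Field K] [NumberField K] (K1 : ℝ) (i : InfinitePlace K) (e r : ℝ) :
    Set (realSpace K) :=
  Set.univ.pi fun w => if w = i then Set.Icc (e - r) (e + r) else
    if w = w₀ then Set.Iic K1 else Set.Icc (-K1) (1 + K1)

open scoped Classical in
theorem vol_slab_le (K : Type*) [Field K] [NumberField K] (K1 : ℝ) (hK1 : 1 ≤ K1) :
    ∃ C : ℝ, 0 ≤ C ∧ ∀ (i : InfinitePlace K) (e r : ℝ), 0 ≤ e → e ≤ 1 → 0 ≤ r → r ≤ K1 →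
      volume ((normAtAllPlaces : mixedSpace K → realSpace K) ⁻¹' (expMapBasis '' slabK K K1 i e r))
        ≤ ENNReal.ofReal (C * r) := by
  obtain ⟨C0, hC0, hvol⟩ := vol_slab_formula K
  set n := finrank ℚ K with hn
  have hnpos : 0 < (n : ℝ) := by exact_mod_cast (finrank_pos (R := ℚ) (M := K))
  set I1 := ∫⁻ t in Set.Iic K1, ENNReal.ofReal (Real.exp (t * n)) with hI1
  have hI1fin : I1 ≠ ⊤ := by
    have := integrableOn_exp_mul_Iic hnpos K1
    simp_rw [mul_comm (n : ℝ)] at this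
    exact (this.lintegral_lt_top).ne
  set M : ENNReal := 2 + I1 + ENNReal.ofReal (1 + 2 * K1) +
    2 * ENNReal.ofReal (Real.exp ((1 + K1) * n)) with hM
  have hMfin : M ≠ ⊤ := by rw [hM]; finiteness
  have hTfin : C0 * M ^ (Fintype.card (InfinitePlace K)) ≠ ⊤ := by finiteness
  refine ⟨(C0 * M ^ (Fintype.card (InfinitePlace K))).toReal, ENNReal.toReal_nonneg,
    fun i e r he0 he1 hr hr1 => ?_⟩
  rw [slabK, hvol, lint_box, ENNReal.ofReal_mul ENNReal.toReal_nonneg, ENNReal.ofReal_toReal hTfin]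
  · rw [mul_assoc]
    gcongr
    calc _ ≤ ∏ w : InfinitePlace K, M * (if w = i then ENNReal.ofReal r else 1) := by
          refine Finset.prod_le_prod' fun w _ => ?_
          by_cases hwi : w = i
          · simp only [hwi, if_true]
            split_ifs with h0
            · calc _ ≤ ∫⁻ t in Set.Icc (e - r) (e + r), ENNReal.ofReal (Real.exp ((1 + K1) * n)) := by
                    refine setLIntegral_mono' measurableSet_Icc fun t ht => ?_
                    gcongr
                    linarith [ht.2]
                _ = 2 * ENNReal.ofReal (Real.exp ((1 + K1) * n)) * ENNReal.ofReal r := by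
                    rw [setLIntegral_const, Real.volume_Icc, show e + r - (e - r) = 2 * r by ring,
                      ENNReal.ofReal_mul (by norm_num)]
                    simp; ring
                _ ≤ _ := by gcongr; rw [hM]; exact le_add_self
            · rw [Real.volume_Icc, show e + r - (e - r) = 2 * r by ring,
                      ENNReal.ofReal_mul (by norm_num)]
              gcongr
              simp [hM, add_assoc]
          · simp only [hwi, if_false, mul_one]
            split_ifs with h0
            · simp only [hM]
              exact le_add_right (le_add_right le_add_self)
            · rw [Real.volume_Icc, show 1 + K1 - (-K1) = 1 + 2 * K1 by ring]
              simp only [hM]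
              exact le_add_right le_add_self
      _ = _ := by
          rw [Finset.prod_mul_distrib, Finset.prod_const, Finset.card_univ]; simp
  · refine MeasurableSet.univ_pi fun w => ?_
    split_ifs <;> measurability

end slab

section nearb
open NumberField NumberField.InfinitePlace NumberField.mixedEmbedding
  NumberField.mixedEmbedding.fundamentalCone NumberField.Units NumberField.Units.dirichletUnitTheorem
open MeasureTheory ENNReal Module

open scoped Classical in
theorem normAtPlace_le_norm' {K : Type*} [Field K] [NumberField K] (w : InfinitePlace K)
    (x : mixedSpace K) : normAtPlace w x ≤ ‖x‖ := by
  rw [norm_eq_sup'_normAtPlace]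
  exact Finset.le_sup' (fun w => normAtPlace w x) (Finset.mem_univ w)

open scoped Classical in
theorem normAtPlace_sub_abs {K : Type*} [Field K] [NumberField K] (w : InfinitePlace K)
    (x y : mixedSpace K) : |normAtPlace w x - normAtPlace w y| ≤ ‖x - y‖ := by
  rw [abs_le]
  have h1 := normAtPlace_add_le w (x - y) y
  have h2 := normAtPlace_add_le w (y - x) x
  have h3 := normAtPlace_le_norm' w (x - y)
  have h4 := normAtPlace_le_norm' w (y - x)
  rw [norm_sub_rev] at h4
  simp only [sub_add_cancel] at h1 h2
  constructor <;> linarith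

open scoped Classical in
theorem normLeOne_balanced (K : Type*) [Field K] [NumberField K] :
    ∃ K2 : ℝ, 0 ≤ K2 ∧ ∀ x ∈ normLeOne K, ∀ w, ‖x‖ ≤ K2 * normAtPlace w x := by
  set Q : Set (realSpace K) := Set.univ.pi fun w ↦ if w = w₀ then {0} else Set.Icc 0 1 with hQ
  have hQc : IsCompact Q := by
    refine isCompact_univ_pi fun w ↦ ?_
    split_ifs
    · exact isCompact_singleton
    · exact isCompact_Icc
  have hb : ∀ v w : InfinitePlace K, ∃ C : ℝ, ∀ c ∈ Q, ‖expMapBasis c v / expMapBasis c w‖ ≤ C := by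
    intro v w
    refine hQc.exists_bound_of_continuousOn (Continuous.continuousOn ?_)
    have h := continuous_expMapBasis K
    exact ((continuous_apply v).comp h).div ((continuous_apply w).comp h)
      (fun x => (expMapBasis_pos x w).ne')
  choose C hC using hb
  refine ⟨∑ v, ∑ w, |C v w|, by positivity, fun x hx w => ?_⟩
  rw [normLeOne_eq_preimage] at hx
  obtain ⟨c, hc, hcx⟩ := hx
  have hval : ∀ v, normAtPlace v x = Real.exp (c w₀) *
      expMapBasis (fun i ↦ if i = w₀ then 0 else c i) v := by
    intro v
    have := congrFun hcx v
    rw [normAtAllPlaces_apply] at this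
    rw [← this, expMapBasis_apply'' c]; rfl
  have hcQ : (fun i ↦ if i = w₀ then 0 else c i) ∈ Q := by
    rw [hQ, Set.mem_univ_pi]
    intro i
    have := hc i (Set.mem_univ _)
    split_ifs with h
    · simp
    · simp only [h, if_false] at this
      exact ⟨this.1, this.2.le⟩
  rw [norm_eq_sup'_normAtPlace]
  refine Finset.sup'_le _ _ fun v _ ↦ ?_
  have h1 := hC v w _ hcQ
  have hp := expMapBasis_pos (fun i ↦ if i = w₀ then 0 else c i) w
  have h2 : C v w ≤ ∑ v, ∑ w, |C v w| :=
    (le_abs_self _).trans <| (Finset.single_le_sum (f := fun w => |C v w|)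
      (fun _ _ => abs_nonneg _) (Finset.mem_univ w)).trans <|
      Finset.single_le_sum (f := fun v => ∑ w, |C v w|)
        (fun _ _ => Finset.sum_nonneg fun _ _ => abs_nonneg _) (Finset.mem_univ v)
  have h3 := (le_abs_self _).trans (h1.trans h2)
  rw [div_le_iff₀ hp] at h3
  rw [hval, hval, mul_left_comm]
  exact mul_le_mul_of_nonneg_left h3 (Real.exp_nonneg _)

theorem log_sub_abs_le {a b η ε : ℝ} (hη : 0 < η) (hε : 2 * ε ≤ η) (ha : η ≤ a) (hab : |b - a| ≤ ε) :
    |Real.log b - Real.log a| ≤ 2 * (ε / η) := by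
  have h := abs_le.1 hab
  have hb : η / 2 ≤ b := by linarith
  have hb0 : 0 < b := by linarith
  have ha0 : 0 < a := by linarith
  have hε0 : 0 ≤ ε := (abs_nonneg _).trans hab
  have e1 : ∀ u v : ℝ, η / 2 ≤ u → η / 2 ≤ v → u - v ≤ ε → Real.log u - Real.log v ≤ 2 * (ε / η) := by
    intro u v hu hv huv
    have hu0 : 0 < u := by linarith
    have hv0 : 0 < v := by linarith
    rw [← Real.log_div hu0.ne' hv0.ne']
    refine (Real.log_le_sub_one_of_pos (by positivity)).trans ?_
    have : u / v - 1 = (u - v) / v := by field_simp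
    rw [this, show 2 * (ε / η) = ε / (η / 2) by field_simp]
    calc (u - v) / v ≤ ε / v := by gcongr
      _ ≤ _ := by gcongr
  rw [abs_le]
  have := e1 b a hb (by linarith) (by linarith)
  have := e1 a b (by linarith) hb (by linarith)
  constructor <;> linarith

/-- parameters -/
def parK {K : Type*} [Field K] [NumberField K] (y : mixedSpace K) : realSpace K :=
  expMapBasis.symm (normAtAllPlaces y)

theorem parK_eq {K : Type*} [Field K] [NumberField K] (y : mixedSpace K) :
    parK y = (completeBasis K).equivFunL (expMap.symm (normAtAllPlaces y)) := by
  rfl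

theorem parK_mem_iff {K : Type*} [Field K] [NumberField K] (y : mixedSpace K)
    (hy : ∀ w, 0 < normAtPlace w y) (S : Set (realSpace K)) :
    y ∈ (normAtAllPlaces : mixedSpace K → realSpace K) ⁻¹' (expMapBasis '' S) ↔ parK y ∈ S := by
  have h : expMapBasis (parK y) = normAtAllPlaces y :=
    expMapBasis.right_inv (Set.mem_univ_pi.mpr hy)
  rw [Set.mem_preimage, ← h, (injective_expMapBasis K).mem_set_image]

open scoped Classical in
theorem parK_lip (K : Type*) [Field K] [NumberField K] :
    ∃ K1 : ℝ, 1 ≤ K1 ∧ ∀ (y y' : mixedSpace K) (η ε : ℝ), 0 < η → 2 * ε ≤ η →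
      (∀ w, η ≤ normAtPlace w y) → ‖y' - y‖ ≤ ε → ∀ w, |parK y' w - parK y w| ≤ K1 * (ε / η) := by
  set L : realSpace K →L[ℝ] (InfinitePlace K → ℝ) := ((completeBasis K).equivFunL : realSpace K ≃L[ℝ] _).toContinuousLinearMap with hL
  refine ⟨4 * ‖L‖ + 1, by linarith [norm_nonneg L], fun y y' η ε hη hε hy hyy w => ?_⟩
  have hε0 : 0 ≤ ε := (norm_nonneg _).trans hyy
  have h1 : ‖expMap.symm (normAtAllPlaces y') - expMap.symm (normAtAllPlaces y)‖ ≤ 4 * (ε / η) := by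
    rw [pi_norm_le_iff_of_nonneg (by positivity)]
    intro v
    rw [Pi.sub_apply, expMap_symm_apply, expMap_symm_apply, normAtAllPlaces_apply,
      normAtAllPlaces_apply, ← mul_sub, norm_mul, Real.norm_eq_abs, Real.norm_eq_abs]
    have h2 := log_sub_abs_le hη hε (hy v) ((normAtPlace_sub_abs v y' y).trans hyy)
    have h3 : |((v.mult : ℕ) : ℝ)| ≤ 2 := by
      rw [Nat.abs_cast]
      unfold InfinitePlace.mult
      split_ifs <;> norm_num
    calc _ ≤ 2 * (2 * (ε / η)) := by gcongr
      _ = _ := by ring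
  have h2 : parK y' - parK y = L (expMap.symm (normAtAllPlaces y') - expMap.symm (normAtAllPlaces y)) := by
    rw [map_sub]; rfl
  have h3 := (norm_le_pi_norm (parK y' - parK y) w)
  rw [Pi.sub_apply, Real.norm_eq_abs] at h3
  refine h3.trans ?_
  rw [h2]
  refine (L.le_opNorm _).trans ?_
  have : 0 ≤ ε / η := by positivity
  nlinarith [norm_nonneg L, mul_le_mul_of_nonneg_left h1 (norm_nonneg L)]

open scoped Classical in
theorem param_slab (K : Type*) [Field K] [NumberField K] (K1 r : ℝ) (hr : r ≤ K1)
    (u v : realSpace K) (hu : u ∈ paramSet K) (hv : v ∉ paramSet K) (huv : ∀ w, |u w - v w| ≤ r) :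
    ∃ i : InfinitePlace K, ∃ e : ℝ, (e = 0 ∨ e = 1) ∧ u ∈ slabK K K1 i e r ∧ v ∈ slabK K K1 i e r := by
  have hbox : ∀ w, (w = w₀ → u w ≤ K1 ∧ v w ≤ K1) ∧
      (w ≠ w₀ → (-K1 ≤ u w ∧ u w ≤ 1 + K1) ∧ (-K1 ≤ v w ∧ v w ≤ 1 + K1)) := by
    intro w
    have h1 := hu w (Set.mem_univ _)
    have h2 := abs_le.1 (huv w)
    have h3 := (abs_nonneg _).trans (huv w)
    constructor
    · intro hw
      simp only [hw, if_true, Set.mem_Iic] at h1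
      subst hw
      constructor <;> linarith
    · intro hw
      simp only [hw, if_false, Set.mem_Ico] at h1
      refine ⟨⟨?_, ?_⟩, ?_, ?_⟩ <;> linarith
  obtain ⟨i, hi⟩ : ∃ i, v i ∉ (if i = w₀ then Set.Iic (0 : ℝ) else Set.Ico 0 1) := by
    by_contra! h
    exact hv (fun i _ => h i)
  have key : ∃ e : ℝ, (e = 0 ∨ e = 1) ∧ u i ∈ Set.Icc (e - r) (e + r) ∧ v i ∈ Set.Icc (e - r) (e + r) := by
    have h1 := hu i (Set.mem_univ _)
    have h2 := abs_le.1 (huv i)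
    by_cases hw : i = w₀
    · simp only [hw, if_true, Set.mem_Iic, not_le] at h1 hi
      subst hw
      refine ⟨0, Or.inl rfl, ⟨?_, ?_⟩, ?_, ?_⟩ <;> linarith
    · simp only [hw, if_false, Set.mem_Ico, not_and_or, not_le, not_lt] at h1 hi
      rcases hi with hi | hi
      · refine ⟨0, Or.inl rfl, ⟨?_, ?_⟩, ?_, ?_⟩ <;> linarith
      · refine ⟨1, Or.inr rfl, ⟨?_, ?_⟩, ?_, ?_⟩ <;> linarith
  obtain ⟨e, he, h1, h2⟩ := key
  refine ⟨i, e, he, ?_, ?_⟩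
  · intro w _
    by_cases hw : w = i
    · subst hw; simpa using h1
    · simp only [hw, if_false]
      by_cases h0 : w = w₀
      · simp only [h0, if_true]; exact h0 ▸ ((hbox w).1 h0).1
      · simp only [h0, if_false]; exact ((hbox w).2 h0).1
  · intro w _
    by_cases hw : w = i
    · subst hw; simpa using h2
    · simp only [hw, if_false]
      by_cases h0 : w = w₀
      · simp only [h0, if_true]; exact h0 ▸ ((hbox w).1 h0).2
      · simp only [h0, if_false]; exact ((hbox w).2 h0).2

open scoped Classical in
theorem nearBd_normLeOne (K : Type*) [Field K] [NumberField K] :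
    ∃ C : ℝ, ∀ ε : ℝ, 0 < ε → ε ≤ 1 →
      volume (nearBd (normLeOne K) ε) ≤ ENNReal.ofReal (C * Real.sqrt ε) := by
  obtain ⟨K1, hK1, hlip⟩ := parK_lip K
  obtain ⟨K2, hK2, hbal⟩ := normLeOne_balanced K
  obtain ⟨C, hC, hslab⟩ := vol_slab_le K K1 hK1
  set d := finrank ℝ (mixedSpace K) with hd
  have hdpos : 0 < d := by rw [hd, mixedEmbedding.finrank]; exact finrank_pos
  set B1 := (volume (Metric.ball (0 : mixedSpace K) 1)).toReal with hB1
  set R0 := (2 * K2 + 1) * 2 with hR0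
  refine ⟨(Fintype.card (InfinitePlace K)) * (2 * (C * K1)) + R0 ^ d * B1, fun ε hε hε1 => ?_⟩
  set s := Real.sqrt ε with hs
  have hs0 : 0 < s := Real.sqrt_pos.2 hε
  have hss : s * s = ε := Real.mul_self_sqrt hε.le
  have hs1 : s ≤ 1 := by rw [hs]; exact Real.sqrt_le_one.2 hε1
  set r := K1 * (ε / (2 * s)) with hrdef
  have hr : r = K1 * s / 2 := by rw [hrdef, ← hss]; field_simp
  have hr0 : 0 ≤ r := by rw [hr]; positivity
  have hrK : r ≤ K1 := by rw [hr]; nlinarith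
  have hsub : nearBd (normLeOne K) ε ⊆
      (⋃ i : InfinitePlace K, ((normAtAllPlaces : mixedSpace K → realSpace K) ⁻¹' (expMapBasis '' slabK K K1 i 0 r)
        ∪ (normAtAllPlaces : mixedSpace K → realSpace K) ⁻¹' (expMapBasis '' slabK K K1 i 1 r)))
      ∪ Metric.closedBall 0 (R0 * s) := by
    rintro y ⟨y', hyy, hne⟩
    by_cases hall : ∀ w, 2 * s ≤ normAtPlace w y
    · left
      have hy : ∀ w, 0 < normAtPlace w y := fun w => by linarith [hall w]
      have hy' : ∀ w, 0 < normAtPlace w y' := fun w => by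
        have h1 := abs_le.1 ((normAtPlace_sub_abs w y' y).trans hyy)
        nlinarith [hall w]
      have hl := hlip y y' (2 * s) ε (by positivity) (by nlinarith) hall hyy
      rw [normLeOne_eq_preimage, parK_mem_iff y hy, parK_mem_iff y' hy'] at hne
      have : ∃ i : InfinitePlace K, ∃ e : ℝ, (e = 0 ∨ e = 1) ∧ parK y ∈ slabK K K1 i e r := by
        by_cases hin : parK y ∈ paramSet K
        · have hnin : parK y' ∉ paramSet K := fun h => hne (by simp [hin, h])
          obtain ⟨i, e, he, h1, -⟩ := param_slab K K1 r hrK _ _ hin hnin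
            (fun w => by rw [abs_sub_comm]; exact hl w)
          exact ⟨i, e, he, h1⟩
        · have hin' : parK y' ∈ paramSet K := by by_contra h; exact hne (by simp [hin, h])
          obtain ⟨i, e, he, -, h1⟩ := param_slab K K1 r hrK _ _ hin' hin hl
          exact ⟨i, e, he, h1⟩
      obtain ⟨i, e, he, h1⟩ := this
      rw [Set.mem_iUnion]
      refine ⟨i, ?_⟩
      rcases he with rfl | rfl
      · left; rw [parK_mem_iff y hy]; exact h1
      · right; rw [parK_mem_iff y hy]; exact h1
    · right
      push Not at hall
      obtain ⟨w, hw⟩ := hall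
      rw [mem_closedBall_zero_iff]
      have hεs : ε ≤ s := by nlinarith
      by_cases hin : y ∈ normLeOne K
      · have := hbal y hin w
        nlinarith
      · have hin' : y' ∈ normLeOne K := by by_contra h; exact hne (by simp [hin, h])
        have h1 := hbal y' hin' w
        have h2 := abs_le.1 ((normAtPlace_sub_abs w y' y).trans hyy)
        have h3 : ‖y‖ ≤ ‖y'‖ + ‖y' - y‖ := by
          have := norm_sub_le y' (y' - y); simpa using this
        have h4 : K2 * normAtPlace w y' ≤ K2 * (3 * s) := by gcongr; linarith
        nlinarith
  refine (measure_mono hsub).trans ((measure_union_le _ _).trans ?_)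
  have e1 : ∀ i, volume ((normAtAllPlaces : mixedSpace K → realSpace K) ⁻¹' (expMapBasis '' slabK K K1 i 0 r)
        ∪ (normAtAllPlaces : mixedSpace K → realSpace K) ⁻¹' (expMapBasis '' slabK K K1 i 1 r)) ≤
        ENNReal.ofReal (2 * (C * K1) * s) := by
    intro i
    refine (measure_union_le _ _).trans ?_
    refine (add_le_add (hslab i 0 r le_rfl zero_le_one hr0 hrK)
      (hslab i 1 r zero_le_one le_rfl hr0 hrK)).trans ?_
    rw [← ENNReal.ofReal_add (by positivity) (by positivity)]
    apply ENNReal.ofReal_le_ofReal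
    rw [hr]
    have : 0 ≤ C * K1 * s := by positivity
    nlinarith
  have e2 : volume (Metric.closedBall (0 : mixedSpace K) (R0 * s)) ≤ ENNReal.ofReal (R0 ^ d * B1 * s) := by
    rw [Measure.addHaar_closedBall _ _ (by positivity), ← hd,
      ← ENNReal.ofReal_toReal (a := volume (Metric.ball (0 : mixedSpace K) 1)) measure_ball_lt_top.ne,
      ← ENNReal.ofReal_mul (by positivity)]
    apply ENNReal.ofReal_le_ofReal
    have : s ^ d ≤ s := pow_le_of_le_one hs0.le hs1 hdpos.ne'
    rw [mul_pow, ← hB1]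
    have h5 : 0 ≤ R0 ^ d * B1 := by positivity
    nlinarith [mul_le_mul_of_nonneg_left this h5]
  have e3 : volume (⋃ i : InfinitePlace K, ((normAtAllPlaces : mixedSpace K → realSpace K) ⁻¹' (expMapBasis '' slabK K K1 i 0 r)
        ∪ (normAtAllPlaces : mixedSpace K → realSpace K) ⁻¹' (expMapBasis '' slabK K K1 i 1 r))) ≤
      ENNReal.ofReal ((Fintype.card (InfinitePlace K)) * (2 * (C * K1)) * s) := by
    refine (measure_iUnion_fintype_le _ _).trans ?_
    refine (Finset.sum_le_sum fun i _ => e1 i).trans ?_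
    rw [Finset.sum_const, Finset.card_univ, nsmul_eq_mul, mul_assoc (Fintype.card (InfinitePlace K) : ℝ),
      ENNReal.ofReal_mul (p := (Fintype.card (InfinitePlace K) : ℝ)) (by positivity), ENNReal.ofReal_natCast]
  refine (add_le_add e3 e2).trans ?_
  rw [← ENNReal.ofReal_add (by positivity) (by positivity), add_mul]

end nearb

section idealcount
open NumberField NumberField.InfinitePlace NumberField.mixedEmbedding
  NumberField.mixedEmbedding.fundamentalCone NumberField.Units
open MeasureTheory Module nonZeroDivisors Ideal

theorem class_card_aux (K : Type*) [Field K] [NumberField K]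
    {C : ClassGroup (𝓞 K)} {J : (Ideal (𝓞 K))⁰} {s : ℝ} (hJ : ClassGroup.mk0 J = C⁻¹) :
    Nat.card {I : (Ideal (𝓞 K))⁰ // absNorm (I : Ideal (𝓞 K)) ≤ s ∧ ClassGroup.mk0 I = C}
      = Nat.card {I : (Ideal (𝓞 K))⁰ // (J : Ideal (𝓞 K)) ∣ I ∧ Submodule.IsPrincipal (I : Ideal (𝓞 K)) ∧
        absNorm (I : Ideal (𝓞 K)) ≤ s * absNorm (J : Ideal (𝓞 K))} := by
  simp_rw [← nonZeroDivisors_dvd_iff_dvd_coe]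
  refine Nat.card_congr ?_
  refine ((Equiv.dvd J).subtypeEquiv fun I ↦ ?_).trans
    (Equiv.subtypeSubtypeEquivSubtypeInter (fun I : (Ideal (𝓞 K))⁰ ↦ J ∣ I) _)
  rw [← ClassGroup.mk0_eq_one_iff (SetLike.coe_mem _)]
  simp_rw [Equiv.dvd_apply, Submonoid.coe_mul, ← Submonoid.mul_def, _root_.map_mul, hJ,
    inv_mul_eq_one, Nat.cast_mul, mul_comm s, eq_comm, and_comm, and_congr_left_iff]
  exact fun _ ↦
    (mul_le_mul_iff_of_pos_left (Nat.cast_pos.mpr (absNorm_pos_of_nonZeroDivisors J))).symm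

open Pointwise in
theorem idealSet_card (K : Type*) [Field K] [NumberField K] (J : (Ideal (𝓞 K))⁰) (t : ℝ) (ht : 0 < t) :
    Nat.card {a : idealSet K J // mixedEmbedding.norm (a : mixedSpace K) ≤ t ^ (finrank ℚ K)} =
      ((t • normLeOne K) ∩ (Submodule.span ℤ (Set.range
        (fractionalIdealLatticeBasis K (FractionalIdeal.mk0 K J))) : Set (mixedSpace K))).ncard := by
  rw [← Nat.card_coe_set_eq]
  refine Nat.card_congr ((Equiv.subtypeSubtypeEquivSubtypeInter (fun x => x ∈ idealSet K J)
    (fun x => mixedEmbedding.norm x ≤ t ^ (finrank ℚ K))).trans (Equiv.subtypeEquivProp ?_))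
  ext x
  have h1 : x ∈ t • normLeOne K ↔ x ∈ fundamentalCone K ∧ mixedEmbedding.norm x ≤ t ^ (finrank ℚ K) := by
    rw [Set.mem_smul_set_iff_inv_smul_mem₀ ht.ne', mem_normLeOne, smul_mem_iff_mem (inv_ne_zero ht.ne'),
      mixedEmbedding.norm_smul, abs_of_pos (inv_pos.2 ht), inv_pow, inv_mul_le_iff₀ (by positivity), mul_one]
  change (x ∈ idealSet K J ∧ mixedEmbedding.norm x ≤ t ^ (finrank ℚ K)) ↔
    x ∈ t • normLeOne K ∧ x ∈ Submodule.span ℤ (Set.range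
        (fractionalIdealLatticeBasis K (FractionalIdeal.mk0 K J)))
  rw [h1, span_idealLatticeBasis, idealSet, Set.mem_inter_iff]
  constructor
  · rintro ⟨⟨a, b⟩, c⟩; exact ⟨⟨a, c⟩, b⟩
  · rintro ⟨⟨a, c⟩, b⟩; exact ⟨⟨a, b⟩, c⟩

open Pointwise in
theorem class_count_asymp (K : Type*) [Field K] [NumberField K] (C : ClassGroup (𝓞 K)) :
    ∃ c C' s0 : ℝ, 1 ≤ s0 ∧ ∀ s : ℝ, s0 ≤ s →
      |(Nat.card {I : (Ideal (𝓞 K))⁰ // absNorm (I : Ideal (𝓞 K)) ≤ s ∧ ClassGroup.mk0 I = C} : ℝ)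
        - c * s| ≤ C' * s ^ (1 - 1 / (2 * (finrank ℚ K : ℝ))) := by
  classical
  obtain ⟨J, hJ⟩ := ClassGroup.mk0_surjective C⁻¹
  obtain ⟨C0, hC0⟩ := nearBd_normLeOne K
  obtain ⟨c, C', t0, ht0, H⟩ := lattice_count_asymp volume
    (fractionalIdealLatticeBasis K (FractionalIdeal.mk0 K J)) (normLeOne K)
    (isBounded_normLeOne K) C0 hC0
  rw [mixedEmbedding.finrank] at H
  set d := finrank ℚ K with hd
  have hdpos : 0 < d := finrank_pos
  have hdr : (0 : ℝ) < d := by exact_mod_cast hdpos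
  set N : ℝ := ((absNorm (J : Ideal (𝓞 K)) : ℕ) : ℝ) with hN
  have hNpos : 0 < N := Nat.cast_pos.mpr (absNorm_pos_of_nonZeroDivisors J)
  have hN1 : 1 ≤ N := by rw [hN]; exact_mod_cast (absNorm_pos_of_nonZeroDivisors J)
  set τ : ℝ := ((torsionOrder K : ℕ) : ℝ) with hτ
  have hτpos : 0 < τ := by rw [hτ]; exact_mod_cast Nat.pos_of_ne_zero (torsionOrder_ne_zero K)
  set θ := 1 - 1 / (2 * (d : ℝ)) with hθ
  refine ⟨c * N / τ, C' * N ^ θ / τ, t0 ^ d, one_le_pow₀ ht0, fun s hs => ?_⟩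
  have hs0 : 0 < s := lt_of_lt_of_le (by positivity) hs
  set t := (s * N) ^ (1 / (d : ℝ)) with ht
  have htpos : 0 < t := Real.rpow_pos_of_pos (by positivity) _
  have htd : t ^ d = s * N := by
    rw [ht, ← Real.rpow_natCast, ← Real.rpow_mul (by positivity)]
    field_simp
    simp
  have htt : t0 ≤ t := by
    refine le_of_pow_le_pow_left₀ hdpos.ne' htpos.le ?_
    rw [htd]; nlinarith
  have h1 := H t htt
  rw [← idealSet_card K J t htpos, ← hd, htd, hN, ← card_isPrincipal_dvd_norm_le,
    ← class_card_aux K hJ, ← hN] at h1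
  push_cast at h1
  rw [← hτ] at h1
  have h2 : s * N / Real.sqrt t = s ^ θ * N ^ θ := by
    rw [Real.sqrt_eq_rpow, ht, ← Real.rpow_mul (by positivity), ← Real.mul_rpow hs0.le hNpos.le, hθ,
      Real.rpow_sub (by positivity), Real.rpow_one]
    congr 2
    field_simp
  rw [h2] at h1
  set X : ℝ := (Nat.card {I : (Ideal (𝓞 K))⁰ // absNorm (I : Ideal (𝓞 K)) ≤ s ∧ ClassGroup.mk0 I = C} : ℝ)
  have h3 : X - c * N / τ * s = (X * τ - c * (s * N)) / τ := by field_simp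
  rw [h3, abs_div, abs_of_pos hτpos, div_le_iff₀ hτpos]
  calc _ ≤ _ := h1
    _ = _ := by field_simp

theorem finite_norm_le (K : Type*) [Field K] [NumberField K] (x : ℝ) :
    {I : Ideal (𝓞 K) | I ≠ ⊥ ∧ (absNorm I : ℝ) ≤ x}.Finite := by
  refine (Ideal.finite_setOfPred_absNorm_le (S := 𝓞 K) ⌊x⌋₊).subset ?_
  rintro I ⟨-, hI⟩
  exact Nat.le_floor hI

/-- nonzero ideals of norm at most `x` -/
def Bk (K : Type*) [Field K] [NumberField K] (x : ℝ) : Finset (Ideal (𝓞 K)) :=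
  (finite_norm_le K x).toFinset

theorem mem_Bk {K : Type*} [Field K] [NumberField K] {x : ℝ} {I : Ideal (𝓞 K)} :
    I ∈ Bk K x ↔ I ≠ ⊥ ∧ (absNorm I : ℝ) ≤ x := by
  simp [Bk]

theorem card_Bk_eq (K : Type*) [Field K] [NumberField K] (x : ℝ) :
    Nat.card {I : (Ideal (𝓞 K))⁰ // absNorm (I : Ideal (𝓞 K)) ≤ x} = (Bk K x).card := by
  have h : (Bk K x).card = Nat.card (Bk K x) := by simp
  rw [h]
  refine Nat.card_congr ⟨fun I => ⟨I.1.1, mem_Bk.2 ⟨nonZeroDivisors.coe_ne_zero I.1, I.2⟩⟩,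
    fun I => ⟨⟨I.1, mem_nonZeroDivisors_of_ne_zero (mem_Bk.1 I.2).1⟩, (mem_Bk.1 I.2).2⟩, ?_, ?_⟩
  · intro I; rfl
  · intro I; rfl

theorem one_le_absNorm {K : Type*} [Field K] [NumberField K] {I : Ideal (𝓞 K)} (hI : I ≠ ⊥) :
    1 ≤ absNorm I := by
  rw [Nat.one_le_iff_ne_zero, ne_eq, Ideal.absNorm_eq_zero_iff]; exact hI

set_option maxHeartbeats 800000 in
theorem ideal_count (K : Type*) [Field K] [NumberField K] :
    ∃ θ C : ℝ, 3 / 4 ≤ θ ∧ θ < 1 ∧ 0 ≤ C ∧ ∀ x : ℝ, 0 < x →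
      |((Bk K x).card : ℝ) - kappaK K * x| ≤ C * x ^ θ := by
  classical
  choose c C' s0 hs0 H using class_count_asymp K
  set d := finrank ℚ K with hd
  have hdpos : 0 < d := finrank_pos
  have hdr : (1 : ℝ) ≤ d := by exact_mod_cast hdpos
  set θ0 := 1 - 1 / (2 * (d : ℝ)) with hθ0
  set θ := 1 - 1 / (4 * (d : ℝ)) with hθ
  have hθθ : θ0 ≤ θ := by
    rw [hθ0, hθ]; gcongr; norm_num
  have hθ1 : θ < 1 := by rw [hθ]; have : 0 < 1 / (4 * (d : ℝ)) := by positivity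
                         linarith
  have hθ34 : 3 / 4 ≤ θ := by
    rw [hθ]
    have : 1 / (4 * (d : ℝ)) ≤ 1 / 4 := by
      apply one_div_le_one_div_of_le <;> linarith
    linarith
  set s1 := ∑ C, s0 C with hs1
  have hsle : ∀ C, s0 C ≤ s1 := fun C =>
    Finset.single_le_sum (f := s0) (fun C _ => by linarith [hs0 C]) (Finset.mem_univ C)
  have hs1one : 1 ≤ s1 := (hs0 1).trans (hsle 1)
  have hsum : ∀ s : ℝ, 0 ≤ s → ((Bk K s).card : ℝ) = ∑ C : ClassGroup (𝓞 K), (Nat.card {I : (Ideal (𝓞 K))⁰ //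
      absNorm (I : Ideal (𝓞 K)) ≤ s ∧ ClassGroup.mk0 I = C} : ℝ) := by
    intro s hs
    rw [← card_Bk_eq]
    have : Fintype {I : (Ideal (𝓞 K))⁰ // absNorm (I : Ideal (𝓞 K)) ≤ s} := by
      simp_rw [← Nat.le_floor_iff hs]
      refine @Fintype.ofFinite _ (finite_setOfPred_absNorm_le₀ ⌊s⌋₊)
    let e := fun C : ClassGroup (𝓞 K) ↦ Equiv.subtypeSubtypeEquivSubtypeInter
      (fun I : (Ideal (𝓞 K))⁰ ↦ absNorm I.1 ≤ s) (fun I ↦ ClassGroup.mk0 I = C)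
    simp_rw [← Nat.card_congr (e _), Nat.card_eq_fintype_card, Fintype.subtype_card]
    rw [Fintype.card, Finset.card_eq_sum_card_fiberwise (f := fun I ↦ ClassGroup.mk0 I.1)
      (t := Finset.univ) (fun _ _ ↦ Finset.mem_univ _), Nat.cast_sum]
  set c1 := ∑ C, c C with hc1
  set C1 := ∑ C, C' C with hC1
  have main : ∀ s : ℝ, s1 ≤ s → |((Bk K s).card : ℝ) - c1 * s| ≤ C1 * s ^ θ0 := by
    intro s hs
    rw [hsum s (by linarith), hc1, hC1, Finset.sum_mul, Finset.sum_mul, ← Finset.sum_sub_distrib]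
    exact (Finset.abs_sum_le_sum_abs _ _).trans (Finset.sum_le_sum fun C _ => H C s ((hsle C).trans hs))
  have hlim : Tendsto (fun s : ℝ => ((Bk K s).card : ℝ) / s) atTop (𝓝 (kappaK K)) := by
    have := NumberField.Ideal.tendsto_norm_le_div_atTop₀ K
    simp_rw [card_Bk_eq] at this
    convert this using 2
    rw [kappaK]; ring
  have hlim2 : Tendsto (fun s : ℝ => ((Bk K s).card : ℝ) / s) atTop (𝓝 c1) := by
    have h0 : Tendsto (fun s : ℝ => C1 * s ^ (-(1 / (2 * (d : ℝ))))) atTop (𝓝 (C1 * 0)) :=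
      (tendsto_rpow_neg_atTop (by positivity)).const_mul _
    rw [mul_zero] at h0
    rw [tendsto_iff_norm_sub_tendsto_zero]
    refine squeeze_zero' (Eventually.of_forall fun _ => norm_nonneg _) ?_ h0
    filter_upwards [eventually_ge_atTop s1] with s hs
    have hsp : 0 < s := by linarith
    have h1 := main s hs
    have h2 : ((Bk K s).card : ℝ) / s - c1 = (((Bk K s).card : ℝ) - c1 * s) / s := by field_simp
    rw [Real.norm_eq_abs, h2, abs_div, abs_of_pos hsp, div_le_iff₀ hsp]
    refine h1.trans (le_of_eq ?_)
    rw [hθ0, mul_assoc, ← Real.rpow_add_one hsp.ne']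
    congr 2; ring
  have hcc : c1 = kappaK K := tendsto_nhds_unique hlim2 hlim
  rw [hcc] at main
  have hκ : 0 ≤ kappaK K := by
    refine ge_of_tendsto hlim ?_
    filter_upwards [eventually_ge_atTop 0] with s hs
    positivity
  refine ⟨θ, |C1| + (Bk K s1).card + kappaK K * s1, hθ34, hθ1, by positivity, fun x hx => ?_⟩
  have hxθ : 0 < x ^ θ := Real.rpow_pos_of_pos hx _
  by_cases h1 : s1 ≤ x
  · refine (main x h1).trans ?_
    have hx1 : 1 ≤ x := by linarith
    calc C1 * x ^ θ0 ≤ |C1| * x ^ θ :=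
          mul_le_mul (le_abs_self _) (Real.rpow_le_rpow_of_exponent_le hx1 hθθ) (by positivity) (by positivity)
      _ ≤ _ := by gcongr; rw [add_assoc]; exact le_add_of_nonneg_right (by positivity)
  · push Not at h1
    have hN : ((Bk K x).card : ℝ) ≤ (Bk K s1).card * x ^ θ := by
      by_cases hx1 : 1 ≤ x
      · have e1 : ((Bk K x).card : ℝ) ≤ (Bk K s1).card := by
          exact_mod_cast Finset.card_le_card fun I hI => by
            rw [mem_Bk] at hI ⊢; exact ⟨hI.1, hI.2.trans h1.le⟩
        have e2 : 1 ≤ x ^ θ := Real.one_le_rpow hx1 (by linarith)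
        nlinarith [(Nat.cast_nonneg (Bk K s1).card : (0:ℝ) ≤ _)]
      · have : Bk K x = ∅ := by
          rw [Finset.eq_empty_iff_forall_notMem]
          intro I hI
          rw [mem_Bk] at hI
          have : (1 : ℝ) ≤ absNorm I := by exact_mod_cast one_le_absNorm hI.1
          exact hx1 (this.trans hI.2)
        rw [this]; simp; positivity
    have hx2 : x ≤ s1 * x ^ θ := by
      by_cases hx1 : 1 ≤ x
      · have e2 : 1 ≤ x ^ θ := Real.one_le_rpow hx1 (by linarith)
        nlinarith
      · have := Real.rpow_le_rpow_of_exponent_ge hx (le_of_not_ge hx1) hθ1.le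
        rw [Real.rpow_one] at this
        nlinarith
    have h3 := mul_le_mul_of_nonneg_left hx2 hκ
    have h4 : 0 ≤ |C1| * x ^ θ := by positivity
    have h5 : 0 ≤ kappaK K * x := by positivity
    have h6 : (0:ℝ) ≤ (Bk K x).card := by positivity
    have h7 : (0:ℝ) ≤ (Bk K s1).card * x ^ θ := by positivity
    generalize ((Bk K x).card : ℝ) = u at *
    generalize ((Bk K s1).card : ℝ) = v at *
    rw [add_mul, add_mul, mul_assoc (kappaK K)]
    rw [abs_le]
    constructor <;> linarith

end idealcount

section dyadic

theorem dyadic_sum {ι : Type*} (n : ι → ℝ) (hn : ∀ i, 1 ≤ n i) (S : ℝ → Finset ι)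
    (hS : ∀ x i, i ∈ S x ↔ n i ≤ x) (a : ι → ℝ) (ha : ∀ i, 0 ≤ a i) (C : ℝ)
    (hC : ∀ t : ℝ, 0 < t → ∑ i ∈ S t, a i ≤ C * t) (θ : ℝ) (hθ0 : 0 ≤ θ) (hθ1 : θ < 1) :
    ∃ C' : ℝ, 0 ≤ C' ∧ ∀ x : ℝ, 0 < x → ∑ i ∈ S x, a i * (x / n i) ^ θ ≤ C' * x := by
  classical
  have hC0 : 0 ≤ C := by
    have := hC 1 one_pos
    have h2 : 0 ≤ ∑ i ∈ S 1, a i := Finset.sum_nonneg fun i _ => ha i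
    linarith
  set r := (2 : ℝ) ^ θ with hr
  have hr0 : 0 < r := by positivity
  have hr2 : r < 2 := by
    have := Real.rpow_lt_rpow_of_exponent_lt (by norm_num : (1:ℝ) < 2) hθ1
    simpa [hr] using this
  have h2r : 0 < 2 - r := by linarith
  set C' := 2 * r * C / (2 - r) with hC'
  have hC'0 : 0 ≤ C' := by positivity
  have hrel : r * (C' / 2) + r * C = C' := by rw [hC']; field_simp; ring
  refine ⟨C', hC'0, ?_⟩
  have key : ∀ k : ℕ, ∀ x : ℝ, 0 < x → x < 2 ^ k → ∑ i ∈ S x, a i * (x / n i) ^ θ ≤ C' * x := by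
    intro k
    induction k with
    | zero =>
      intro x hx hx1
      have : S x = ∅ := by
        rw [Finset.eq_empty_iff_forall_notMem]
        intro i hi
        rw [hS] at hi
        have := hn i
        simp at hx1
        linarith
      rw [this, Finset.sum_empty]; positivity
    | succ k ih =>
      intro x hx hxk
      have hx2 := ih (x / 2) (by positivity) (by rw [pow_succ] at hxk; linarith)
      have hsub : S (x / 2) ⊆ S x := fun i hi => by
        rw [hS] at hi ⊢; linarith
      rw [← Finset.sum_sdiff hsub]
      have e1 : ∑ i ∈ S x \ S (x / 2), a i * (x / n i) ^ θ ≤ r * C * x := by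
        calc _ ≤ ∑ i ∈ S x \ S (x / 2), a i * r := by
              refine Finset.sum_le_sum fun i hi => ?_
              rw [Finset.mem_sdiff, hS, hS, not_le] at hi
              have hni := hn i
              refine mul_le_mul_of_nonneg_left ?_ (ha i)
              refine Real.rpow_le_rpow (by positivity) ?_ hθ0
              rw [div_le_iff₀ (by linarith)]; linarith
          _ ≤ ∑ i ∈ S x, a i * r :=
              Finset.sum_le_sum_of_subset_of_nonneg Finset.sdiff_subset
                fun i _ _ => mul_nonneg (ha i) hr0.le
          _ = r * ∑ i ∈ S x, a i := by rw [← Finset.sum_mul, mul_comm]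
          _ ≤ r * (C * x) := by gcongr; exact hC x hx
          _ = _ := by ring
      have e2 : ∑ i ∈ S (x / 2), a i * (x / n i) ^ θ = r * ∑ i ∈ S (x / 2), a i * (x / 2 / n i) ^ θ := by
        rw [Finset.mul_sum]
        refine Finset.sum_congr rfl fun i _ => ?_
        have hni := hn i
        rw [show x / n i = 2 * (x / 2 / n i) by field_simp, Real.mul_rpow (by norm_num) (by positivity)]
        ring
      rw [e2]
      have e3 := mul_le_mul_of_nonneg_left hx2 hr0.le
      calc _ ≤ r * C * x + r * (C' * (x / 2)) := add_le_add e1 e3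
        _ = (r * (C' / 2) + r * C) * x := by ring
        _ = C' * x := by rw [hrel]
  intro x hx
  obtain ⟨k, hk⟩ := pow_unbounded_of_one_lt x (by norm_num : (1:ℝ) < 2)
  exact key k x hx hk

theorem dyadic_summable {ι : Type*} (n : ι → ℝ) (hn : ∀ i, 1 ≤ n i) (S : ℝ → Finset ι)
    (hS : ∀ x i, i ∈ S x ↔ n i ≤ x) (a : ι → ℝ) (ha : ∀ i, 0 ≤ a i) (C : ℝ)
    (hC : ∀ t : ℝ, 0 < t → ∑ i ∈ S t, a i ≤ C * t) (s : ℝ) (hs : 1 < s) :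
    Summable fun i => a i * n i ^ (-s) := by
  classical
  have hC0 : 0 ≤ C := by
    have := hC 1 one_pos
    have h2 : 0 ≤ ∑ i ∈ S 1, a i := Finset.sum_nonneg fun i _ => ha i
    linarith
  set r := (2 : ℝ) ^ (1 - s) with hr
  have hr0 : 0 < r := by positivity
  have hr1 : r < 1 := Real.rpow_lt_one_of_one_lt_of_neg (by norm_num) (by linarith)
  have hnn : ∀ i, 0 ≤ a i * n i ^ (-s) := fun i => by have := hn i; have := ha i; positivity
  have key : ∀ k : ℕ, ∑ i ∈ S (2 ^ k), a i * n i ^ (-s) ≤ C + 2 * C * ∑ j ∈ Finset.range k, r ^ j := by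
    intro k
    induction k with
    | zero =>
      simp only [pow_zero, Finset.range_zero, Finset.sum_empty, mul_zero, add_zero]
      calc _ ≤ ∑ i ∈ S 1, a i := by
            refine Finset.sum_le_sum fun i _ => mul_le_of_le_one_right (ha i) ?_
            exact Real.rpow_le_one_of_one_le_of_nonpos (hn i) (by linarith)
        _ ≤ C * 1 := hC 1 one_pos
        _ = C := mul_one C
    | succ k ih =>
      have hsub : S (2 ^ k) ⊆ S (2 ^ (k + 1)) := fun i hi => by
        rw [hS] at hi ⊢
        exact hi.trans (pow_le_pow_right₀ (by norm_num) (by omega))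
      rw [← Finset.sum_sdiff hsub, Finset.sum_range_succ]
      have e1 : ∑ i ∈ S (2 ^ (k + 1)) \ S (2 ^ k), a i * n i ^ (-s) ≤ 2 * C * r ^ k := by
        calc _ ≤ ∑ i ∈ S (2 ^ (k + 1)) \ S (2 ^ k), a i * ((2 : ℝ) ^ k) ^ (-s) := by
              refine Finset.sum_le_sum fun i hi => ?_
              rw [Finset.mem_sdiff, hS, hS, not_le] at hi
              refine mul_le_mul_of_nonneg_left ?_ (ha i)
              exact Real.rpow_le_rpow_of_nonpos (by positivity) hi.2.le (by linarith)
          _ ≤ ∑ i ∈ S (2 ^ (k + 1)), a i * ((2 : ℝ) ^ k) ^ (-s) :=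
              Finset.sum_le_sum_of_subset_of_nonneg Finset.sdiff_subset
                fun i _ _ => mul_nonneg (ha i) (by positivity)
          _ = (∑ i ∈ S (2 ^ (k + 1)), a i) * ((2 : ℝ) ^ k) ^ (-s) := by rw [← Finset.sum_mul]
          _ ≤ (C * 2 ^ (k + 1)) * ((2 : ℝ) ^ k) ^ (-s) := by
              gcongr; exact hC _ (by positivity)
          _ = 2 * C * r ^ k := by
              have : r ^ k = (2 : ℝ) ^ k * ((2 : ℝ) ^ k) ^ (-s) := by
                rw [hr, ← Real.rpow_natCast, ← Real.rpow_mul (by norm_num), ← Real.rpow_natCast,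
                  ← Real.rpow_mul (by norm_num), ← Real.rpow_add (by norm_num)]
                congr 1; ring
              rw [this]; ring
      linarith
  refine summable_of_sum_le (c := C + 2 * C * (1 - r)⁻¹) hnn fun T => ?_
  obtain ⟨k, hk⟩ : ∃ k : ℕ, T ⊆ S (2 ^ k) := by
    obtain ⟨k, hk⟩ := pow_unbounded_of_one_lt (∑ i ∈ T, n i) (by norm_num : (1:ℝ) < 2)
    refine ⟨k, fun i hi => ?_⟩
    rw [hS]
    exact (Finset.single_le_sum (f := n) (fun j _ => by linarith [hn j]) hi).trans hk.le
  calc _ ≤ ∑ i ∈ S (2 ^ k), a i * n i ^ (-s) :=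
        Finset.sum_le_sum_of_subset_of_nonneg hk fun i _ _ => hnn i
    _ ≤ _ := key k
    _ ≤ _ := by
        gcongr
        exact (summable_geometric_of_lt_one hr0.le hr1).sum_le_tsum _ (fun _ _ => by positivity) |>.trans
          (tsum_geometric_of_lt_one hr0.le hr1).le

/-- recursion lemma for the counting function of multiples -/
theorem rec_bound (F G : ℝ → ℝ) (n : ℝ) (hn : 2 ≤ n) (h : ℕ) (hh : 2 ≤ h) (c C θ : ℝ)
    (hc0 : 0 ≤ c) (hcC : c ≤ C) (hθ : 3 / 4 ≤ θ) (hθ1 : θ < 1)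
    (hG0 : ∀ x, x < 1 → G x = 0)
    (hF : ∀ y, 0 < y → |F y - c * y| ≤ C * y ^ θ)
    (hrec : ∀ x, 0 < x → G x = F (x / n) - F (x / n ^ h) + G (x / n ^ h)) :
    ∀ x, 0 < x → |G x - c * ((n ^ (h - 1) - 1) / (n ^ h - 1)) * x| ≤ 4 * C * (x / n) ^ θ := by
  obtain ⟨g, rfl⟩ : ∃ g, h = g + 1 := ⟨h - 1, by omega⟩
  have hg : 1 ≤ g := by omega
  simp only [Nat.add_sub_cancel]
  have hn0 : 0 < n := by linarith
  have hng : 1 ≤ n ^ g := one_le_pow₀ (by linarith)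
  have hnh : 2 ≤ n ^ (g + 1) := by rw [pow_succ]; nlinarith
  set α := (n ^ g - 1) / (n ^ (g + 1) - 1) with hα
  have hα0 : 0 ≤ α := div_nonneg (by linarith) (by linarith)
  have hα1 : α ≤ 1 / n := by
    rw [hα, div_le_div_iff₀ (by linarith) hn0, pow_succ]; nlinarith
  have hαrel : α - α / n ^ (g + 1) = 1 / n - 1 / n ^ (g + 1) := by
    have h0 : n ^ (g + 1) - 1 ≠ 0 := by linarith
    rw [hα]; rw [pow_succ] at h0 ⊢; field_simp
  have hC0 : 0 ≤ C := hc0.trans hcC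
  have hsmall : (n ^ (g + 1)) ^ (-θ) ≤ 1 / 2 := by
    have h4 : (4 : ℝ) ≤ n ^ (g + 1) := by
      calc (4 : ℝ) = 2 ^ 2 := by norm_num
        _ ≤ n ^ 2 := by gcongr
        _ ≤ n ^ (g + 1) := pow_le_pow_right₀ (by linarith) (by omega)
    calc (n ^ (g + 1)) ^ (-θ) ≤ (4 : ℝ) ^ (-θ) := Real.rpow_le_rpow_of_nonpos (by norm_num) h4 (by linarith)
      _ ≤ (4 : ℝ) ^ (-(1 / 2 : ℝ)) := Real.rpow_le_rpow_of_exponent_le (by norm_num) (by linarith)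
      _ = 1 / 2 := by
          rw [Real.rpow_neg (by norm_num), ← Real.sqrt_eq_rpow, show (4 : ℝ) = 2 ^ 2 by norm_num,
            Real.sqrt_sq (by norm_num)]; norm_num
  have key : ∀ k : ℕ, ∀ x : ℝ, 0 < x → x < 2 ^ k → |G x - c * α * x| ≤ 4 * C * (x / n) ^ θ := by
    intro k
    induction k with
    | zero =>
      intro x hx hx1
      simp only [pow_zero] at hx1
      rw [hG0 x hx1, zero_sub, abs_neg, abs_of_nonneg (by positivity)]
      have h1 : x / n ≤ (x / n) ^ θ := by
        have := Real.rpow_le_rpow_of_exponent_ge (x := x / n) (by positivity)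
          (by rw [div_le_one hn0]; linarith) hθ1.le
        simpa using this
      calc c * α * x ≤ C * (1 / n) * x := by gcongr
        _ = C * (x / n) := by ring
        _ ≤ C * (x / n) ^ θ := by gcongr
        _ ≤ 4 * C * (x / n) ^ θ := by
          have : 0 ≤ C * (x / n) ^ θ := by positivity
          linarith
    | succ k ih =>
      intro x hx hxk
      set y := x / n ^ (g + 1) with hy
      have hy0 : 0 < y := by positivity
      have hyk : y < 2 ^ k := by
        rw [hy, div_lt_iff₀ (by linarith)]
        have : (0:ℝ) < 2 ^ k := by positivity
        rw [pow_succ] at hxk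
        nlinarith
      have e1 := hF (x / n) (by positivity)
      have e2 := hF y hy0
      have e3 := ih y hy0 hyk
      have hyθ : y ^ θ ≤ (x / n) ^ θ := by
        refine Real.rpow_le_rpow hy0.le ?_ (by linarith)
        rw [hy, pow_succ]
        gcongr
        nlinarith
      have hynθ : (y / n) ^ θ ≤ 1 / 2 * (x / n) ^ θ := by
        have : y / n = (x / n) * (n ^ (g + 1))⁻¹ := by rw [hy]; field_simp
        rw [this, Real.mul_rpow (by positivity) (by positivity), Real.inv_rpow (by positivity),
          ← Real.rpow_neg (by positivity), mul_comm]
        gcongr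
      have hid : G x - c * α * x = (F (x / n) - c * (x / n)) - (F y - c * y) + (G y - c * α * y) := by
        rw [hrec x hx, ← hy]
        have : c * α * x - c * α * y = c * (x / n) - c * y := by
          rw [hy]
          calc c * α * x - c * α * (x / n ^ (g + 1)) = c * x * (α - α / n ^ (g + 1)) := by ring
            _ = _ := by rw [hαrel]; ring
        linarith
      rw [hid]
      have hA : |G y - c * α * y| ≤ 2 * C * (x / n) ^ θ := by
        refine e3.trans ?_
        have := mul_le_mul_of_nonneg_left hynθ (by positivity : 0 ≤ 4 * C)
        linarith
      have hB : |F y - c * y| ≤ C * (x / n) ^ θ := e2.trans (by gcongr)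
      calc _ ≤ |F (x / n) - c * (x / n)| + |F y - c * y| + |G y - c * α * y| :=
            (abs_add_le _ _).trans (by gcongr; exact abs_sub _ _)
        _ ≤ _ := by linarith
  intro x hx
  obtain ⟨k, hk⟩ := pow_unbounded_of_one_lt x (by norm_num : (1:ℝ) < 2)
  exact key k x hx hk

theorem rec_bound_V (F V : ℝ → ℝ) (n : ℝ) (hn : 2 ≤ n) (C : ℝ) (hC : 0 ≤ C)
    (hV0 : ∀ x, x < 1 → V x = 0) (hF : ∀ y, 0 < y → F y ≤ C * y)
    (hrec : ∀ x, 0 < x → V x = F (x / n) + V (x / n)) :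
    ∀ x, 0 < x → V x ≤ 2 * C * (x / n) := by
  have hn0 : 0 < n := by linarith
  have key : ∀ k : ℕ, ∀ x : ℝ, 0 < x → x < 2 ^ k → V x ≤ 2 * C * (x / n) := by
    intro k
    induction k with
    | zero =>
      intro x hx hx1
      simp only [pow_zero] at hx1
      rw [hV0 x hx1]; positivity
    | succ k ih =>
      intro x hx hxk
      have hyk : x / n < 2 ^ k := by
        rw [div_lt_iff₀ (by linarith)]
        have : (0:ℝ) < 2 ^ k := by positivity
        rw [pow_succ] at hxk
        nlinarith
      have e1 := hF (x / n) (by positivity)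
      have e2 := ih (x / n) (by positivity) hyk
      rw [hrec x hx]
      have : x / n / n ≤ x / n / 2 := by gcongr
      have := mul_le_mul_of_nonneg_left this (by positivity : 0 ≤ 2 * C)
      linarith
  intro x hx
  obtain ⟨k, hk⟩ := pow_unbounded_of_one_lt x (by norm_num : (1:ℝ) < 2)
  exact key k x hx hk

end dyadic

section ideals
open Ideal Module

/-- nonzero primes -/
abbrev PK (K : Type*) [Field K] [NumberField K] := {p : Ideal (𝓞 K) // p.IsPrime ∧ p ≠ ⊥}
/-- nonzero ideals -/
abbrev IK (K : Type*) [Field K] [NumberField K] := {I : Ideal (𝓞 K) // I ≠ ⊥}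

variable {K : Type*} [Field K] [NumberField K]

/-- norm as a real -/
def nR (I : Ideal (𝓞 K)) : ℝ := (absNorm I : ℝ)

theorem nR_mul (I J : Ideal (𝓞 K)) : nR (I * J) = nR I * nR J := by simp [nR]
theorem nR_pow (I : Ideal (𝓞 K)) (k : ℕ) : nR (I ^ k) = nR I ^ k := by simp [nR]
theorem one_le_nR {I : Ideal (𝓞 K)} (hI : I ≠ ⊥) : 1 ≤ nR I := by
  unfold nR; exact_mod_cast one_le_absNorm hI
theorem nR_pos {I : Ideal (𝓞 K)} (hI : I ≠ ⊥) : 0 < nR I := lt_of_lt_of_le one_pos (one_le_nR hI)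

theorem two_le_nR (p : PK K) : 2 ≤ nR p.1 := by
  have h1 := one_le_absNorm p.2.2
  have h2 : absNorm p.1 ≠ 1 := by
    rw [ne_eq, Ideal.absNorm_eq_one_iff]; exact p.2.1.ne_top
  unfold nR
  exact_mod_cast (by omega : 2 ≤ absNorm p.1)

theorem mem_Bk' {x : ℝ} {I : Ideal (𝓞 K)} : I ∈ Bk K x ↔ I ≠ ⊥ ∧ nR I ≤ x := mem_Bk

theorem Bk_empty {x : ℝ} (hx : x < 1) : Bk K x = ∅ := by
  rw [Finset.eq_empty_iff_forall_notMem]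
  intro I hI
  rw [mem_Bk'] at hI
  linarith [one_le_nR hI.1]

open scoped Classical in
/-- primes up to `x` -/
def Sp (K : Type*) [Field K] [NumberField K] (x : ℝ) : Finset (PK K) :=
  (Bk K x).subtype (fun p => p.IsPrime ∧ p ≠ ⊥)

open scoped Classical in
/-- ideals up to `x` -/
def Si (K : Type*) [Field K] [NumberField K] (x : ℝ) : Finset (IK K) :=
  (Bk K x).subtype (fun p => p ≠ ⊥)

theorem mem_Sp (x : ℝ) (p : PK K) : p ∈ Sp K x ↔ nR p.1 ≤ x := by
  simp only [Sp, Finset.mem_subtype, mem_Bk']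
  exact ⟨fun h => h.2, fun h => ⟨p.2.2, h⟩⟩

theorem mem_Si (x : ℝ) (p : IK K) : p ∈ Si K x ↔ nR p.1 ≤ x := by
  simp only [Si, Finset.mem_subtype, mem_Bk']
  exact ⟨fun h => h.2, fun h => ⟨p.2, h⟩⟩

theorem sum_Si (x : ℝ) (f : Ideal (𝓞 K) → ℝ) : ∑ i ∈ Si K x, f i.1 = ∑ I ∈ Bk K x, f I := by
  classical
  unfold Si
  exact Finset.sum_subtype_of_mem f (fun I hI => (mem_Bk'.1 hI).1)

open scoped Classical in
theorem sum_dvd (x : ℝ) {a : Ideal (𝓞 K)} (ha : a ≠ ⊥) (f : Ideal (𝓞 K) → ℝ) :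
    ∑ I ∈ Bk K x, (if a ∣ I then f I else 0) = ∑ J ∈ Bk K (x / nR a), f (a * J) := by
  rw [← Finset.sum_filter]
  symm
  refine Finset.sum_bij (fun J _ => a * J) ?_ ?_ ?_ ?_
  · intro J hJ
    rw [mem_Bk', le_div_iff₀ (nR_pos ha), mul_comm] at hJ
    rw [Finset.mem_filter, mem_Bk', nR_mul]
    exact ⟨⟨mul_ne_zero ha hJ.1, hJ.2⟩, dvd_mul_right _ _⟩
  · intro J _ J' _ h
    exact mul_left_cancel₀ ha h
  · intro I hI
    rw [Finset.mem_filter, mem_Bk'] at hI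
    obtain ⟨⟨hI0, hIx⟩, J, rfl⟩ := hI
    rw [nR_mul] at hIx
    refine ⟨J, ?_, rfl⟩
    rw [mem_Bk', le_div_iff₀ (nR_pos ha), mul_comm]
    exact ⟨right_ne_zero_of_mul hI0, hIx⟩
  · intro J _; rfl

/-- valuation -/
def vK (p I : Ideal (𝓞 K)) : ℕ := multiplicity p I

theorem prime_of (p : PK K) : Prime p.1 := Ideal.prime_of_isPrime p.2.2 p.2.1

theorem finMul (p : PK K) {I : Ideal (𝓞 K)} (hI : I ≠ ⊥) : FiniteMultiplicity p.1 I :=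
  FiniteMultiplicity.of_prime_left (prime_of p) hI

theorem pow_dvd_iff_vK (p : PK K) {I : Ideal (𝓞 K)} (hI : I ≠ ⊥) (k : ℕ) :
    p.1 ^ k ∣ I ↔ k ≤ vK p.1 I := (finMul p hI).pow_dvd_iff_le_multiplicity

theorem dvd_iff_vK (p : PK K) {I : Ideal (𝓞 K)} (hI : I ≠ ⊥) : p.1 ∣ I ↔ 1 ≤ vK p.1 I := by
  rw [← pow_dvd_iff_vK p hI, pow_one]

theorem vK_mul (p : PK K) {I J : Ideal (𝓞 K)} (hI : I ≠ ⊥) (hJ : J ≠ ⊥) :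
    vK p.1 (I * J) = vK p.1 I + vK p.1 J :=
  multiplicity_mul (prime_of p) (finMul p (mul_ne_zero hI hJ))

theorem vK_self_pow (p : PK K) (k : ℕ) : vK p.1 (p.1 ^ k) = k := by
  have h := pow_dvd_iff_vK p (pow_ne_zero k p.2.2)
  apply le_antisymm
  · have h1 := (h (vK p.1 (p.1 ^ k))).2 le_rfl
    rwa [pow_dvd_pow_iff p.2.2 (prime_of p).not_unit] at h1
  · exact (h k).1 dvd_rfl

theorem not_dvd_of_ne {p q : PK K} (h : q ≠ p) : ¬ q.1 ∣ p.1 := by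
  intro hd
  have := (prime_of q).associated_of_dvd (prime_of p) hd
  rw [associated_iff_eq] at this
  exact h (Subtype.ext this)

theorem vK_ne_pow {p q : PK K} (h : q ≠ p) (k : ℕ) : vK q.1 (p.1 ^ k) = 0 := by
  by_contra h0
  have h1 : q.1 ∣ p.1 ^ k := (dvd_iff_vK q (pow_ne_zero k p.2.2)).2 (by omega)
  exact not_dvd_of_ne h ((prime_of q).dvd_of_dvd_pow h1)

theorem HFree_iff (h : ℕ) {I : Ideal (𝓞 K)} (hI : I ≠ ⊥) :
    HFreeI h I ↔ ∀ p : PK K, vK p.1 I < h := by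
  unfold HFreeI
  constructor
  · intro H p
    have := H p.1 p.2.1 p.2.2
    rw [pow_dvd_iff_vK p hI] at this; omega
  · intro H p hp hp0 hd
    have := H ⟨p, hp, hp0⟩
    rw [pow_dvd_iff_vK ⟨p, hp, hp0⟩ hI] at hd; omega

theorem HFree_pow_mul (h k : ℕ) (p : PK K) {J : Ideal (𝓞 K)} (hJ : J ≠ ⊥) (hk : k ≤ h) :
    HFreeI h (p.1 ^ k * J) ↔ HFreeI h J ∧ ¬ p.1 ^ (h - k) ∣ J := by
  rw [HFree_iff h (mul_ne_zero (pow_ne_zero k p.2.2) hJ), HFree_iff h hJ, pow_dvd_iff_vK p hJ]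
  constructor
  · intro H
    have hp := H p
    rw [vK_mul p (pow_ne_zero k p.2.2) hJ, vK_self_pow] at hp
    refine ⟨fun q => ?_, by omega⟩
    have hq := H q
    rw [vK_mul q (pow_ne_zero k p.2.2) hJ] at hq
    omega
  · rintro ⟨H, hp⟩ q
    rw [vK_mul q (pow_ne_zero k p.2.2) hJ]
    by_cases hqp : q = p
    · subst hqp; rw [vK_self_pow]; omega
    · rw [vK_ne_pow hqp]; have := H q; omega

open scoped Classical in
/-- counting h-free ideals with property R -/
def Hcnt (h : ℕ) (R : Ideal (𝓞 K) → Prop) (x : ℝ) : ℝ :=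
  ∑ I ∈ Bk K x, if HFreeI h I ∧ R I then (1 : ℝ) else 0

theorem Hcnt_zero (h : ℕ) (R : Ideal (𝓞 K) → Prop) {x : ℝ} (hx : x < 1) : Hcnt h R x = 0 := by
  simp [Hcnt, Bk_empty hx]

theorem Hcnt_rec (h : ℕ) (hh : 2 ≤ h) (p : PK K) (R : Ideal (𝓞 K) → Prop)
    (hR : ∀ J, J ≠ ⊥ → (R (p.1 * J) ↔ R J)) (x : ℝ) :
    Hcnt h (fun I => p.1 ∣ I ∧ R I) x =
      Hcnt h R (x / nR p.1) - Hcnt h R (x / nR p.1 ^ h)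
        + Hcnt h (fun I => p.1 ∣ I ∧ R I) (x / nR p.1 ^ h) := by
  classical
  have hRk : ∀ k : ℕ, ∀ J, J ≠ ⊥ → (R (p.1 ^ k * J) ↔ R J) := by
    intro k
    induction k with
    | zero => intro J _; simp
    | succ k ih =>
      intro J hJ
      rw [pow_succ', mul_assoc, hR _ (mul_ne_zero (pow_ne_zero k p.2.2) hJ), ih J hJ]
  obtain ⟨g, rfl⟩ : ∃ g, h = g + 1 := ⟨h - 1, by omega⟩
  have e1 : Hcnt (g + 1) (fun I => p.1 ∣ I ∧ R I) x =
      ∑ J ∈ Bk K (x / nR p.1), (if HFreeI (g + 1) J ∧ R J ∧ ¬ p.1 ^ g ∣ J then (1 : ℝ) else 0) := by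
    have : Hcnt (g + 1) (fun I => p.1 ∣ I ∧ R I) x =
      ∑ I ∈ Bk K x, (if p.1 ∣ I then (if HFreeI (g + 1) I ∧ R I then (1 : ℝ) else 0) else 0) := by
      refine Finset.sum_congr rfl fun I _ => ?_
      by_cases h1 : p.1 ∣ I <;> simp [h1]
    rw [this, sum_dvd x p.2.2]
    refine Finset.sum_congr rfl fun J hJ => ?_
    have hJ0 := (mem_Bk'.1 hJ).1
    have h2 := HFree_pow_mul (g + 1) 1 p hJ0 (by omega)
    rw [pow_one, Nat.add_sub_cancel] at h2
    rw [h2, hR J hJ0]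
    congr 1
    exact propext ⟨fun h => ⟨h.1.1, h.2, h.1.2⟩, fun h => ⟨⟨h.1, h.2.2⟩, h.2.1⟩⟩
  have e2 : Hcnt (g + 1) R (x / nR p.1) =
      ∑ J ∈ Bk K (x / nR p.1), (if HFreeI (g + 1) J ∧ R J ∧ ¬ p.1 ^ g ∣ J then (1 : ℝ) else 0) +
      ∑ J ∈ Bk K (x / nR p.1), (if p.1 ^ g ∣ J then (if HFreeI (g + 1) J ∧ R J then (1 : ℝ) else 0) else 0) := by
    rw [← Finset.sum_add_distrib]
    refine Finset.sum_congr rfl fun J _ => ?_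
    by_cases h1 : p.1 ^ g ∣ J <;> simp [h1]
  have e3 : ∑ J ∈ Bk K (x / nR p.1), (if p.1 ^ g ∣ J then (if HFreeI (g + 1) J ∧ R J then (1 : ℝ) else 0) else 0)
      = Hcnt (g + 1) R (x / nR p.1 ^ (g + 1)) - Hcnt (g + 1) (fun I => p.1 ∣ I ∧ R I) (x / nR p.1 ^ (g + 1)) := by
    rw [sum_dvd _ (pow_ne_zero g p.2.2), nR_pow, div_div, ← pow_succ', Hcnt, Hcnt, ← Finset.sum_sub_distrib]
    refine Finset.sum_congr rfl fun J hJ => ?_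
    have hJ0 := (mem_Bk'.1 hJ).1
    have h2 := HFree_pow_mul (g + 1) g p hJ0 (by omega)
    rw [Nat.add_sub_cancel_left, pow_one] at h2
    rw [h2, hRk g J hJ0]
    by_cases h1 : p.1 ∣ J <;> simp [h1]
  linarith

theorem log_nR_eq {x : ℝ} {I : Ideal (𝓞 K)} (hI : I ∈ Bk K x) :
    Real.log (nR I) = ∑ p ∈ Sp K x, (vK p.1 I : ℝ) * Real.log (nR p.1) := by
  classical
  rw [mem_Bk'] at hI
  have hI0 := hI.1
  have h1 : nR I = ∏ p ∈ (UniqueFactorizationMonoid.normalizedFactors I).toFinset,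
      nR p ^ ((UniqueFactorizationMonoid.normalizedFactors I).count p) := by
    conv_lhs => rw [← Ideal.prod_normalizedFactors_eq_self hI0]
    rw [Finset.prod_multiset_count, nR, map_prod]
    push_cast
    refine Finset.prod_congr rfl fun p _ => by rw [map_pow]; simp [nR]
  have hpr : ∀ p ∈ (UniqueFactorizationMonoid.normalizedFactors I).toFinset, p.IsPrime ∧ p ≠ ⊥ := by
    intro p hp
    rw [Multiset.mem_toFinset] at hp
    have := UniqueFactorizationMonoid.prime_of_normalized_factor p hp
    exact ⟨Ideal.isPrime_of_prime this, this.ne_zero⟩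
  rw [h1, Real.log_prod (fun p hp => by have := nR_pos (hpr p hp).2; positivity)]
  have h2 : ∀ p ∈ (UniqueFactorizationMonoid.normalizedFactors I).toFinset,
      Real.log (nR p ^ ((UniqueFactorizationMonoid.normalizedFactors I).count p)) =
        (vK p I : ℝ) * Real.log (nR p) := by
    intro p hp
    rw [Real.log_pow, vK, UniqueFactorizationMonoid.multiplicity_eq_count_normalizedFactors _ hI0, normalize_eq]
    rw [Multiset.mem_toFinset] at hp
    exact (UniqueFactorizationMonoid.irreducible_of_normalized_factor p hp)
  rw [Finset.sum_congr rfl h2, ← Finset.sum_subtype_of_mem (p := fun p => p.IsPrime ∧ p ≠ ⊥)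
    (fun p => (vK p I : ℝ) * Real.log (nR p)) hpr]
  refine Finset.sum_subset ?_ ?_
  · intro p hp
    rw [Finset.mem_subtype, Multiset.mem_toFinset] at hp
    rw [mem_Sp]
    have hd := UniqueFactorizationMonoid.dvd_of_mem_normalizedFactors hp
    have : absNorm p.1 ∣ absNorm I := map_dvd _ hd
    have h3 := Nat.le_of_dvd (one_le_absNorm hI0) this
    refine le_trans ?_ hI.2
    unfold nR; exact_mod_cast h3
  · intro p _ hp
    rw [Finset.mem_subtype, Multiset.mem_toFinset] at hp
    have : vK p.1 I = 0 := by
      rw [vK, UniqueFactorizationMonoid.multiplicity_eq_count_normalizedFactors (prime_of p).irreducible hI0,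
        normalize_eq, Multiset.count_eq_zero]
      exact hp
    rw [this]; simp

theorem vsum_rec (p : PK K) (x : ℝ) :
    ∑ I ∈ Bk K x, (vK p.1 I : ℝ) = ((Bk K (x / nR p.1)).card : ℝ) + ∑ I ∈ Bk K (x / nR p.1), (vK p.1 I : ℝ) := by
  classical
  have e1 : ∑ I ∈ Bk K x, (vK p.1 I : ℝ) = ∑ I ∈ Bk K x, (if p.1 ∣ I then (vK p.1 I : ℝ) else 0) := by
    refine Finset.sum_congr rfl fun I hI => ?_
    have hI0 := (mem_Bk'.1 hI).1
    split_ifs with h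
    · rfl
    · rw [dvd_iff_vK p hI0] at h
      have : vK p.1 I = 0 := by omega
      simp [this]
  rw [e1, sum_dvd x p.2.2, Finset.card_eq_sum_ones, Nat.cast_sum, ← Finset.sum_add_distrib]
  refine Finset.sum_congr rfl fun J hJ => ?_
  have hJ0 := (mem_Bk'.1 hJ).1
  rw [vK_mul p p.2.2 hJ0]
  have := vK_self_pow p 1
  rw [pow_one] at this
  rw [this]; push_cast; ring

theorem exists_nat_prime_mem (p : PK K) : ∃ q : ℕ, q.Prime ∧ q ∣ absNorm p.1 ∧ (q : 𝓞 K) ∈ p.1 := by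
  have h1 : ((absNorm p.1 : ℕ) : 𝓞 K) ∈ p.1 := Ideal.absNorm_mem p.1
  have hne : absNorm p.1 ≠ 0 := by have := one_le_absNorm p.2.2; omega
  have := p.2.1
  rw [← Nat.prod_primeFactorsList hne, Nat.cast_list_prod] at h1
  rw [← Multiset.prod_coe, this.multiset_prod_mem_iff_exists_mem] at h1
  obtain ⟨a, ha, hap⟩ := h1
  rw [Multiset.mem_coe, List.mem_map] at ha
  obtain ⟨q, hq, rfl⟩ := ha
  exact ⟨q, Nat.prime_of_mem_primeFactorsList hq, Nat.dvd_of_mem_primeFactorsList hq, hap⟩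

theorem cheb_upper (K : Type*) [Field K] [NumberField K] :
    ∃ C : ℝ, 0 ≤ C ∧ ∀ t : ℝ, 0 < t → ∑ p ∈ Sp K t, Real.log (nR p.1) ≤ C * t := by
  classical
  refine ⟨finrank ℚ K * Real.log 4, by positivity, fun t ht => ?_⟩
  set m := primorial ⌊t⌋₊ with hm
  have hmpos : 0 < m := primorial_pos _
  have hdvd : ∏ p ∈ Sp K t, p.1 ∣ Ideal.span {(m : 𝓞 K)} := by
    rw [← Finset.prod_image (s := Sp K t) (g := fun p => p.1) (f := fun p => p)
      (fun a _ b _ hab => Subtype.ext hab)]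
    refine Finset.prod_primes_dvd _ ?_ ?_
    · intro p hp
      obtain ⟨p, -, rfl⟩ := Finset.mem_image.1 hp
      exact prime_of p
    · intro p hp
      obtain ⟨p, hpt, rfl⟩ := Finset.mem_image.1 hp
      rw [Ideal.dvd_span_singleton]
      obtain ⟨q, hq, hqd, hqp⟩ := exists_nat_prime_mem p
      rw [mem_Sp] at hpt
      have hle : q ≤ ⌊t⌋₊ := by
        refine (Nat.le_of_dvd (one_le_absNorm p.2.2) hqd).trans (Nat.le_floor hpt)
      have : q ∣ m := by
        rw [hm, primorial]
        exact Finset.dvd_prod_of_mem (fun p => p) (by simp [hq]; omega)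
      obtain ⟨c, hc⟩ := this
      rw [hc]; push_cast
      exact Ideal.mul_mem_right _ _ hqp
  have h1 : (∏ p ∈ Sp K t, absNorm p.1) ∣ absNorm (Ideal.span {(m : 𝓞 K)}) := by
    rw [← map_prod]; exact map_dvd _ hdvd
  have h2 : absNorm (Ideal.span {(m : 𝓞 K)}) = m ^ finrank ℚ K := by
    rw [Ideal.absNorm_span_singleton, ← Int.cast_natCast, ← eq_intCast (algebraMap ℤ (𝓞 K)), Algebra.norm_algebraMap,
      Int.natAbs_pow, Int.natAbs_natCast, RingOfIntegers.rank]
  rw [h2] at h1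
  have h3 := Nat.le_of_dvd (by positivity) h1
  have h4 : (∏ p ∈ Sp K t, nR p.1) ≤ ((4 : ℝ) ^ ⌊t⌋₊) ^ finrank ℚ K := by
    have : ∏ p ∈ Sp K t, absNorm p.1 ≤ (4 ^ ⌊t⌋₊) ^ finrank ℚ K :=
      h3.trans (Nat.pow_le_pow_left (primorial_le_four_pow _) _)
    unfold nR; exact_mod_cast this
  rw [← Real.log_prod (fun p _ => (nR_pos p.2.2).ne')]
  refine (Real.log_le_log (Finset.prod_pos fun p _ => nR_pos p.2.2) h4).trans ?_
  rw [Real.log_pow, Real.log_pow]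
  have h5 := Nat.floor_le ht.le
  have h6 : 0 ≤ Real.log 4 := by positivity
  rw [mul_assoc]
  refine mul_le_mul_of_nonneg_left ?_ (by positivity)
  nlinarith [mul_le_mul_of_nonneg_right h5 h6]

end ideals

section mertensone
open Ideal Module

theorem kappa_pos (K : Type*) [Field K] [NumberField K] : 0 < kappaK K := by
  unfold kappaK
  have h1 := Units.regulator_pos K
  have h2 : 0 < classNumber K := by unfold classNumber; exact Fintype.card_pos
  have h3 : (discr K : ℝ) ≠ 0 := by exact_mod_cast discr_ne_zero K
  have h4 : 0 < Real.sqrt |(discr K : ℝ)| := Real.sqrt_pos.2 (abs_pos.2 h3)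
  have h5 : 0 < Units.torsionOrder K := Nat.pos_of_ne_zero (Units.torsionOrder_ne_zero K)
  positivity

theorem card_le (K : Type*) [Field K] [NumberField K] :
    ∃ C : ℝ, 0 ≤ C ∧ ∀ t : ℝ, 0 < t → ((Bk K t).card : ℝ) ≤ C * t := by
  obtain ⟨θ, C, hθ, hθ1, hC, h⟩ := ideal_count K
  have hk := kappa_pos K
  refine ⟨kappaK K + C, by positivity, fun t ht => ?_⟩
  rcases lt_or_ge t 1 with h1 | h1
  · rw [Bk_empty h1]; simp; positivity
  · have := (abs_le.1 (h t ht)).2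
    have h2 : t ^ θ ≤ t := by
      have := Real.rpow_le_rpow_of_exponent_le h1 hθ1.le
      rwa [Real.rpow_one] at this
    nlinarith [mul_le_mul_of_nonneg_left h2 hC]

variable (K : Type*) [Field K] [NumberField K]

theorem sum_logN : ∃ C : ℝ, 0 ≤ C ∧ ∀ x : ℝ, 1 ≤ x →
    |∑ I ∈ Bk K x, Real.log (nR I) - kappaK K * (x * Real.log x)| ≤ C * x := by
  obtain ⟨θ, C, hθ, hθ1, hC, hN⟩ := ideal_count K
  obtain ⟨C1, hC1, hc⟩ := card_le K
  obtain ⟨C2, hC2, hd⟩ := dyadic_sum (fun i : IK K => nR i.1) (fun i => one_le_nR i.2) (Si K)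
    (fun x i => mem_Si x i) (fun _ => 1) (fun _ => zero_le_one) C1
    (fun t ht => by rw [sum_Si t (fun _ => 1)]; simpa using hc t ht) (1/2) (by norm_num) (by norm_num)
  refine ⟨C / (1 - θ) + 2 * C2, by have : 0 < 1 - θ := by linarith
                                   positivity, fun x hx => ?_⟩
  have hx0 : 0 < x := by linarith
  have e1 : ∑ I ∈ Bk K x, Real.log (nR I) =
      ((Bk K x).card : ℝ) * Real.log x - ∑ I ∈ Bk K x, Real.log (x / nR I) := by
    rw [← nsmul_eq_mul, ← Finset.sum_const, ← Finset.sum_sub_distrib]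
    refine Finset.sum_congr rfl fun I hI => ?_
    have := nR_pos (mem_Bk'.1 hI).1
    rw [Real.log_div hx0.ne' this.ne']; ring
  have b1 : 0 ≤ ∑ I ∈ Bk K x, Real.log (x / nR I) := by
    refine Finset.sum_nonneg fun I hI => Real.log_nonneg ?_
    have h := mem_Bk'.1 hI
    rw [le_div_iff₀ (nR_pos h.1)]; linarith [h.2]
  have b2 : ∑ I ∈ Bk K x, Real.log (x / nR I) ≤ 2 * (C2 * x) := by
    refine le_trans ?_ (mul_le_mul_of_nonneg_left (hd x hx0) (by norm_num))
    rw [sum_Si x (fun I => 1 * (x / nR I) ^ (1/2 : ℝ)), Finset.mul_sum]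
    refine Finset.sum_le_sum fun I hI => ?_
    have h := nR_pos (mem_Bk'.1 hI).1
    have := Real.log_le_rpow_div (x := x / nR I) (by positivity) (ε := 1/2) (by norm_num)
    linarith
  have hlog := Real.log_nonneg hx
  have b3 : |((Bk K x).card : ℝ) * Real.log x - kappaK K * (x * Real.log x)| ≤ C / (1 - θ) * x := by
    have : ((Bk K x).card : ℝ) * Real.log x - kappaK K * (x * Real.log x) =
      (((Bk K x).card : ℝ) - kappaK K * x) * Real.log x := by ring
    rw [this, abs_mul, abs_of_nonneg hlog]
    have h1 := Real.log_le_rpow_div (x := x) hx0.le (ε := 1 - θ) (by linarith)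
    calc _ ≤ (C * x ^ θ) * (x ^ (1 - θ) / (1 - θ)) := by
          gcongr
          exact hN x hx0
      _ = C / (1 - θ) * (x ^ θ * x ^ (1 - θ)) := by ring
      _ = _ := by rw [← Real.rpow_add hx0]; simp
  rw [e1]
  rw [abs_le] at *
  constructor <;> nlinarith [b3.1, b3.2]

theorem sum_logN' : ∃ C : ℝ, 0 ≤ C ∧ ∀ x : ℝ, 1 ≤ x →
    |∑ I ∈ Bk K x, Real.log (nR I) - kappaK K * x * ∑ p ∈ Sp K x, Real.log (nR p.1) / nR p.1| ≤ C * x := by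
  obtain ⟨θ, C, hθ, hθ1, hC, hN⟩ := ideal_count K
  obtain ⟨C1, hC1, hc⟩ := card_le K
  obtain ⟨C0, hC0, hch⟩ := cheb_upper K
  have hlog : ∀ p : PK K, 0 ≤ Real.log (nR p.1) := fun p => Real.log_nonneg (one_le_nR p.2.2)
  obtain ⟨C2, hC2, hd⟩ := dyadic_sum (fun i : PK K => nR i.1) (fun i => one_le_nR i.2.2) (Sp K)
    (fun x i => mem_Sp x i) (fun p => Real.log (nR p.1)) hlog C0 hch θ (by linarith) hθ1
  have hsum := dyadic_summable (fun i : PK K => nR i.1) (fun i => one_le_nR i.2.2) (Sp K)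
    (fun x i => mem_Sp x i) (fun p => Real.log (nR p.1)) hlog C0 hch 2 (by norm_num)
  set D := ∑' p : PK K, Real.log (nR p.1) * nR p.1 ^ (-2 : ℝ) with hD
  have hnn : ∀ p : PK K, 0 ≤ Real.log (nR p.1) * nR p.1 ^ (-2 : ℝ) := fun p => by
    have := nR_pos p.2.2; have := hlog p; positivity
  have hD0 : 0 ≤ D := tsum_nonneg hnn
  have hV : ∀ (p : PK K) (x : ℝ), 0 < x → ∑ I ∈ Bk K x, (vK p.1 I : ℝ) ≤ 2 * C1 * (x / nR p.1) := by
    intro p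
    exact rec_bound_V (fun y => ((Bk K y).card : ℝ)) (fun x => ∑ I ∈ Bk K x, (vK p.1 I : ℝ)) _ (two_le_nR p) C1 hC1
      (fun x hx => by simp [Bk_empty hx]) hc (fun x _ => vsum_rec p x)
  refine ⟨C * C2 + 2 * C1 * D, by positivity, fun x hx => ?_⟩
  have hx0 : 0 < x := by linarith
  have e1 : ∑ I ∈ Bk K x, Real.log (nR I) =
      ∑ p ∈ Sp K x, Real.log (nR p.1) * ∑ I ∈ Bk K x, (vK p.1 I : ℝ) := by
    simp_rw [Finset.mul_sum]
    rw [Finset.sum_comm]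
    refine Finset.sum_congr rfl fun I hI => ?_
    rw [log_nR_eq hI]
    exact Finset.sum_congr rfl fun p _ => by ring
  rw [e1, Finset.mul_sum, ← Finset.sum_sub_distrib]
  have e2 : ∀ p ∈ Sp K x, |Real.log (nR p.1) * ∑ I ∈ Bk K x, (vK p.1 I : ℝ) - kappaK K * x * (Real.log (nR p.1) / nR p.1)|
     ≤ C * (Real.log (nR p.1) * (x / nR p.1) ^ θ) + 2 * C1 * x * (Real.log (nR p.1) * nR p.1 ^ (-2 : ℝ)) := by
    intro p _
    have hp := nR_pos p.2.2
    have hxp : 0 < x / nR p.1 := by positivity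
    have a1 := hN _ hxp
    have a2 := hV p _ hxp
    have a3 : 0 ≤ ∑ I ∈ Bk K (x / nR p.1), (vK p.1 I : ℝ) := Finset.sum_nonneg fun _ _ => by positivity
    rw [vsum_rec p x]
    have e : Real.log (nR p.1) * (((Bk K (x / nR p.1)).card : ℝ) + ∑ I ∈ Bk K (x / nR p.1), (vK p.1 I : ℝ)) - kappaK K * x * (Real.log (nR p.1) / nR p.1)
      = Real.log (nR p.1) * ((((Bk K (x / nR p.1)).card : ℝ) - kappaK K * (x / nR p.1)) + ∑ I ∈ Bk K (x / nR p.1), (vK p.1 I : ℝ)) := by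
      ring
    rw [e, abs_mul, abs_of_nonneg (hlog p)]
    have e3 : x / nR p.1 / nR p.1 = x * nR p.1 ^ (-2 : ℝ) := by
      rw [Real.rpow_neg hp.le]
      norm_cast
      field_simp
    rw [e3] at a2
    have a4 := (abs_add_le (((Bk K (x / nR p.1)).card : ℝ) - kappaK K * (x / nR p.1)) (∑ I ∈ Bk K (x / nR p.1), (vK p.1 I : ℝ)))
    rw [abs_of_nonneg a3] at a4
    calc _ ≤ Real.log (nR p.1) * (C * (x / nR p.1) ^ θ + 2 * C1 * (x * nR p.1 ^ (-2 : ℝ))) :=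
          mul_le_mul_of_nonneg_left (by linarith) (hlog p)
      _ = _ := by ring
  refine (Finset.abs_sum_le_sum_abs _ _).trans ((Finset.sum_le_sum e2).trans ?_)
  rw [Finset.sum_add_distrib, ← Finset.mul_sum, ← Finset.mul_sum]
  have c1 := mul_le_mul_of_nonneg_left (hd x hx0) hC
  have c2 := mul_le_mul_of_nonneg_left (hsum.sum_le_tsum (Sp K x) (fun p _ => hnn p)) (by positivity : 0 ≤ 2 * C1 * x)
  nlinarith

theorem mertens_one : ∃ C : ℝ, 0 ≤ C ∧ ∀ x : ℝ, 1 ≤ x →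
    |∑ p ∈ Sp K x, Real.log (nR p.1) / nR p.1 - Real.log x| ≤ C := by
  obtain ⟨C1, hC1, h1⟩ := sum_logN K
  obtain ⟨C2, hC2, h2⟩ := sum_logN' K
  have hk := kappa_pos K
  refine ⟨(C1 + C2) / kappaK K, by positivity, fun x hx => ?_⟩
  have hx0 : 0 < x := by linarith
  have a1 := h1 x hx
  have a2 := h2 x hx
  set T := ∑ I ∈ Bk K x, Real.log (nR I)
  set M := ∑ p ∈ Sp K x, Real.log (nR p.1) / nR p.1
  have : kappaK K * x * (M - Real.log x) = (T - kappaK K * (x * Real.log x)) - (T - kappaK K * x * M) := by ring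
  have h4 : |kappaK K * x * (M - Real.log x)| ≤ (C1 + C2) * x := by
    rw [this]
    refine (abs_sub _ _).trans (by linarith)
  rw [abs_mul, abs_of_pos (by positivity)] at h4
  rw [le_div_iff₀ hk]
  have : x * (|M - Real.log x| * kappaK K) ≤ x * (C1 + C2) := by linarith
  exact le_of_mul_le_mul_left this hx0

end mertensone

section hfreecount
open Ideal Module

variable {K : Type*} [Field K] [NumberField K]

open scoped Classical in
theorem prod_pow_dvd_iff (k : ℕ) (T : Finset (PK K)) (I : Ideal (𝓞 K)) :
    (∏ p ∈ T, p.1 ^ k) ∣ I ↔ ∀ p ∈ T, p.1 ^ k ∣ I := by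
  constructor
  · intro H p hp
    exact (Finset.dvd_prod_of_mem (fun p : PK K => p.1 ^ k) hp).trans H
  · intro H
    refine Finset.prod_dvd_of_isRelPrime ?_ H
    intro p _ q _ hpq
    refine IsRelPrime.pow ?_
    exact ((prime_of p).irreducible.isRelPrime_iff_not_dvd).2 (not_dvd_of_ne hpq)

theorem prod_ne_bot (k : ℕ) (T : Finset (PK K)) : (∏ p ∈ T, p.1 ^ k) ≠ ⊥ :=
  Finset.prod_ne_zero_iff.2 fun p _ => pow_ne_zero _ p.2.2

theorem nR_prod (k : ℕ) (T : Finset (PK K)) : nR (∏ p ∈ T, p.1 ^ k) = ∏ p ∈ T, nR p.1 ^ k := by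
  simp [nR, map_prod]

open scoped Classical in
theorem sieve_id (k : ℕ) (P : Finset (PK K)) (w : Ideal (𝓞 K) → ℝ) (x : ℝ) :
    ∑ I ∈ Bk K x, (if ∀ p ∈ P, ¬ p.1 ^ k ∣ I then w I else 0) =
    ∑ T ∈ P.powerset, (∏ p ∈ T, (-1 : ℝ)) * ∑ J ∈ Bk K (x / ∏ p ∈ T, nR p.1 ^ k), w ((∏ p ∈ T, p.1 ^ k) * J) := by
  have e1 : ∀ I : Ideal (𝓞 K), (if ∀ p ∈ P, ¬ p.1 ^ k ∣ I then w I else 0) =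
      ∑ T ∈ P.powerset, (∏ p ∈ T, (-1 : ℝ)) * (if (∏ p ∈ T, p.1 ^ k) ∣ I then w I else 0) := by
    intro I
    have e2 : (if ∀ p ∈ P, ¬ p.1 ^ k ∣ I then w I else 0) = (∏ p ∈ P, (1 + (-1 : ℝ) * (if p.1 ^ k ∣ I then 1 else 0))) * w I := by
      split_ifs with h
      · rw [Finset.prod_eq_one, one_mul]
        intro p hp
        simp [h p hp]
      · push Not at h
        obtain ⟨p, hp, hpI⟩ := h
        rw [Finset.prod_eq_zero hp, zero_mul]
        simp [hpI]
    rw [e2, Finset.prod_one_add, Finset.sum_mul]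
    refine Finset.sum_congr rfl fun T _ => ?_
    rw [Finset.prod_mul_distrib, mul_assoc]
    congr 1
    rw [Finset.prod_ite_zero]
    simp_rw [prod_pow_dvd_iff]
    split_ifs <;> simp
  simp_rw [e1]
  rw [Finset.sum_comm]
  refine Finset.sum_congr rfl fun T _ => ?_
  rw [← Finset.mul_sum, sum_dvd x (prod_ne_bot k T), nR_prod]

theorem summable_IK (K : Type*) [Field K] [NumberField K] (s : ℝ) (hs : 1 < s) :
    Summable fun i : IK K => nR i.1 ^ (-s) := by
  obtain ⟨C1, hC1, hc⟩ := card_le K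
  have := dyadic_summable (fun i : IK K => nR i.1) (fun i => one_le_nR i.2) (Si K)
    (fun x i => mem_Si x i) (fun _ => 1) (fun _ => zero_le_one) C1
    (fun t ht => by rw [sum_Si t (fun _ => 1)]; simpa using hc t ht) s hs
  simpa using this

theorem summable_PK (K : Type*) [Field K] [NumberField K] (s : ℝ) (hs : 1 < s) :
    Summable fun i : PK K => nR i.1 ^ (-s) := by
  have := (summable_IK K s hs).comp_injective (i := fun p : PK K => (⟨p.1, p.2.2⟩ : IK K))
    (fun a b hab => Subtype.ext (by simpa using hab))
  exact this

theorem summable_zeta (K : Type*) [Field K] [NumberField K] (h : ℕ) (hh : 2 ≤ h) :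
    Summable fun i : IK K => 1 / nR i.1 ^ h := by
  have := summable_IK K h (by exact_mod_cast hh)
  refine this.congr fun i => ?_
  rw [Real.rpow_neg (nR_pos i.2).le, Real.rpow_natCast, one_div]

theorem zeta_partial (K : Type*) [Field K] [NumberField K] (h : ℕ) (hh : 2 ≤ h) :
    Tendsto (fun z : ℝ => ∑ I ∈ Bk K z, 1 / nR I ^ h) atTop (𝓝 (zetaK K h)) := by
  have h1 : HasSum (fun i : IK K => 1 / nR i.1 ^ h) (zetaK K h) := (summable_zeta K h hh).hasSum
  have h2 : Tendsto (Si K) atTop atTop := by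
    refine tendsto_atTop_finset_of_monotone ?_ ?_
    · intro x y hxy i hi
      rw [mem_Si] at *; linarith
    · intro i; exact ⟨nR i.1, (mem_Si _ _).2 le_rfl⟩
  have := Filter.Tendsto.comp h1 h2
  refine this.congr fun z => ?_
  exact sum_Si z (fun I => 1 / nR I ^ h)

theorem zeta_ge (K : Type*) [Field K] [NumberField K] (h : ℕ) (hh : 2 ≤ h) (z : ℝ) :
    ∑ I ∈ Bk K z, 1 / nR I ^ h ≤ zetaK K h := by
  have := (summable_zeta K h hh).sum_le_tsum (Si K z) (fun i _ => by have := nR_pos i.2; positivity)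
  rwa [sum_Si z (fun I => 1 / nR I ^ h)] at this

theorem one_mem_Bk {z : ℝ} (hz : 1 ≤ z) : (1 : Ideal (𝓞 K)) ∈ Bk K z := by
  rw [mem_Bk']
  refine ⟨one_ne_zero, ?_⟩
  simpa [nR] using hz

theorem one_le_zeta (K : Type*) [Field K] [NumberField K] (h : ℕ) (hh : 2 ≤ h) : 1 ≤ zetaK K h := by
  refine le_trans ?_ (zeta_ge K h hh 1)
  have := Finset.single_le_sum (f := fun I : Ideal (𝓞 K) => 1 / nR I ^ h) (fun I hI => by
    have := nR_pos (mem_Bk'.1 hI).1; positivity) (one_mem_Bk (K := K) le_rfl)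
  refine le_trans ?_ this
  simp [nR]

theorem exists_prime_dvd {I : Ideal (𝓞 K)} (hI : I ≠ ⊥) (h1 : I ≠ 1) : ∃ p : PK K, p.1 ∣ I ∧ nR p.1 ≤ nR I := by
  have hu : ¬ IsUnit I := by rwa [Ideal.isUnit_iff, ← Ideal.one_eq_top]
  obtain ⟨q, hq, hqI⟩ := WfDvdMonoid.exists_irreducible_factor hu hI
  have hq' := hq.prime
  refine ⟨⟨q, Ideal.isPrime_of_prime hq', hq'.ne_zero⟩, hqI, ?_⟩
  unfold nR
  have hd : absNorm q ∣ absNorm I := map_dvd _ hqI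
  exact_mod_cast Nat.le_of_dvd (one_le_absNorm hI) hd

theorem euler_bound (K : Type*) [Field K] [NumberField K] (h : ℕ) (hh : 2 ≤ h) (y : ℝ) (hy : 1 ≤ y) :
    1 ≤ (∏ p ∈ Sp K y, (1 + -(1 / nR p.1 ^ h))) * zetaK K h ∧
    (∏ p ∈ Sp K y, (1 + -(1 / nR p.1 ^ h))) * zetaK K h ≤ 1 + (zetaK K h - ∑ I ∈ Bk K y, 1 / nR I ^ h) := by
  classical
  have hlim : Tendsto (fun z : ℝ => ∑ I ∈ Bk K z, (if ∀ p ∈ Sp K y, ¬ p.1 ^ 1 ∣ I then 1 / nR I ^ h else 0))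
      atTop (𝓝 ((∏ p ∈ Sp K y, (1 + -(1 / nR p.1 ^ h))) * zetaK K h)) := by
    simp_rw [sieve_id]
    rw [Finset.prod_one_add, Finset.sum_mul]
    refine tendsto_finsetSum _ fun T _ => ?_
    have hpos : 0 < ∏ p ∈ T, nR p.1 ^ 1 := Finset.prod_pos fun p _ => by have := nR_pos p.2.2; positivity
    have h1 := (zeta_partial K h hh).comp (tendsto_id.atTop_div_const hpos)
    have h2 := h1.const_mul (∏ p ∈ T, -(1 / nR p.1 ^ h))
    refine h2.congr fun z => ?_
    simp only [Function.comp, id, Finset.mul_sum]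
    refine Finset.sum_congr rfl fun J _ => ?_
    rw [nR_mul, nR_prod, mul_pow, ← Finset.prod_pow]
    have : ∏ p ∈ T, -(1 / nR p.1 ^ h) = (∏ p ∈ T, (-1 : ℝ)) * (1 / ∏ p ∈ T, (nR p.1 ^ 1) ^ h) := by
      rw [one_div, ← Finset.prod_inv_distrib, ← Finset.prod_mul_distrib]
      refine Finset.prod_congr rfl fun p _ => by simp
    rw [this, mul_assoc, one_div_mul_one_div]
  constructor
  · refine ge_of_tendsto hlim ?_
    filter_upwards [eventually_ge_atTop 1] with z hz
    have hnn : ∀ I ∈ Bk K z, 0 ≤ (if ∀ p ∈ Sp K y, ¬ p.1 ^ 1 ∣ I then 1 / nR I ^ h else 0) := by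
      intro I hI
      have := nR_pos (mem_Bk'.1 hI).1
      split_ifs <;> positivity
    refine le_trans ?_ (Finset.single_le_sum hnn (one_mem_Bk hz))
    rw [if_pos]
    · simp [nR]
    · intro p _ hp
      rw [pow_one] at hp
      exact (prime_of p).not_isUnit (isUnit_of_dvd_one hp)
  · refine le_of_tendsto hlim ?_
    filter_upwards [eventually_ge_atTop y] with z hz
    have hsub : Bk K y ⊆ Bk K z := by
      intro I hI
      rw [mem_Bk'] at *; exact ⟨hI.1, hI.2.trans hz⟩
    rw [← Finset.sum_sdiff hsub]
    have h1 : ∑ I ∈ Bk K z \ Bk K y, (if ∀ p ∈ Sp K y, ¬ p.1 ^ 1 ∣ I then 1 / nR I ^ h else 0) ≤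
        ∑ I ∈ Bk K z \ Bk K y, 1 / nR I ^ h := by
      refine Finset.sum_le_sum fun I hI => ?_
      have := nR_pos (mem_Bk'.1 (Finset.mem_sdiff.1 hI).1).1
      split_ifs
      · exact le_rfl
      · positivity
    have h2 : ∑ I ∈ Bk K y, (if ∀ p ∈ Sp K y, ¬ p.1 ^ 1 ∣ I then 1 / nR I ^ h else 0) ≤ 1 := by
      rw [Finset.sum_eq_single_of_mem 1 (one_mem_Bk hy)]
      · split_ifs <;> simp [nR]
      · intro I hI hI1
        rw [if_neg]
        push Not
        rw [mem_Bk'] at hI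
        obtain ⟨p, hp, hpn⟩ := exists_prime_dvd hI.1 hI1
        exact ⟨p, (mem_Sp _ _).2 (hpn.trans hI.2), by rwa [pow_one]⟩
    have h3 := Finset.sum_sdiff hsub (f := fun I : Ideal (𝓞 K) => 1 / nR I ^ h)
    have h4 := zeta_ge K h hh z
    linarith

theorem euler_tendsto (K : Type*) [Field K] [NumberField K] (h : ℕ) (hh : 2 ≤ h) :
    Tendsto (fun y : ℝ => ∏ p ∈ Sp K y, (1 + -(1 / nR p.1 ^ h))) atTop (𝓝 (1 / zetaK K h)) := by
  have hz := one_le_zeta K h hh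
  have hz0 : zetaK K h ≠ 0 := by linarith
  have h1 : Tendsto (fun y : ℝ => (∏ p ∈ Sp K y, (1 + -(1 / nR p.1 ^ h))) * zetaK K h) atTop (𝓝 1) := by
    have h2 : Tendsto (fun y : ℝ => 1 + (zetaK K h - ∑ I ∈ Bk K y, 1 / nR I ^ h)) atTop (𝓝 1) := by
      have := ((zeta_partial K h hh).const_sub (zetaK K h)).const_add 1
      simpa using this
    refine tendsto_of_tendsto_of_tendsto_of_le_of_le' tendsto_const_nhds h2 ?_ ?_
    · filter_upwards [eventually_ge_atTop 1] with y hy using (euler_bound K h hh y hy).1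
    · filter_upwards [eventually_ge_atTop 1] with y hy using (euler_bound K h hh y hy).2
  have := h1.div_const (zetaK K h)
  refine this.congr fun y => ?_
  field_simp

theorem hfree_count (K : Type*) [Field K] [NumberField K] (h : ℕ) (hh : 2 ≤ h) :
    ∃ θ C : ℝ, 3 / 4 ≤ θ ∧ θ < 1 ∧ 0 ≤ C ∧ ∀ x : ℝ, 0 < x →
      |Hcnt (K := K) h (fun _ => True) x - kappaK K / zetaK K h * x| ≤ C * x ^ θ := by
  classical
  obtain ⟨θ, C, hθ, hθ1, hC, hN⟩ := ideal_count K
  have hs := summable_PK K (3/2) (by norm_num)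
  set E := Real.exp (∑' p : PK K, nR p.1 ^ (-(3/2) : ℝ)) with hE
  refine ⟨θ, C * E, hθ, hθ1, by positivity, fun x hx => ?_⟩
  have key : ∀ y, x ≤ y → |Hcnt (K := K) h (fun _ => True) x - kappaK K * x * ∏ p ∈ Sp K y, (1 + -(1 / nR p.1 ^ h))|
      ≤ C * E * x ^ θ := by
    intro y hy
    have e1 : Hcnt (K := K) h (fun _ => True) x =
        ∑ I ∈ Bk K x, (if ∀ p ∈ Sp K y, ¬ p.1 ^ h ∣ I then (1 : ℝ) else 0) := by
      unfold Hcnt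
      refine Finset.sum_congr rfl fun I hI => ?_
      rw [mem_Bk'] at hI
      congr 1
      rw [and_true, eq_iff_iff]
      constructor
      · intro H p _; exact H p.1 p.2.1 p.2.2
      · intro H p hp hp0 hd
        refine H ⟨p, hp, hp0⟩ ((mem_Sp _ _).2 ?_) hd
        have : p ∣ I := (dvd_pow_self p (by omega)).trans hd
        have h3 : absNorm p ∣ absNorm I := map_dvd _ this
        have h4 : nR p ≤ nR I := by
          unfold nR
          exact_mod_cast Nat.le_of_dvd (one_le_absNorm hI.1) h3
        show nR p ≤ y
        linarith [hI.2]
    rw [e1, sieve_id, Finset.prod_one_add, Finset.mul_sum, ← Finset.sum_sub_distrib]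
    refine (Finset.abs_sum_le_sum_abs _ _).trans ?_
    have e2 : ∀ T ∈ (Sp K y).powerset, |(∏ p ∈ T, (-1 : ℝ)) * ∑ J ∈ Bk K (x / ∏ p ∈ T, nR p.1 ^ h), (1 : ℝ) -
        kappaK K * x * ∏ p ∈ T, -(1 / nR p.1 ^ h)| ≤ C * x ^ θ * ∏ p ∈ T, nR p.1 ^ (-(3/2) : ℝ) := by
      intro T _
      have hpos : 0 < ∏ p ∈ T, nR p.1 ^ h := Finset.prod_pos fun p _ => by have := nR_pos p.2.2; positivity
      have e3 : ∏ p ∈ T, -(1 / nR p.1 ^ h) = (∏ p ∈ T, (-1 : ℝ)) * (1 / ∏ p ∈ T, nR p.1 ^ h) := by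
        rw [one_div, ← Finset.prod_inv_distrib, ← Finset.prod_mul_distrib]
        refine Finset.prod_congr rfl fun p _ => by simp
      have e4 : (∏ p ∈ T, (-1 : ℝ)) * ∑ J ∈ Bk K (x / ∏ p ∈ T, nR p.1 ^ h), (1 : ℝ) -
        kappaK K * x * ∏ p ∈ T, -(1 / nR p.1 ^ h) = (∏ p ∈ T, (-1 : ℝ)) *
          (((Bk K (x / ∏ p ∈ T, nR p.1 ^ h)).card : ℝ) - kappaK K * (x / ∏ p ∈ T, nR p.1 ^ h)) := by
        rw [e3]; simp; ring
      rw [e4, abs_mul]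
      have e5 : |∏ p ∈ T, (-1 : ℝ)| = 1 := by simp
      rw [e5, one_mul]
      refine (hN _ (by positivity)).trans ?_
      rw [Real.div_rpow hx.le hpos.le, mul_assoc, div_eq_mul_inv, ← Real.rpow_neg hpos.le,
        ← Real.finsetProd_rpow _ _ (fun p _ => by have := nR_pos p.2.2; positivity)]
      gcongr with p hp
      · intro p _; have := nR_pos p.2.2; positivity
      · have h1 := one_le_nR p.2.2
        rw [← Real.rpow_natCast, ← Real.rpow_mul (by linarith)]
        refine Real.rpow_le_rpow_of_exponent_le h1 ?_
        have : (2 : ℝ) ≤ h := by exact_mod_cast hh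
        nlinarith
    refine (Finset.sum_le_sum e2).trans ?_
    rw [← Finset.mul_sum, ← Finset.prod_one_add]
    have e6 : ∏ p ∈ Sp K y, (1 + nR p.1 ^ (-(3/2) : ℝ)) ≤ E := by
      rw [hE]
      refine le_trans ?_ (Real.exp_le_exp.2 (hs.sum_le_tsum (Sp K y) fun p _ => by have := nR_pos p.2.2; positivity))
      rw [Real.exp_sum]
      refine Finset.prod_le_prod (fun p _ => by have := nR_pos p.2.2; positivity) fun p _ => ?_
      rw [add_comm]; exact Real.add_one_le_exp _
    calc _ ≤ C * x ^ θ * E := by gcongr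
      _ = _ := by ring
  have hl := (((euler_tendsto K h hh).const_mul (kappaK K * x)).const_sub (Hcnt (K := K) h (fun _ => True) x)).abs
  have := le_of_tendsto hl (by filter_upwards [eventually_ge_atTop x] with y hy using key y hy)
  have e : kappaK K / zetaK K h * x = kappaK K * x * (1 / zetaK K h) := by ring
  rw [e]; exact this

end hfreecount

section expandsec
open Ideal Module

/-- density of multiples -/
def al (h : ℕ) (n : ℝ) : ℝ := (n ^ (h - 1) - 1) / (n ^ h - 1)

theorem al_nonneg (h : ℕ) {n : ℝ} (hn : 1 ≤ n) : 0 ≤ al h n := by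
  unfold al
  have h1 : 1 ≤ n ^ (h - 1) := one_le_pow₀ hn
  have h2 : 1 ≤ n ^ h := one_le_pow₀ hn
  exact div_nonneg (by linarith) (by linarith)

theorem al_le (h : ℕ) (hh : 2 ≤ h) {n : ℝ} (hn : 2 ≤ n) : al h n ≤ 1 / n := by
  unfold al
  obtain ⟨g, rfl⟩ : ∃ g, h = g + 1 := ⟨h - 1, by omega⟩
  have h2 : 1 ≤ n ^ g := one_le_pow₀ (by linarith)
  have h3 : 1 < n ^ (g + 1) := by rw [pow_succ]; nlinarith
  rw [Nat.add_sub_cancel, div_le_div_iff₀ (by linarith) (by linarith), pow_succ]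
  nlinarith

variable {K : Type*} [Field K] [NumberField K]

open scoped Classical in
theorem omega_eq {x : ℝ} {I : Ideal (𝓞 K)} (hI : I ∈ Bk K x) :
    (omegaK I : ℝ) = ∑ p ∈ Sp K x, if p.1 ∣ I then (1 : ℝ) else 0 := by
  rw [mem_Bk'] at hI
  have : {p : Ideal (𝓞 K) | p.IsPrime ∧ p ≠ ⊥ ∧ p ∣ I} =
      (((Sp K x).filter (fun p => p.1 ∣ I)).image (fun p => p.1) : Finset (Ideal (𝓞 K))) := by
    ext p
    simp only [Set.mem_setOf_eq, Finset.coe_image, Finset.coe_filter, mem_Sp, Set.mem_image]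
    constructor
    · rintro ⟨h1, h2, h3⟩
      refine ⟨⟨p, h1, h2⟩, ⟨?_, h3⟩, rfl⟩
      refine le_trans ?_ hI.2
      have hd : absNorm p ∣ absNorm I := map_dvd _ h3
      unfold nR
      exact_mod_cast Nat.le_of_dvd (one_le_absNorm hI.1) hd
    · rintro ⟨q, ⟨h1, h2⟩, rfl⟩
      exact ⟨q.2.1, q.2.2, h2⟩
  rw [omegaK, this, Set.ncard_coe_finset, Finset.card_image_of_injective _ Subtype.val_injective,
    Finset.sum_boole]

open scoped Classical in
theorem omega_sq {x : ℝ} {I : Ideal (𝓞 K)} (hI : I ∈ Bk K x) :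
    (omegaK I : ℝ) ^ 2 = ∑ p ∈ Sp K x, ((if p.1 ∣ I then (1 : ℝ) else 0) +
      ∑ q ∈ Sp K (x / nR p.1), if q = p then 0 else if p.1 ∣ I ∧ q.1 ∣ I then (1 : ℝ) else 0) := by
  rw [sq]
  nth_rewrite 1 [omega_eq hI]
  rw [omega_eq hI, Finset.sum_mul]
  refine Finset.sum_congr rfl fun p hp => ?_
  have hsub : Sp K (x / nR p.1) ⊆ Sp K x := by
    intro q hq
    rw [mem_Sp] at *
    have := two_le_nR p
    have h2 := two_le_nR q
    rw [le_div_iff₀ (by linarith)] at hq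
    nlinarith
  rw [mem_Bk'] at hI
  rw [Finset.sum_subset hsub]
  · rw [← Finset.add_sum_erase _ _ hp, ← Finset.add_sum_erase (Sp K x) (fun q => if q = p then (0 : ℝ) else _) hp, if_pos rfl, zero_add, mul_add]
    congr 1
    · split_ifs <;> simp
    · rw [Finset.mul_sum]
      refine Finset.sum_congr rfl fun q hq => ?_
      rw [if_neg (Finset.ne_of_mem_erase hq)]
      by_cases h1 : p.1 ∣ I <;> by_cases h2 : q.1 ∣ I <;> simp [h1, h2]
  · intro q _ hq
    rw [mem_Sp, le_div_iff₀ (nR_pos p.2.2)] at hq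
    split_ifs with h1 h2
    · rfl
    · exfalso
      apply hq
      have hr : IsRelPrime q.1 p.1 := ((prime_of q).irreducible.isRelPrime_iff_not_dvd).2 (not_dvd_of_ne h1)
      have hd : q.1 * p.1 ∣ I := hr.mul_dvd h2.2 h2.1
      have hd2 : absNorm (q.1 * p.1) ∣ absNorm I := map_dvd _ hd
      rw [← nR_mul]
      refine le_trans ?_ hI.2
      unfold nR
      exact_mod_cast Nat.le_of_dvd (one_le_absNorm hI.1) hd2
    · rfl

open scoped Classical in
theorem W_eq (h : ℕ) (x : ℝ) :
    (∑ᶠ I ∈ {I : Ideal (𝓞 K) | I ≠ ⊥ ∧ HFreeI h I ∧ (Ideal.absNorm I : ℝ) ≤ x}, (omegaK I : ℝ) ^ 2)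
    = ∑ p ∈ Sp K x, (Hcnt h (fun I => p.1 ∣ I ∧ True) x +
      ∑ q ∈ Sp K (x / nR p.1), if q = p then 0 else Hcnt h (fun I => p.1 ∣ I ∧ (q.1 ∣ I ∧ True)) x) := by
  have : {I : Ideal (𝓞 K) | I ≠ ⊥ ∧ HFreeI h I ∧ (Ideal.absNorm I : ℝ) ≤ x} =
      ((Bk K x).filter (fun I => HFreeI h I) : Finset (Ideal (𝓞 K))) := by
    ext I; simp only [Set.mem_setOf_eq, Finset.coe_filter, mem_Bk]; tauto
  rw [this, finsum_mem_coe_finset, Finset.sum_filter]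
  have e : ∀ I ∈ Bk K x, (if HFreeI h I then (omegaK I : ℝ) ^ 2 else 0) =
      ∑ p ∈ Sp K x, ((if HFreeI h I ∧ (p.1 ∣ I ∧ True) then (1 : ℝ) else 0) +
      ∑ q ∈ Sp K (x / nR p.1), if q = p then 0 else if HFreeI h I ∧ (p.1 ∣ I ∧ (q.1 ∣ I ∧ True)) then (1 : ℝ) else 0) := by
    intro I hI
    split_ifs with h1
    · rw [omega_sq hI]; simp [h1]
    · simp [h1]
  rw [Finset.sum_congr rfl e, Finset.sum_comm]
  refine Finset.sum_congr rfl fun p _ => ?_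
  rw [Finset.sum_add_distrib, Finset.sum_comm]
  congr 1
  · unfold Hcnt
    refine Finset.sum_congr rfl fun I _ => ?_
    congr 1
  · refine Finset.sum_congr rfl fun q _ => ?_
    split_ifs
    · simp
    · unfold Hcnt
      refine Finset.sum_congr rfl fun I _ => ?_
      congr 1

theorem expansion (K : Type*) [Field K] [NumberField K] (h : ℕ) (hh : 2 ≤ h) :
    ∃ θ C : ℝ, 3 / 4 ≤ θ ∧ θ < 1 ∧ 0 ≤ C ∧ ∀ x : ℝ, 0 < x →
    |(∑ᶠ I ∈ {I : Ideal (𝓞 K) | I ≠ ⊥ ∧ HFreeI h I ∧ (Ideal.absNorm I : ℝ) ≤ x}, (omegaK I : ℝ) ^ 2)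
      - kappaK K / zetaK K h * x * (∑ p ∈ Sp K x, al h (nR p.1)
         + ∑ p ∈ Sp K x, ∑ q ∈ Sp K (x / nR p.1), al h (nR p.1) * al h (nR q.1)
         - ∑ p ∈ Sp K (Real.sqrt x), al h (nR p.1) ^ 2)|
    ≤ C * (∑ p ∈ Sp K x, (x / nR p.1) ^ θ + ∑ p ∈ Sp K x, ∑ q ∈ Sp K (x / nR p.1), (x / nR p.1 / nR q.1) ^ θ) := by
  classical
  obtain ⟨θ, C, hθ, hθ1, hC, hH⟩ := hfree_count K h hh
  have hz := one_le_zeta K h hh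
  have hk := kappa_pos K
  set c := kappaK K / zetaK K h with hc
  have hc0 : 0 ≤ c := by have : 0 < zetaK K h := by linarith
                         positivity
  set C' := C + c with hC'
  have hH' : ∀ x : ℝ, 0 < x → |Hcnt (K := K) h (fun _ => True) x - c * x| ≤ C' * x ^ θ := by
    intro x hx
    refine (hH x hx).trans ?_
    have : 0 ≤ x ^ θ := by positivity
    nlinarith
  have hG : ∀ (p : PK K) (x : ℝ), 0 < x →
      |Hcnt h (fun I => p.1 ∣ I ∧ True) x - c * al h (nR p.1) * x| ≤ 4 * C' * (x / nR p.1) ^ θ := by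
    intro p
    exact rec_bound _ _ _ (two_le_nR p) h hh c C' θ hc0 (by linarith) hθ hθ1
      (fun x hx => Hcnt_zero _ _ hx) hH' (fun x _ => Hcnt_rec h hh p _ (fun _ _ => Iff.rfl) x)
  have hG2 : ∀ (p q : PK K), q ≠ p → ∀ (x : ℝ), 0 < x →
      |Hcnt h (fun I => p.1 ∣ I ∧ (q.1 ∣ I ∧ True)) x - c * (al h (nR p.1) * al h (nR q.1)) * x| ≤
        16 * C' * (x / nR p.1 / nR q.1) ^ θ := by
    intro p q hpq x hx
    have hq := two_le_nR q
    have hp := two_le_nR p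
    have halq := al_le h hh hq
    have halq0 := al_nonneg h (by linarith : (1 : ℝ) ≤ nR q.1)
    have := rec_bound (fun x => Hcnt h (fun I => q.1 ∣ I ∧ True) x)
      (fun x => Hcnt h (fun I => p.1 ∣ I ∧ (q.1 ∣ I ∧ True)) x) _ hp h hh (c * al h (nR q.1)) (4 * C' * nR q.1 ^ (-θ)) θ
      (by positivity) ?_ hθ hθ1 (fun x hx => Hcnt_zero _ _ hx) ?_
      (fun x _ => Hcnt_rec h hh p _ ?_ x) x hx
    · refine le_trans (le_of_eq ?_) (this.trans (le_of_eq ?_))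
      · congr 2
        show _ = c * al h (nR q.1) * al h (nR p.1) * x
        ring
      · have e := Real.div_rpow (x := x / nR p.1) (y := nR q.1) (by positivity) (by linarith) θ
        rw [e, Real.rpow_neg (by linarith)]
        ring
    · have h1 : 1 / nR q.1 ≤ nR q.1 ^ (-θ) := by
        rw [one_div, ← Real.rpow_neg_one]
        exact Real.rpow_le_rpow_of_exponent_le (by linarith) (by linarith)
      have h2 : c * al h (nR q.1) ≤ C' * nR q.1 ^ (-θ) := by
        apply mul_le_mul (by linarith) (by linarith) halq0 (by linarith)
      have h3 : 0 ≤ C' * nR q.1 ^ (-θ) := by positivity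
      linarith
    · intro y hy
      refine (hG q y hy).trans (le_of_eq ?_)
      rw [Real.div_rpow (by positivity) (by linarith) θ, Real.rpow_neg (by linarith)]
      ring
    · intro J _
      simp only [and_true]
      constructor
      · intro hd
        exact ((prime_of q).dvd_or_dvd hd).resolve_left (not_dvd_of_ne hpq)
      · intro hd
        exact hd.mul_left _
  refine ⟨θ, 16 * C', hθ, hθ1, by positivity, fun x hx => ?_⟩
  rw [W_eq]
  have ediag : ∑ p ∈ Sp K (Real.sqrt x), al h (nR p.1) ^ 2 =
      ∑ p ∈ Sp K x, ∑ q ∈ Sp K (x / nR p.1), if q = p then al h (nR p.1) * al h (nR q.1) else 0 := by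
    simp_rw [Finset.sum_ite_eq']
    rw [← Finset.sum_filter]
    refine Finset.sum_congr ?_ fun p _ => sq _
    ext p
    have hp := two_le_nR p
    rw [Finset.mem_filter, mem_Sp, mem_Sp, mem_Sp, le_div_iff₀ (by linarith), Real.le_sqrt (by linarith) hx.le, sq]
    constructor
    · intro H; exact ⟨by nlinarith, H⟩
    · intro H; exact H.2
  rw [ediag, add_sub_assoc, ← Finset.sum_sub_distrib, ← Finset.sum_add_distrib, ← Finset.sum_add_distrib, Finset.mul_sum, ← Finset.sum_sub_distrib, Finset.mul_sum]
  refine (Finset.abs_sum_le_sum_abs _ _).trans (Finset.sum_le_sum fun p _ => ?_)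
  have hp := nR_pos p.2.2
  rw [← Finset.sum_sub_distrib, mul_add, mul_add, add_sub_add_comm, Finset.mul_sum, ← Finset.sum_sub_distrib, Finset.mul_sum]
  refine (abs_add_le _ _).trans (add_le_add ?_ ((Finset.abs_sum_le_sum_abs _ _).trans (Finset.sum_le_sum fun q _ => ?_)))
  · have h1 := hG p x hx
    have h2 : 0 ≤ C' * (x / nR p.1) ^ θ := by positivity
    have h3 : c * x * al h (nR p.1) = c * al h (nR p.1) * x := by ring
    rw [h3]; linarith
  · have hq := nR_pos q.2.2
    split_ifs with hqp
    · simp; positivity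
    · have h1 := hG2 p q hqp x hx
      have h3 : c * x * (al h (nR p.1) * al h (nR q.1) - 0) = c * (al h (nR p.1) * al h (nR q.1)) * x := by ring
      rw [h3]; exact h1

end expandsec

section abel
open MeasureTheory

open scoped Classical in
theorem abel_bound {ι : Type*} (n : ι → ℝ) (S : ℝ → Finset ι)
    (hS : ∀ x i, i ∈ S x ↔ n i ≤ x) (w : ι → ℝ) (C : ℝ)
    (hW : ∀ x : ℝ, 1 ≤ x → |∑ i ∈ S x, w i - Real.log x| ≤ C)
    (a b : ℝ) (ha : 1 ≤ a) (hab : a ≤ b) (f g Φ : ℝ → ℝ)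
    (hf : ∀ t ∈ Set.Icc a b, HasDerivAt f (g t) t) (hg : ContinuousOn g (Set.Icc a b))
    (hneg : ∀ t ∈ Set.Icc a b, g t ≤ 0)
    (hΦ : ∀ t ∈ Set.Icc a b, HasDerivAt Φ (f t / t) t) :
    |∑ i ∈ S b \ S a, w i * f (n i) - (Φ b - Φ a)| ≤ 2 * C * (|f a| + 2 * |f b|) := by
  have hC : 0 ≤ C := (abs_nonneg _).trans (hW 1 le_rfl)
  have hsub : ∀ {t}, a ≤ t → S a ⊆ S t := by
    intro t ht i hi; rw [hS] at *; linarith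
  set W := fun t => ∑ i ∈ S t, w i with hWdef
  have hgi : IntegrableOn g (Set.Ioc a b) := (hg.integrableOn_Icc).mono_set Set.Ioc_subset_Icc_self
  have hint : ∀ u v, a ≤ u → u ≤ v → v ≤ b → ∫ t in Set.Ioc u v, g t = f v - f u := by
    intro u v hu huv hv
    rw [← intervalIntegral.integral_of_le huv]
    refine intervalIntegral.integral_eq_sub_of_hasDerivAt ?_ ?_
    · intro t ht
      rw [Set.uIcc_of_le huv] at ht
      exact hf t ⟨hu.trans ht.1, ht.2.trans hv⟩
    · refine ContinuousOn.intervalIntegrable ?_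
      rw [Set.uIcc_of_le huv]
      exact hg.mono (Set.Icc_subset_Icc hu hv)
  have hi : ∀ i ∈ S b \ S a, f (n i) = f b - ∫ t in Set.Ioc a b, (Set.Ici (n i)).indicator g t := by
    intro i hi
    rw [Finset.mem_sdiff, hS, hS, not_le] at hi
    rw [setIntegral_indicator measurableSet_Ici]
    have : Set.Ioc a b ∩ Set.Ici (n i) = Set.Icc (n i) b := by
      ext t; simp only [Set.mem_inter_iff, Set.mem_Ioc, Set.mem_Ici, Set.mem_Icc]
      constructor
      · rintro ⟨⟨_, h2⟩, h3⟩; exact ⟨h3, h2⟩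
      · rintro ⟨h1, h2⟩; exact ⟨⟨by linarith, h2⟩, h1⟩
    rw [this, integral_Icc_eq_integral_Ioc, hint _ _ hi.2.le hi.1 le_rfl]
    ring
  have hindi : ∀ i, IntegrableOn (fun t => w i * (Set.Ici (n i)).indicator g t) (Set.Ioc a b) := fun i =>
    (hgi.indicator measurableSet_Ici).const_mul _
  have e1 : ∑ i ∈ S b \ S a, w i * f (n i) = f b * (W b - W a) -
      ∫ t in Set.Ioc a b, ∑ i ∈ S b \ S a, w i * (Set.Ici (n i)).indicator g t := by
    rw [integral_finsetSum _ (fun i _ => hindi i)]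
    have : W b - W a = ∑ i ∈ S b \ S a, w i := by
      rw [hWdef]; simp only; rw [← Finset.sum_sdiff (hsub hab)]; ring
    rw [this, Finset.mul_sum, ← Finset.sum_sub_distrib]
    refine Finset.sum_congr rfl fun i h => ?_
    rw [hi i h, integral_const_mul]; ring
  have hlogc : ContinuousOn (fun t => g t * (Real.log t - Real.log a)) (Set.Icc a b) := by
    refine hg.mul ((ContinuousOn.log continuousOn_id ?_).sub continuousOn_const)
    intro t ht; have := ht.1; simp; linarith
  have e2 : Φ b - Φ a = f b * (Real.log b - Real.log a) - ∫ t in Set.Ioc a b, g t * (Real.log t - Real.log a) := by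
    have : ∫ t in Set.Ioc a b, g t * (Real.log t - Real.log a) =
        (f b * (Real.log b - Real.log a) - Φ b) - (f a * (Real.log a - Real.log a) - Φ a) := by
      rw [← intervalIntegral.integral_of_le hab]
      refine intervalIntegral.integral_eq_sub_of_hasDerivAt (f := fun t => f t * (Real.log t - Real.log a) - Φ t) ?_ ?_
      · intro t ht
        rw [Set.uIcc_of_le hab] at ht
        have h0 : t ≠ 0 := by have := ht.1; linarith
        have := ((hf t ht).mul ((Real.hasDerivAt_log h0).sub_const (Real.log a))).sub (hΦ t ht)
        refine this.congr_deriv ?_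
        field_simp
        ring
      · refine ContinuousOn.intervalIntegrable ?_
        rw [Set.uIcc_of_le hab]; exact hlogc
    rw [this]; ring
  have hlogi : IntegrableOn (fun t => g t * (Real.log t - Real.log a)) (Set.Ioc a b) :=
    (hlogc.integrableOn_Icc).mono_set Set.Ioc_subset_Icc_self
  have hsi : IntegrableOn (fun t => ∑ i ∈ S b \ S a, w i * (Set.Ici (n i)).indicator g t) (Set.Ioc a b) :=
    integrable_finsetSum _ (fun i _ => hindi i)
  have hE : ∀ t, a ≤ t → |(W t - W a) - (Real.log t - Real.log a)| ≤ 2 * C := by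
    intro t ht
    have h1 := hW t (ha.trans ht)
    have h2 := hW a ha
    have : (W t - W a) - (Real.log t - Real.log a) = (W t - Real.log t) - (W a - Real.log a) := by ring
    rw [this]
    exact (abs_sub _ _).trans (by linarith)
  have hI : |(∫ t in Set.Ioc a b, ∑ i ∈ S b \ S a, w i * (Set.Ici (n i)).indicator g t) -
      ∫ t in Set.Ioc a b, g t * (Real.log t - Real.log a)| ≤ 2 * C * (f a - f b) := by
    rw [← integral_sub hsi hlogi]
    have hb : ∫ t in Set.Ioc a b, (-(2 * C)) * g t = 2 * C * (f a - f b) := by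
      rw [integral_const_mul, hint a b le_rfl hab le_rfl]; ring
    rw [← hb, ← Real.norm_eq_abs]
    refine norm_integral_le_of_norm_le (hgi.const_mul _) ?_
    refine (ae_restrict_iff' measurableSet_Ioc).2 (Eventually.of_forall fun t ht => ?_)
    have hD : ∑ i ∈ S b \ S a, w i * (Set.Ici (n i)).indicator g t = g t * (W t - W a) := by
      have h1 : W t - W a = ∑ i ∈ S t \ S a, w i := by
        rw [hWdef]; simp only; rw [← Finset.sum_sdiff (hsub ht.1.le)]; ring
      have h2 : S t \ S a = (S b \ S a).filter (fun i => n i ≤ t) := by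
        ext i; simp only [Finset.mem_sdiff, Finset.mem_filter, hS]
        have := ht.2
        constructor
        · rintro ⟨h1, h2⟩; exact ⟨⟨by linarith, h2⟩, h1⟩
        · rintro ⟨⟨_, h2⟩, h1⟩; exact ⟨h1, h2⟩
      rw [h1, h2, Finset.sum_filter, Finset.mul_sum]
      refine Finset.sum_congr rfl fun i _ => ?_
      simp only [Set.indicator_apply, Set.mem_Ici]
      split_ifs <;> ring
    have hgt := hneg t ⟨ht.1.le, ht.2⟩
    rw [hD, ← mul_sub, norm_mul, Real.norm_eq_abs, Real.norm_eq_abs, abs_of_nonpos hgt]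
    nlinarith [hE t ht.1.le]
  have hb := hE b hab
  rw [e1, e2]
  have h3 : |f b * (W b - W a) - f b * (Real.log b - Real.log a)| ≤ |f b| * (2 * C) := by
    rw [← mul_sub, abs_mul]; gcongr
  have h4 : 2 * C * (f a - f b) ≤ 2 * C * (|f a| + |f b|) := by
    have := le_abs_self (f a); have := neg_abs_le (f b)
    gcongr; linarith
  set I1 := ∫ t in Set.Ioc a b, ∑ i ∈ S b \ S a, w i * (Set.Ici (n i)).indicator g t
  set I2 := ∫ t in Set.Ioc a b, g t * (Real.log t - Real.log a)
  have : f b * (W b - W a) - I1 - (f b * (Real.log b - Real.log a) - I2) =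
    (f b * (W b - W a) - f b * (Real.log b - Real.log a)) - (I1 - I2) := by ring
  rw [this]
  refine (abs_sub _ _).trans ?_
  nlinarith

end abel

section mertenstwo

/-- a system of generalized primes satisfying Chebyshev and Mertens bounds -/
structure MS (ι : Type*) where
  n : ι → ℝ
  S : ℝ → Finset ι
  hn : ∀ i, 2 ≤ n i
  hS : ∀ x i, i ∈ S x ↔ n i ≤ x
  C0 : ℝ
  hC0 : 0 ≤ C0
  hM : ∀ x : ℝ, 1 ≤ x → |∑ i ∈ S x, Real.log (n i) / n i - Real.log x| ≤ C0
  hCh : ∀ t : ℝ, 0 < t → ∑ i ∈ S t, Real.log (n i) ≤ C0 * t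

namespace MS
variable {ι : Type*} (s : MS ι)

theorem npos (i : ι) : 0 < s.n i := by linarith [s.hn i]
theorem one_le (i : ι) : 1 ≤ s.n i := by linarith [s.hn i]
theorem log_ge (i : ι) : Real.log 2 ≤ Real.log (s.n i) := Real.log_le_log (by norm_num) (s.hn i)
theorem log_pos (i : ι) : 0 < Real.log (s.n i) := Real.log_pos (by linarith [s.hn i])

theorem mono {x y : ℝ} (h : x ≤ y) : s.S x ⊆ s.S y := by
  intro i hi; rw [s.hS] at *; linarith

theorem summable_log : Summable fun i => Real.log (s.n i) * s.n i ^ (-(3/2) : ℝ) :=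
  dyadic_summable s.n s.one_le s.S s.hS (fun i => Real.log (s.n i)) (fun i => (s.log_pos i).le) s.C0 s.hCh _ (by norm_num)

theorem summable_n : Summable fun i => s.n i ^ (-(3/2) : ℝ) := by
  have hl : 0 < Real.log 2 := Real.log_pos (by norm_num)
  refine Summable.of_nonneg_of_le (fun i => by have := s.npos i; positivity) (fun i => ?_) (s.summable_log.mul_left (Real.log 2)⁻¹)
  have := s.log_ge i
  have h2 : 0 ≤ s.n i ^ (-(3/2) : ℝ) := by have := s.npos i; positivity
  rw [← mul_assoc, inv_mul_eq_div]
  refine le_mul_of_one_le_left h2 ?_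
  rwa [one_le_div hl]

theorem inv_sq_le (i : ι) : 1 / s.n i ^ 2 ≤ s.n i ^ (-(3/2) : ℝ) := by
  rw [one_div, ← Real.rpow_natCast, ← Real.rpow_neg (s.npos i).le]
  exact Real.rpow_le_rpow_of_exponent_le (s.one_le i) (by norm_num)

theorem summable_of_le {v : ι → ℝ} (hv0 : ∀ i, 0 ≤ v i) (hv : ∀ i, v i ≤ 1 / s.n i ^ 2) : Summable v :=
  Summable.of_nonneg_of_le hv0 (fun i => (hv i).trans (s.inv_sq_le i)) s.summable_n

theorem tail_bound : ∃ C : ℝ, 0 ≤ C ∧ ∀ v : ι → ℝ, (∀ i, 0 ≤ v i) → (∀ i, v i ≤ 1 / s.n i ^ 2) →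
    ∀ y : ℝ, 2 ≤ y → |∑ i ∈ s.S y, v i - ∑' i, v i| ≤ C / Real.log y := by
  classical
  have hnn : ∀ i, 0 ≤ s.n i ^ (-(3/2) : ℝ) := fun i => by have := s.npos i; positivity
  have hM0 : 0 ≤ ∑' i, s.n i ^ (-(3/2) : ℝ) := tsum_nonneg hnn
  set M := ∑' i, s.n i ^ (-(3/2) : ℝ)
  refine ⟨2 * M, by positivity, fun v hv0 hv y hy => ?_⟩
  have hsum := s.summable_of_le hv0 hv
  have h1 := hsum.sum_le_tsum (s.S y) (fun i _ => hv0 i)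
  rw [abs_of_nonpos (by linarith)]
  have hy0 : 0 < y := by linarith
  have hlog : 0 < Real.log y := Real.log_pos (by linarith)
  have h2 : ∑' i, v i ≤ ∑ i ∈ s.S y, v i + y ^ (-(1/2) : ℝ) * M := by
    refine hsum.tsum_le_of_sum_le fun T => ?_
    have : ∀ i ∈ T, v i ≤ (if i ∈ s.S y then v i else 0) + y ^ (-(1/2) : ℝ) * s.n i ^ (-(3/2) : ℝ) := by
      intro i _
      split_ifs with h
      · have := hnn i
        have : 0 ≤ y ^ (-(1/2) : ℝ) * s.n i ^ (-(3/2) : ℝ) := by positivity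
        linarith
      · rw [s.hS, not_le] at h
        rw [zero_add]
        refine (hv i).trans ?_
        have e : 1 / s.n i ^ 2 = s.n i ^ (-(1/2) : ℝ) * s.n i ^ (-(3/2) : ℝ) := by
          rw [one_div, ← Real.rpow_natCast, ← Real.rpow_neg (s.npos i).le, ← Real.rpow_add (s.npos i)]
          norm_num
        rw [e]
        refine mul_le_mul_of_nonneg_right ?_ (hnn i)
        exact Real.rpow_le_rpow_of_nonpos hy0 h.le (by norm_num)
    refine (Finset.sum_le_sum this).trans ?_
    rw [Finset.sum_add_distrib, ← Finset.mul_sum]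
    refine add_le_add ?_ (mul_le_mul_of_nonneg_left (s.summable_n.sum_le_tsum T fun i _ => hnn i) (by positivity))
    rw [← Finset.sum_filter]
    refine Finset.sum_le_sum_of_subset_of_nonneg ?_ fun i _ _ => hv0 i
    intro i hi; exact (Finset.mem_filter.1 hi).2
  have h3 : y ^ (-(1/2) : ℝ) ≤ 2 / Real.log y := by
    have := Real.log_le_rpow_div hy0.le (ε := 1/2) (by norm_num)
    rw [Real.rpow_neg hy0.le, le_div_iff₀ hlog]
    have h4 : 0 < y ^ (1/2 : ℝ) := by positivity
    rw [inv_mul_le_iff₀ h4]; linarith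
  have h5 := mul_le_mul_of_nonneg_right h3 hM0
  have h6 : 2 / Real.log y * M = 2 * M / Real.log y := by ring
  linarith

theorem P_diff (y x : ℝ) (hy : 2 ≤ y) (hyx : y ≤ x) :
    |(∑ i ∈ s.S x, 1 / s.n i - Real.log (Real.log x)) - (∑ i ∈ s.S y, 1 / s.n i - Real.log (Real.log y))|
      ≤ 6 * s.C0 / Real.log y := by
  classical
  have hlogp : ∀ t ∈ Set.Icc y x, 0 < Real.log t := fun t ht => Real.log_pos (by linarith [ht.1])
  have := abel_bound s.n s.S s.hS (fun i => Real.log (s.n i) / s.n i) s.C0 s.hM y x (by linarith) hyx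
    (fun t => (Real.log t)⁻¹) (fun t => -(t⁻¹) / Real.log t ^ 2) (fun t => Real.log (Real.log t)) ?_ ?_ ?_ ?_
  · have e : ∑ i ∈ s.S x \ s.S y, Real.log (s.n i) / s.n i * (Real.log (s.n i))⁻¹ =
        ∑ i ∈ s.S x, 1 / s.n i - ∑ i ∈ s.S y, 1 / s.n i := by
      rw [← Finset.sum_sdiff (s.mono hyx), add_sub_cancel_right]
      refine Finset.sum_congr rfl fun i _ => ?_
      have := s.log_pos i
      field_simp
    rw [e] at this
    have e2 : (∑ i ∈ s.S x, 1 / s.n i - Real.log (Real.log x)) - (∑ i ∈ s.S y, 1 / s.n i - Real.log (Real.log y))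
      = ∑ i ∈ s.S x, 1 / s.n i - ∑ i ∈ s.S y, 1 / s.n i - (Real.log (Real.log x) - Real.log (Real.log y)) := by ring
    rw [e2]
    refine this.trans ?_
    have hy1 := hlogp y ⟨le_rfl, hyx⟩
    have hx1 := hlogp x ⟨hyx, le_rfl⟩
    rw [abs_of_pos (inv_pos.2 hy1), abs_of_pos (inv_pos.2 hx1)]
    have : (Real.log x)⁻¹ ≤ (Real.log y)⁻¹ := inv_anti₀ hy1 (Real.log_le_log (by linarith) hyx)
    have h0 := s.hC0
    calc _ ≤ 2 * s.C0 * ((Real.log y)⁻¹ + 2 * (Real.log y)⁻¹) := by gcongr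
      _ = _ := by ring
  · intro t ht
    have h0 : t ≠ 0 := by linarith [ht.1]
    exact (Real.hasDerivAt_log h0).inv (hlogp t ht).ne'
  · intro t ht
    have h0 : t ≠ 0 := by linarith [ht.1]
    have h1 := (hlogp t ht).ne'
    refine ContinuousAt.continuousWithinAt ?_
    have h2 := Real.continuousAt_log h0
    exact ((continuousAt_id.inv₀ h0).neg).div (h2.pow 2) (pow_ne_zero 2 h1)
  · intro t ht
    have h0 : 0 < t := by linarith [ht.1]
    have h1 := (hlogp t ht)
    rw [neg_div]
    have : 0 ≤ t⁻¹ / Real.log t ^ 2 := by positivity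
    linarith
  · intro t ht
    have h0 : t ≠ 0 := by linarith [ht.1]
    refine ((Real.hasDerivAt_log h0).log (hlogp t ht).ne').congr_deriv ?_
    field_simp

theorem P_asym (A : ℝ) (hA : Tendsto (fun x : ℝ => ∑ i ∈ s.S x, 1 / s.n i - Real.log (Real.log x)) atTop (𝓝 A)) :
    ∀ y : ℝ, 2 ≤ y → |∑ i ∈ s.S y, 1 / s.n i - Real.log (Real.log y) - A| ≤ 6 * s.C0 / Real.log y := by
  intro y hy
  rw [abs_sub_comm]
  refine le_of_tendsto ((hA.sub_const _).abs) ?_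
  filter_upwards [eventually_ge_atTop y] with x hx using s.P_diff y x hy hx

theorem Q_asym (A : ℝ) (hA : Tendsto (fun x : ℝ => ∑ i ∈ s.S x, 1 / s.n i - Real.log (Real.log x)) atTop (𝓝 A))
    (a β : ι → ℝ) (ha : ∀ i, a i = 1 / s.n i - β i) (hβ0 : ∀ i, 0 ≤ β i) (hβ : ∀ i, β i ≤ 1 / s.n i ^ 2) :
    ∃ C : ℝ, 0 ≤ C ∧ ∀ y : ℝ, 2 ≤ y → |∑ i ∈ s.S y, a i - Real.log (Real.log y) - (A - ∑' i, β i)| ≤ C / Real.log y := by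
  obtain ⟨C, hC, ht⟩ := s.tail_bound
  have h0 := s.hC0
  refine ⟨6 * s.C0 + C, by positivity, fun y hy => ?_⟩
  have h1 := s.P_asym A hA y hy
  have h2 := ht β hβ0 hβ y hy
  simp_rw [ha]
  rw [Finset.sum_sub_distrib]
  have e : ∑ i ∈ s.S y, 1 / s.n i - ∑ i ∈ s.S y, β i - Real.log (Real.log y) - (A - ∑' i, β i) =
    (∑ i ∈ s.S y, 1 / s.n i - Real.log (Real.log y) - A) - (∑ i ∈ s.S y, β i - ∑' i, β i) := by ring
  rw [e, add_div]
  exact (abs_sub _ _).trans (add_le_add h1 h2)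

theorem err_one (θ : ℝ) (hθ0 : 0 ≤ θ) (hθ : θ < 1) : ∃ C : ℝ, 0 ≤ C ∧ ∀ x : ℝ, 1 < x →
    ∑ i ∈ s.S x, (x / s.n i) ^ θ ≤ C * (x / Real.log x) := by
  obtain ⟨C1, hC1, h1⟩ := dyadic_sum s.n s.one_le s.S s.hS (fun i => Real.log (s.n i)) (fun i => (s.log_pos i).le) s.C0 s.hCh θ hθ0 hθ
  set ε := (1 - θ) / 2 with hε
  have hε0 : 0 < ε := by rw [hε]; linarith
  obtain ⟨C2, hC2, h2⟩ := dyadic_sum s.n s.one_le s.S s.hS (fun i => Real.log (s.n i)) (fun i => (s.log_pos i).le) s.C0 s.hCh (θ + ε) (by linarith) (by rw [hε]; linarith)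
  have hl : 0 < Real.log 2 := Real.log_pos (by norm_num)
  refine ⟨C1 + C2 / (ε * Real.log 2), by positivity, fun x hx => ?_⟩
  have hL : 0 < Real.log x := Real.log_pos hx
  have hx0 : 0 < x := by linarith
  rw [← mul_div_assoc, le_div_iff₀ hL, Finset.sum_mul, add_mul]
  have h3 := h1 x hx0
  have h4 := div_le_div_of_nonneg_right (h2 x hx0) (by positivity : 0 ≤ ε * Real.log 2)
  refine le_trans ?_ (add_le_add h3 (h4.trans (le_of_eq (by ring))))
  rw [Finset.sum_div, ← Finset.sum_add_distrib]
  refine Finset.sum_le_sum fun i hi => ?_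
  have hni := s.npos i
  rw [s.hS] at hi
  have hz : 0 < x / s.n i := by positivity
  have e : Real.log x = Real.log (s.n i) + Real.log (x / s.n i) := by
    rw [Real.log_div hx0.ne' hni.ne']; ring
  have h5 := Real.log_le_rpow_div hz.le hε0
  rw [Real.rpow_add hz, e, mul_add]
  have h6 : 0 < (x / s.n i) ^ θ := by positivity
  have h7 := mul_le_mul_of_nonneg_left h5 h6.le
  have h8 : (x / s.n i) ^ θ * ((x / s.n i) ^ ε / ε) ≤ Real.log (s.n i) * ((x / s.n i) ^ θ * (x / s.n i) ^ ε) / (ε * Real.log 2) := by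
    rw [← mul_div_assoc, div_le_div_iff₀ hε0 (by positivity)]
    have h9 : 0 < (x / s.n i) ^ ε := by positivity
    have := mul_le_mul_of_nonneg_left (s.log_ge i) (by positivity : 0 ≤ (x / s.n i) ^ θ * (x / s.n i) ^ ε * ε)
    linarith
  linarith

end MS
end mertenstwo

section dilogsec

/-- dilogarithm -/
def Li2 (x : ℝ) : ℝ := ∑' n : ℕ, x ^ (n + 1) / ((n : ℝ) + 1) ^ 2

theorem hasSum_basel : HasSum (fun n : ℕ => 1 / ((n : ℝ) + 1) ^ 2) (Real.pi ^ 2 / 6) := by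
  have := (hasSum_nat_add_iff' 1).2 hasSum_zeta_two
  simpa using this

theorem Li2_one : Li2 1 = Real.pi ^ 2 / 6 := by
  unfold Li2; simpa using hasSum_basel.tsum_eq

theorem Li2_zero : Li2 0 = 0 := by
  unfold Li2; simp

theorem Li2_cont : ContinuousOn Li2 (Set.Icc 0 1) := by
  unfold Li2
  refine continuousOn_tsum (fun n => by fun_prop) hasSum_basel.summable ?_
  intro n x hx
  rw [norm_div, norm_pow, Real.norm_of_nonneg hx.1, Real.norm_of_nonneg (by positivity)]
  gcongr
  exact pow_le_one₀ hx.1 hx.2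

theorem Li2_bound {u : ℝ} (h0 : 0 ≤ u) (h1 : u ≤ 1) : 0 ≤ Li2 u ∧ Li2 u ≤ u * (Real.pi ^ 2 / 6) := by
  unfold Li2
  refine ⟨tsum_nonneg fun n => by positivity, ?_⟩
  have hle : ∀ n : ℕ, u ^ (n + 1) / ((n : ℝ) + 1) ^ 2 ≤ u * (1 / ((n : ℝ) + 1) ^ 2) := by
    intro n
    rw [← mul_div_assoc, mul_one]
    gcongr
    rw [pow_succ]
    exact mul_le_of_le_one_left h0 (pow_le_one₀ h0 h1)
  have hs := hasSum_basel.mul_left u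
  rw [← hs.tsum_eq]
  refine Summable.tsum_le_tsum hle ?_ hs.summable
  exact Summable.of_nonneg_of_le (fun n => by positivity) hle hs.summable

theorem Li2_deriv {u : ℝ} (h0 : 0 < u) (h1 : u < 1) : HasDerivAt Li2 (-Real.log (1 - u) / u) u := by
  obtain ⟨r, hr1, hr2⟩ := exists_between h1
  have hr0 : 0 < r := h0.trans hr1
  have := hasDerivAt_tsum_of_isPreconnected (𝕜 := ℝ) (g := fun (n : ℕ) (x : ℝ) => x ^ (n + 1) / ((n : ℝ) + 1) ^ 2)
    (g' := fun n x => x ^ n / ((n : ℝ) + 1)) (u := fun n => r ^ n) (t := Set.Ioo 0 r) (y₀ := u) (y := u)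
    (summable_geometric_of_lt_one hr0.le hr2) isOpen_Ioo isPreconnected_Ioo ?_ ?_ ⟨h0, hr1⟩ ?_ ⟨h0, hr1⟩
  · have h2 := Real.hasSum_pow_div_log_of_abs_lt_one (x := u) (by rw [abs_of_pos h0]; exact h1)
    have h3 : ∑' n : ℕ, u ^ n / ((n : ℝ) + 1) = -Real.log (1 - u) / u := by
      have := (h2.div_const u).tsum_eq
      rw [← this]
      refine tsum_congr fun n => ?_
      rw [pow_succ]; field_simp
    rw [h3] at this
    exact this
  · intro n y _
    have h := (hasDerivAt_pow (n + 1) y).div_const (((n : ℝ) + 1) ^ 2)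
    refine h.congr_deriv ?_
    have : (n : ℝ) + 1 ≠ 0 := by positivity
    push_cast
    field_simp
  · intro n y hy
    rw [Real.norm_of_nonneg (by have := hy.1; positivity)]
    have h2 : y ^ n ≤ r ^ n := pow_le_pow_left₀ hy.1.le hy.2.le n
    have h3 : y ^ n / ((n : ℝ) + 1) ≤ y ^ n := div_le_self (by have := hy.1; positivity) (by simp)
    linarith
  · refine Summable.of_nonneg_of_le (fun n => by positivity) (fun n => ?_) hasSum_basel.summable
    gcongr
    exact pow_le_one₀ h0.le h1.le

theorem log_one_sub_bound {u : ℝ} (h0 : 0 ≤ u) (h1 : u ≤ 1 / 2) : |Real.log (1 - u)| ≤ 2 * u := by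
  have h2 := Real.one_sub_inv_le_log_of_pos (x := 1 - u) (by linarith)
  have h3 : Real.log (1 - u) ≤ 0 := Real.log_nonpos (by linarith) (by linarith)
  rw [abs_of_nonpos h3]
  have h4 : (1 - u)⁻¹ ≤ 1 + 2 * u := by
    rw [inv_le_iff_one_le_mul₀ (by linarith)]; nlinarith
  linarith

theorem Li2_half : 2 * Li2 (1 / 2) + Real.log 2 ^ 2 = Real.pi ^ 2 / 6 := by
  set H := fun x : ℝ => Li2 x + Li2 (1 - x) + Real.log x * Real.log (1 - x) with hH
  have hd : ∀ x ∈ Set.Ioo (0 : ℝ) 1, HasDerivAt H 0 x := by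
    intro x hx
    have h1 := Li2_deriv hx.1 hx.2
    have h2 : HasDerivAt (fun x : ℝ => 1 - x) (-1) x := (hasDerivAt_id x).const_sub 1
    have h3 := (Li2_deriv (u := 1 - x) (by linarith [hx.2]) (by linarith [hx.1])).comp x h2
    have hx2 : 1 - x ≠ 0 := by linarith [hx.2]
    have h4 := (Real.hasDerivAt_log hx.1.ne').mul (h2.log hx2)
    refine ((h1.add h3).add h4).congr_deriv ?_
    have := hx.1.ne'
    simp only [sub_sub_cancel]
    field_simp
    ring
  have hconst : ∀ x ∈ Set.Ioo (0 : ℝ) 1, H x = H (1 / 2) := by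
    intro x hx
    refine isOpen_Ioo.is_const_of_deriv_eq_zero isPreconnected_Ioo
      (fun y hy => (hd y hy).differentiableAt.differentiableWithinAt) (fun y hy => (hd y hy).deriv) hx ⟨by norm_num, by norm_num⟩
  have hlim : Tendsto H (𝓝[>] 0) (𝓝 (0 + Real.pi ^ 2 / 6 + 0)) := by
    have hmem : Set.Ioo (0 : ℝ) (1 / 2) ∈ 𝓝[>] (0 : ℝ) := Ioo_mem_nhdsGT (by norm_num)
    have hid : Tendsto (fun x : ℝ => x) (𝓝[>] 0) (𝓝[Set.Icc 0 1] 0) := by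
      refine tendsto_nhdsWithin_iff.2 ⟨tendsto_nhdsWithin_of_tendsto_nhds tendsto_id, ?_⟩
      filter_upwards [hmem] with x hx using ⟨hx.1.le, by linarith [hx.2]⟩
    have hid2 : Tendsto (fun x : ℝ => 1 - x) (𝓝[>] 0) (𝓝[Set.Icc 0 1] 1) := by
      refine tendsto_nhdsWithin_iff.2 ⟨tendsto_nhdsWithin_of_tendsto_nhds ?_, ?_⟩
      · have : ContinuousAt (fun x : ℝ => 1 - x) 0 := by fun_prop
        simpa [ContinuousAt] using this
      · filter_upwards [hmem] with x hx using ⟨by linarith [hx.2], by linarith [hx.1]⟩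
    refine (Tendsto.add (Tendsto.add ?_ ?_) ?_)
    · have := (Li2_cont 0 ⟨le_rfl, zero_le_one⟩).tendsto.comp hid
      rwa [Li2_zero] at this
    · have := (Li2_cont 1 ⟨zero_le_one, le_rfl⟩).tendsto.comp hid2
      rwa [Li2_one] at this
    · have h1 := (tendsto_log_mul_rpow_nhdsGT_zero zero_lt_one).abs.const_mul 2
      simp only [Real.rpow_one, abs_zero, mul_zero] at h1
      refine squeeze_zero_norm' ?_ h1
      filter_upwards [hmem] with x hx
      have := log_one_sub_bound hx.1.le hx.2.le
      rw [norm_mul, Real.norm_eq_abs, Real.norm_eq_abs, abs_mul, abs_of_pos hx.1]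
      nlinarith [abs_nonneg (Real.log x)]
  have hlim2 : Tendsto H (𝓝[>] 0) (𝓝 (H (1 / 2))) := by
    refine tendsto_const_nhds.congr' ?_
    filter_upwards [Ioo_mem_nhdsGT (zero_lt_one : (0 : ℝ) < 1)] with x hx using (hconst x hx).symm
  have := tendsto_nhds_unique hlim2 hlim
  simp only [hH] at this
  have e : Real.log (1 / 2) = -Real.log 2 := by rw [one_div, Real.log_inv]
  norm_num at this
  rw [one_div] at *
  rw [Real.log_inv] at *
  linarith

end dilogsec

section hypersec
namespace MS
variable {ι : Type*} (s : MS ι)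

theorem one_lt_log_four : 1 < Real.log 4 := by
  have h : (4 : ℝ) = 2 ^ 2 := by norm_num
  rw [h, Real.log_pow]; push_cast
  have := Real.log_two_gt_d9; linarith

theorem T_asym_one : ∃ C : ℝ, 0 ≤ C ∧ ∀ x : ℝ, 4 ≤ x →
    |∑ i ∈ s.S (Real.sqrt x), 1 / s.n i * Real.log (1 - Real.log (s.n i) / Real.log x) + Li2 (1 / 2)| ≤ C / Real.log x := by
  classical
  have h0 := s.hC0
  refine ⟨2 * s.C0 * 10 + Real.pi ^ 2 / 6, by positivity, fun x hx => ?_⟩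
  have hx0 : 0 < x := by linarith
  set L := Real.log x with hL
  have hL1 : 1 < L := one_lt_log_four.trans_le (Real.log_le_log (by norm_num) hx)
  have hL0 : 0 < L := by linarith
  have hr2 : 2 ≤ Real.sqrt x := by
    rw [Real.le_sqrt (by norm_num) hx0.le]; linarith
  have hlr : Real.log (Real.sqrt x) = L / 2 := by rw [Real.log_sqrt hx0.le]
  have hlog : ∀ t ∈ Set.Icc (3/2 : ℝ) (Real.sqrt x), 0 < t ∧ 0 < Real.log t ∧ 0 < Real.log t / L ∧ Real.log t / L ≤ 1 / 2 := by
    intro t ht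
    have h1 : 0 < t := by linarith [ht.1]
    have h2 : 0 < Real.log t := Real.log_pos (by linarith [ht.1])
    have h3 : Real.log t ≤ L / 2 := by rw [← hlr]; exact Real.log_le_log h1 ht.2
    refine ⟨h1, h2, by positivity, ?_⟩
    rw [div_le_iff₀ hL0]; linarith
  have := abel_bound s.n s.S s.hS (fun i => Real.log (s.n i) / s.n i) s.C0 s.hM (3/2) (Real.sqrt x) (by norm_num) (by linarith)
    (fun t => Real.log (1 - Real.log t / L) / Real.log t)
    (fun t => ((-(t⁻¹ / L)) / (1 - Real.log t / L) * Real.log t - Real.log (1 - Real.log t / L) * t⁻¹) / (Real.log t) ^ 2)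
    (fun t => -Li2 (Real.log t / L)) ?_ ?_ ?_ ?_
  · have e0 : s.S (3/2) = ∅ := by
      rw [Finset.eq_empty_iff_forall_notMem]
      intro i hi; rw [s.hS] at hi; linarith [s.hn i]
    have e : ∑ i ∈ s.S (Real.sqrt x) \ s.S (3/2), Real.log (s.n i) / s.n i * (Real.log (1 - Real.log (s.n i) / L) / Real.log (s.n i))
      = ∑ i ∈ s.S (Real.sqrt x), 1 / s.n i * Real.log (1 - Real.log (s.n i) / L) := by
      rw [e0, Finset.sdiff_empty]
      refine Finset.sum_congr rfl fun i _ => ?_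
      have := s.log_pos i
      field_simp
    rw [e, hlr] at this
    have e2 : L / 2 / L = 1 / 2 := by field_simp
    rw [e2] at this
    set Sm := ∑ i ∈ s.S (Real.sqrt x), 1 / s.n i * Real.log (1 - Real.log (s.n i) / L)
    obtain ⟨_, b2, b3, b4⟩ := hlog (3/2) ⟨le_rfl, by linarith⟩
    have b5 := log_one_sub_bound b3.le b4
    have f1 : |Real.log (1 - Real.log (3/2) / L) / Real.log (3/2)| ≤ 2 / L := by
      rw [abs_div, abs_of_pos b2, div_le_iff₀ b2]
      calc _ ≤ _ := b5
        _ = _ := by ring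
    have f2 : |Real.log (1 - 1 / 2) / (L / 2)| ≤ 4 / L := by
      have := log_one_sub_bound (u := 1/2) (by norm_num) le_rfl
      rw [abs_div, abs_of_pos (by positivity : 0 < L / 2), div_le_div_iff₀ (by positivity) hL0]
      nlinarith
    have f3 := Li2_bound b3.le (by linarith)
    have f4 : Real.log (3/2) / L ≤ 1 / L := by
      gcongr
      have := Real.log_le_sub_one_of_pos (x := 3/2) (by norm_num)
      linarith
    have f5 : Real.log (3/2) / L * (Real.pi ^ 2 / 6) ≤ (Real.pi ^ 2 / 6) / L := by
      calc _ ≤ 1 / L * (Real.pi ^ 2 / 6) := by gcongr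
        _ = _ := by ring
    have e3 : Sm + Li2 (1 / 2) = (Sm - (-Li2 (1 / 2) - -Li2 (Real.log (3 / 2) / L))) + Li2 (Real.log (3 / 2) / L) := by ring
    rw [e3]
    refine (abs_add_le _ _).trans ?_
    rw [abs_of_nonneg f3.1, add_div]
    refine add_le_add (this.trans ?_) (f3.2.trans f5)
    calc _ ≤ 2 * s.C0 * (2 / L + 2 * (4 / L)) := by gcongr
      _ = _ := by ring
  · intro t ht
    obtain ⟨h1, h2, h3, h4⟩ := hlog t ht
    have hd := Real.hasDerivAt_log h1.ne'
    have hne : 1 - Real.log t / L ≠ 0 := by linarith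
    exact (((hd.div_const L).const_sub 1).log hne).div hd h2.ne'
  · intro t ht
    obtain ⟨h1, h2, h3, h4⟩ := hlog t ht
    have hne : 1 - Real.log t / L ≠ 0 := by linarith
    refine ContinuousAt.continuousWithinAt ?_
    have hc := Real.continuousAt_log h1.ne'
    have hc2 : ContinuousAt (fun t => 1 - Real.log t / L) t := continuousAt_const.sub (hc.div_const L)
    have hi : ContinuousAt (fun t : ℝ => t⁻¹) t := continuousAt_id.inv₀ h1.ne'
    exact ((((hi.div_const L).neg.div hc2 hne).mul hc).sub ((hc2.log hne).mul hi)).div (hc.pow 2) (pow_ne_zero 2 h2.ne')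
  · intro t ht
    obtain ⟨h1, h2, h3, h4⟩ := hlog t ht
    refine div_nonpos_of_nonpos_of_nonneg ?_ (by positivity)
    have hp : 0 < 1 - Real.log t / L := by linarith
    have h5 := Real.one_sub_inv_le_log_of_pos hp
    have e : -(t⁻¹ / L) / (1 - Real.log t / L) * Real.log t = t⁻¹ * (1 - (1 - Real.log t / L)⁻¹) := by
      have hp' := hp.ne'
      have e1 : 1 - (1 - Real.log t / L)⁻¹ = -(Real.log t / L) * (1 - Real.log t / L)⁻¹ := by
        have : (1 - Real.log t / L) * (1 - Real.log t / L)⁻¹ = 1 := mul_inv_cancel₀ hp'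
        linarith
      rw [e1, div_eq_mul_inv (-(t⁻¹ / L))]
      ring
    rw [e]
    have h6 : 0 < t⁻¹ := by positivity
    nlinarith
  · intro t ht
    obtain ⟨h1, h2, h3, h4⟩ := hlog t ht
    have hd := (Real.hasDerivAt_log h1.ne').div_const L
    have := ((Li2_deriv h3 (by linarith)).comp t hd).neg
    refine this.congr_deriv ?_
    field_simp

theorem T_asym (a β : ι → ℝ) (ha : ∀ i, a i = 1 / s.n i - β i) (hβ0 : ∀ i, 0 ≤ β i) (hβ : ∀ i, β i ≤ 1 / s.n i ^ 2) :
    ∃ C : ℝ, 0 ≤ C ∧ ∀ x : ℝ, 4 ≤ x →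
    |∑ i ∈ s.S (Real.sqrt x), a i * Real.log (1 - Real.log (s.n i) / Real.log x) + Li2 (1 / 2)| ≤ C / Real.log x := by
  obtain ⟨C, hC, h1⟩ := s.T_asym_one
  have hnn : ∀ i, 0 ≤ Real.log (s.n i) * s.n i ^ (-(3/2) : ℝ) := fun i => by
    have := s.npos i; have := s.log_pos i; positivity
  have hM0 : 0 ≤ ∑' i, Real.log (s.n i) * s.n i ^ (-(3/2) : ℝ) := tsum_nonneg hnn
  set M := ∑' i, Real.log (s.n i) * s.n i ^ (-(3/2) : ℝ) with hM
  refine ⟨C + 2 * M, by positivity, fun x hx => ?_⟩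
  have hx0 : 0 < x := by linarith
  have h2 := h1 x hx
  have hL1 : 1 < Real.log x := one_lt_log_four.trans_le (Real.log_le_log (by norm_num) hx)
  set L := Real.log x with hL
  have hL0 : 0 < L := by linarith
  have hlr : Real.log (Real.sqrt x) = L / 2 := by rw [Real.log_sqrt hx0.le]
  have e : ∑ i ∈ s.S (Real.sqrt x), a i * Real.log (1 - Real.log (s.n i) / L) + Li2 (1 / 2) =
    (∑ i ∈ s.S (Real.sqrt x), 1 / s.n i * Real.log (1 - Real.log (s.n i) / L) + Li2 (1 / 2)) -
      ∑ i ∈ s.S (Real.sqrt x), β i * Real.log (1 - Real.log (s.n i) / L) := by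
    simp_rw [ha, sub_mul]
    rw [Finset.sum_sub_distrib]; ring
  rw [e, add_div]
  refine (abs_sub _ _).trans (add_le_add h2 ?_)
  refine (Finset.abs_sum_le_sum_abs _ _).trans ?_
  have h3 : ∀ i ∈ s.S (Real.sqrt x), |β i * Real.log (1 - Real.log (s.n i) / L)| ≤ 2 / L * (Real.log (s.n i) * s.n i ^ (-(3/2) : ℝ)) := by
    intro i hi
    rw [s.hS] at hi
    have hl := s.log_pos i
    have h4 : Real.log (s.n i) / L ≤ 1 / 2 := by
      rw [div_le_iff₀ hL0]
      have := Real.log_le_log (s.npos i) hi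
      linarith
    have h5 := log_one_sub_bound (by positivity : 0 ≤ Real.log (s.n i) / L) h4
    have h6 := (hβ i).trans (s.inv_sq_le i)
    rw [abs_mul, abs_of_nonneg (hβ0 i)]
    calc _ ≤ s.n i ^ (-(3/2) : ℝ) * (2 * (Real.log (s.n i) / L)) := by
          have := s.npos i
          gcongr
      _ = _ := by ring
  refine (Finset.sum_le_sum h3).trans ?_
  rw [← Finset.mul_sum]
  have := s.summable_log.sum_le_tsum (s.S (Real.sqrt x)) (fun i _ => hnn i)
  calc _ ≤ 2 / L * M := by gcongr
    _ = _ := by ring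

theorem hyper (F : ι → ι → ℝ) (hF : ∀ i j, F i j = F j i) (x : ℝ) (hx : 1 ≤ x) :
    ∑ i ∈ s.S x, ∑ j ∈ s.S (x / s.n i), F i j = 2 * ∑ i ∈ s.S (Real.sqrt x), ∑ j ∈ s.S (x / s.n i), F i j -
      ∑ i ∈ s.S (Real.sqrt x), ∑ j ∈ s.S (Real.sqrt x), F i j := by
  classical
  have hx0 : 0 < x := by linarith
  set r := Real.sqrt x with hr
  have hrr : r * r = x := Real.mul_self_sqrt hx0.le
  have hr0 : 0 ≤ r := Real.sqrt_nonneg x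
  have hrx : r ≤ x := by nlinarith
  have e1 : ∀ i, ∑ j ∈ s.S (x / s.n i), F i j = ∑ j ∈ s.S x, if s.n i * s.n j ≤ x then F i j else 0 := by
    intro i
    rw [← Finset.sum_filter]
    refine Finset.sum_congr ?_ fun _ _ => rfl
    ext j
    have h1 := s.hn i; have h2 := s.hn j
    rw [Finset.mem_filter, s.hS, s.hS, le_div_iff₀ (s.npos i), mul_comm]
    constructor
    · intro H; exact ⟨by nlinarith, H⟩
    · intro H; exact H.2
  have e2 : ∀ G : ι → ℝ, ∑ i ∈ s.S r, G i = ∑ i ∈ s.S x, if s.n i ≤ r then G i else 0 := by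
    intro G
    rw [← Finset.sum_filter]
    refine Finset.sum_congr ?_ fun _ _ => rfl
    ext j
    rw [Finset.mem_filter, s.hS, s.hS]
    constructor
    · intro H; exact ⟨by linarith, H⟩
    · intro H; exact H.2
  have e3 : ∑ i ∈ s.S r, ∑ j ∈ s.S (x / s.n i), F i j = ∑ i ∈ s.S x, ∑ j ∈ s.S x, if s.n i ≤ r ∧ s.n i * s.n j ≤ x then F i j else 0 := by
    rw [e2]
    refine Finset.sum_congr rfl fun i _ => ?_
    rw [e1]
    split_ifs with h <;> simp [h]
  have e4 : ∑ i ∈ s.S r, ∑ j ∈ s.S (x / s.n i), F i j = ∑ i ∈ s.S x, ∑ j ∈ s.S x, if s.n j ≤ r ∧ s.n i * s.n j ≤ x then F i j else 0 := by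
    rw [e3, Finset.sum_comm]
    refine Finset.sum_congr rfl fun i _ => Finset.sum_congr rfl fun j _ => ?_
    rw [mul_comm, hF]
  have e5 : ∑ i ∈ s.S r, ∑ j ∈ s.S r, F i j = ∑ i ∈ s.S x, ∑ j ∈ s.S x, if s.n i ≤ r ∧ s.n j ≤ r then F i j else 0 := by
    rw [e2]
    refine Finset.sum_congr rfl fun i _ => ?_
    rw [e2]
    split_ifs with h <;> simp [h]
  rw [two_mul]
  nth_rewrite 1 [e3]
  rw [e4, e5]
  simp_rw [e1]
  rw [← Finset.sum_add_distrib, ← Finset.sum_sub_distrib]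
  refine Finset.sum_congr rfl fun i _ => ?_
  rw [← Finset.sum_add_distrib, ← Finset.sum_sub_distrib]
  refine Finset.sum_congr rfl fun j _ => ?_
  have h1 := s.npos i; have h2 := s.npos j
  by_cases hi : s.n i ≤ r <;> by_cases hj : s.n j ≤ r
  · have : s.n i * s.n j ≤ x := by nlinarith
    simp [hi, hj, this]
  · simp [hi, hj]
  · simp [hi, hj]
  · have : ¬ s.n i * s.n j ≤ x := by push Not at *; nlinarith
    simp [this, hi]

end MS
end hypersec

section msmain
namespace MS
variable {ι : Type*} (s : MS ι)

theorem geo (x : ℝ) (hx : 4 ≤ x) : 2 ≤ Real.sqrt x ∧ 1 < Real.log x ∧ Real.log (Real.sqrt x) = Real.log x / 2 ∧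
    Real.log (Real.log (Real.sqrt x)) = Real.log (Real.log x) - Real.log 2 ∧
    ∀ i ∈ s.S (Real.sqrt x), Real.sqrt x ≤ x / s.n i ∧ Real.log x / 2 ≤ Real.log (x / s.n i) ∧
      Real.log (Real.log (x / s.n i)) = Real.log (Real.log x) + Real.log (1 - Real.log (s.n i) / Real.log x) := by
  have hx0 : 0 < x := by linarith
  have hr2 : 2 ≤ Real.sqrt x := Real.le_sqrt_of_sq_le (by linarith)
  have hL1 : 1 < Real.log x := one_lt_log_four.trans_le (Real.log_le_log (by norm_num) hx)
  have hlr : Real.log (Real.sqrt x) = Real.log x / 2 := Real.log_sqrt hx0.le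
  refine ⟨hr2, hL1, hlr, ?_, fun i hi => ?_⟩
  · rw [hlr, Real.log_div (by linarith) (by norm_num)]
  · rw [s.hS] at hi
    have hn := s.npos i
    have h1 : Real.sqrt x ≤ x / s.n i := by
      rw [le_div_iff₀ hn]
      calc Real.sqrt x * s.n i ≤ Real.sqrt x * Real.sqrt x := by gcongr
        _ = x := Real.mul_self_sqrt hx0.le
    have h2 : Real.log x / 2 ≤ Real.log (x / s.n i) := by
      rw [← hlr]; exact Real.log_le_log (by linarith) h1
    refine ⟨h1, h2, ?_⟩
    have h3 : Real.log (x / s.n i) = Real.log x * (1 - Real.log (s.n i) / Real.log x) := by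
      rw [Real.log_div hx0.ne' hn.ne']
      field_simp
    have h4 : 0 < Real.log x * (1 - Real.log (s.n i) / Real.log x) := by rw [← h3]; linarith
    have h5 : 0 < 1 - Real.log (s.n i) / Real.log x := by
      by_contra hc
      push Not at hc
      nlinarith
    rw [h3, Real.log_mul (by linarith) h5.ne']

set_option maxHeartbeats 800000 in
theorem M_asym (A : ℝ) (hA : Tendsto (fun x : ℝ => ∑ i ∈ s.S x, 1 / s.n i - Real.log (Real.log x)) atTop (𝓝 A))
    (a β : ι → ℝ) (ha : ∀ i, a i = 1 / s.n i - β i) (hβ0 : ∀ i, 0 ≤ β i) (hβ : ∀ i, β i ≤ 1 / s.n i ^ 2)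
    (ha0 : ∀ i, 0 ≤ a i) :
    ∃ C : ℝ, 0 ≤ C ∧ ∀ x : ℝ, 4 ≤ x → 1 ≤ Real.log (Real.log x) →
      |∑ i ∈ s.S x, ∑ j ∈ s.S (x / s.n i), a i * a j
        - ((Real.log (Real.log x) + (A - ∑' i, β i)) ^ 2 - Real.pi ^ 2 / 6)| ≤ C * (Real.log (Real.log x) / Real.log x) := by
  obtain ⟨Cq, hCq, hq⟩ := s.Q_asym A hA a β ha hβ0 hβ
  obtain ⟨Ct, hCt, ht⟩ := s.T_asym a β ha hβ0 hβ
  set c := A - ∑' i, β i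
  refine ⟨4 * Cq + 4 * Cq ^ 2 + 2 * Ct + 4 * Cq * (2 + |c| + 2 * Cq), by positivity, fun x hx hLL => ?_⟩
  obtain ⟨hr2, hL1, hlr, hllr, hg⟩ := s.geo x hx
  rw [s.hyper (fun i j => a i * a j) (fun i j => mul_comm _ _) x (by linarith)]
  have hq1 := hq _ hr2
  have ht1 := ht x hx
  rw [hllr, hlr] at hq1
  set L := Real.log x with hL
  set LL := Real.log L with hLLd
  set r := Real.sqrt x
  set T := ∑ i ∈ s.S r, a i * Real.log (1 - Real.log (s.n i) / L) with hT
  set Q := ∑ i ∈ s.S r, a i with hQ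
  have hL0 : 0 < L := by linarith
  have eQQ : ∑ i ∈ s.S r, ∑ j ∈ s.S r, a i * a j = Q * Q := by rw [hQ, Finset.sum_mul_sum]
  rw [eQQ]
  simp_rw [← Finset.mul_sum]
  have hQ0 : 0 ≤ Q := Finset.sum_nonneg fun i _ => ha0 i
  set G := ∑ i ∈ s.S r, a i * ∑ j ∈ s.S (x / s.n i), a j with hG
  have hR : |G - ((LL + c) * Q + T)| ≤ 2 * Cq / L * Q := by
    have e : G - ((LL + c) * Q + T) = ∑ i ∈ s.S r, a i * (∑ j ∈ s.S (x / s.n i), a j -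
        (LL + Real.log (1 - Real.log (s.n i) / L)) - c) := by
      rw [hG, hQ, hT, Finset.mul_sum, ← Finset.sum_add_distrib, ← Finset.sum_sub_distrib]
      refine Finset.sum_congr rfl fun i _ => ?_
      ring
    rw [e]
    refine (Finset.abs_sum_le_sum_abs _ _).trans ?_
    rw [hQ, Finset.mul_sum]
    refine Finset.sum_le_sum fun i hi => ?_
    obtain ⟨g1, g2, g3⟩ := hg i hi
    rw [abs_mul, abs_of_nonneg (ha0 i), mul_comm]
    refine mul_le_mul_of_nonneg_right ?_ (ha0 i)
    have := hq (x / s.n i) (by linarith)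
    rw [g3] at this
    refine this.trans ?_
    calc Cq / Real.log (x / s.n i) ≤ Cq / (L / 2) := by gcongr
      _ = 2 * Cq / L := by field_simp
  have hq2 : |Q - (LL - Real.log 2) - c| ≤ 2 * Cq / L := hq1.trans_eq (by field_simp)
  set δ := 1 / L with hδ
  have hδ0 : 0 < δ := by positivity
  have hδ1 : δ ≤ 1 := by rw [hδ, div_le_one hL0]; exact hL1.le
  have w1 : 2 * Cq / L = 2 * Cq * δ := by rw [hδ]; ring
  have w2 : Ct / L = Ct * δ := by rw [hδ]; ring
  have w3 : LL / L = LL * δ := by rw [hδ]; ring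
  rw [w1] at hq2 hR
  rw [w2] at ht1
  rw [w3]
  set e1 := Q - (LL - Real.log 2) - c with he1
  set R := G - ((LL + c) * Q + T) with hRd
  set e2 := T + Li2 (1 / 2) with he2
  have hl2 : Real.log 2 ≤ 1 := by have := Real.log_two_lt_d9; linarith
  have hl20 : 0 ≤ Real.log 2 := Real.log_nonneg (by norm_num)
  have key : 2 * G - Q * Q - ((LL + c) ^ 2 - Real.pi ^ 2 / 6) = 2 * Real.log 2 * e1 - e1 ^ 2 + 2 * e2 + 2 * R := by
    have := Li2_half
    rw [he1, hRd, he2, ← this]; ring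
  rw [key]
  have hQb : Q ≤ LL * (2 + |c| + 2 * Cq) := by
    have : Q = e1 + (LL - Real.log 2) + c := by rw [he1]; ring
    have h1 := le_abs_self e1
    have h2 := le_abs_self c
    have h3 : Cq * δ ≤ Cq := mul_le_of_le_one_right hCq hδ1
    have h4 : 0 ≤ (LL - 1) * (1 + |c| + 2 * Cq) := by
      apply mul_nonneg; linarith; positivity
    have h5 : LL * (2 + |c| + 2 * Cq) = (LL - 1) * (1 + |c| + 2 * Cq) + (LL + 1 + |c| + 2 * Cq) := by ring
    rw [h5]
    linarith
  have b1 : |2 * Real.log 2 * e1| ≤ 4 * Cq * δ := by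
    rw [abs_mul, abs_of_nonneg (by positivity)]
    calc 2 * Real.log 2 * |e1| ≤ 2 * 1 * (2 * Cq * δ) := by gcongr
      _ = 4 * Cq * δ := by ring
  have b2 : |e1 ^ 2| ≤ 4 * Cq ^ 2 * δ := by
    rw [abs_pow]
    calc |e1| ^ 2 ≤ (2 * Cq * δ) ^ 2 := by gcongr
      _ = 4 * Cq ^ 2 * δ * δ := by ring
      _ ≤ 4 * Cq ^ 2 * δ := mul_le_of_le_one_right (by positivity) hδ1
  have b3 : |2 * e2| ≤ 2 * Ct * δ := by
    rw [abs_mul, abs_two]; linarith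
  have b4 : |2 * R| ≤ 4 * Cq * (2 + |c| + 2 * Cq) * (LL * δ) := by
    rw [abs_mul, abs_two]
    have : 2 * Cq * δ * Q ≤ 2 * Cq * δ * (LL * (2 + |c| + 2 * Cq)) := by gcongr
    linarith
  have b5 : (4 * Cq + 4 * Cq ^ 2 + 2 * Ct) * δ ≤ (4 * Cq + 4 * Cq ^ 2 + 2 * Ct) * (LL * δ) := by
    gcongr
    exact le_mul_of_one_le_left hδ0.le hLL
  have t1 := abs_add_le (2 * Real.log 2 * e1 - e1 ^ 2 + 2 * e2) (2 * R)
  have t2 := abs_add_le (2 * Real.log 2 * e1 - e1 ^ 2) (2 * e2)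
  have t3 := abs_sub (2 * Real.log 2 * e1) (e1 ^ 2)
  linarith

theorem err_two (A : ℝ) (hA : Tendsto (fun x : ℝ => ∑ i ∈ s.S x, 1 / s.n i - Real.log (Real.log x)) atTop (𝓝 A))
    (θ : ℝ) (hθ0 : 0 ≤ θ) (hθ : θ < 1) : ∃ C : ℝ, 0 ≤ C ∧ ∀ x : ℝ, 4 ≤ x → 1 ≤ Real.log (Real.log x) →
    ∑ i ∈ s.S x, (x / s.n i) ^ θ + ∑ i ∈ s.S x, ∑ j ∈ s.S (x / s.n i), (x / s.n i / s.n j) ^ θ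
      ≤ C * (x * Real.log (Real.log x) / Real.log x) := by
  obtain ⟨C, hC, h1⟩ := s.err_one θ hθ0 hθ
  have hC0 := s.hC0
  refine ⟨C + 4 * C * (1 + |A| + 12 * s.C0), by positivity, fun x hx hLL => ?_⟩
  have hx0 : 0 < x := by linarith
  obtain ⟨hr2, hL1, hlr, hllr, hg⟩ := s.geo x hx
  have hP := s.P_asym A hA _ hr2
  rw [hllr, hlr] at hP
  rw [s.hyper (fun i j => (x / s.n i / s.n j) ^ θ) (fun i j => by rw [div_right_comm]) x (by linarith)]
  have h2 := h1 x (by linarith)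
  set L := Real.log x with hL
  set LL := Real.log L with hLLd
  set r := Real.sqrt x
  have hL0 : 0 < L := by linarith
  have p1 : 0 ≤ ∑ i ∈ s.S r, ∑ j ∈ s.S r, (x / s.n i / s.n j) ^ θ :=
    Finset.sum_nonneg fun i _ => Finset.sum_nonneg fun j _ => by
      have := s.npos i; have := s.npos j; positivity
  have p2 : ∑ i ∈ s.S r, ∑ j ∈ s.S (x / s.n i), (x / s.n i / s.n j) ^ θ ≤ 2 * C * x / L * ∑ i ∈ s.S r, 1 / s.n i := by
    rw [Finset.mul_sum]
    refine Finset.sum_le_sum fun i hi => ?_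
    obtain ⟨g1, g2, g3⟩ := hg i hi
    have hn := s.npos i
    refine (h1 (x / s.n i) (by linarith)).trans ?_
    calc C * (x / s.n i / Real.log (x / s.n i)) ≤ C * (x / s.n i / (L / 2)) := by gcongr
      _ = _ := by field_simp
  have p3 : ∑ i ∈ s.S r, 1 / s.n i ≤ LL * (1 + |A| + 12 * s.C0) := by
    have q1 := (abs_le.1 hP).2
    have q2 : 6 * s.C0 / (L / 2) ≤ 12 * s.C0 := by
      rw [div_le_iff₀ (by positivity)]; nlinarith
    have hl20 : 0 ≤ Real.log 2 := Real.log_nonneg (by norm_num)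
    have h2 := le_abs_self A
    have h4 : 0 ≤ (LL - 1) * (|A| + 12 * s.C0) := by
      apply mul_nonneg; linarith; positivity
    nlinarith
  have p4 : 2 * C * x / L * ∑ i ∈ s.S r, 1 / s.n i ≤ 2 * C * x / L * (LL * (1 + |A| + 12 * s.C0)) := by
    gcongr
  have p5 : x / L ≤ x * LL / L := by
    gcongr; exact le_mul_of_one_le_right hx0.le hLL
  have p6 := mul_le_mul_of_nonneg_left p5 hC
  have e : 2 * C * x / L * (LL * (1 + |A| + 12 * s.C0)) = 2 * C * (1 + |A| + 12 * s.C0) * (x * LL / L) := by ring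
  rw [e] at p4
  nlinarith

end MS
end msmain

section finalsec
variable (K : Type*) [Field K] [NumberField K]

/-- the system of prime ideals -/
def msK : MS (PK K) where
  n := fun p => nR p.1
  S := Sp K
  hn := two_le_nR
  hS := mem_Sp
  C0 := (cheb_upper K).choose + (mertens_one K).choose
  hC0 := add_nonneg (cheb_upper K).choose_spec.1 (mertens_one K).choose_spec.1
  hM := fun x hx => ((mertens_one K).choose_spec.2 x hx).trans (by linarith [(cheb_upper K).choose_spec.1])
  hCh := fun t ht => ((cheb_upper K).choose_spec.2 t ht).trans
    (mul_le_mul_of_nonneg_right (by linarith [(mertens_one K).choose_spec.1]) ht.le)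

theorem mertens_conv (x : ℝ) :
    (∑ᶠ p ∈ {p : Ideal (𝓞 K) | p.IsPrime ∧ p ≠ ⊥ ∧ (Ideal.absNorm p : ℝ) ≤ x}, 1 / (Ideal.absNorm p : ℝ))
      = ∑ p ∈ Sp K x, 1 / nR p.1 := by
  classical
  have e : {p : Ideal (𝓞 K) | p.IsPrime ∧ p ≠ ⊥ ∧ (Ideal.absNorm p : ℝ) ≤ x} =
      ((Sp K x).map (Function.Embedding.subtype _) : Finset (Ideal (𝓞 K))) := by
    ext p
    simp only [Set.mem_ofPred_eq, Finset.coe_map, Set.mem_image, Finset.mem_coe, mem_Sp]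
    constructor
    · rintro ⟨h1, h2, h3⟩
      exact ⟨⟨p, h1, h2⟩, h3, rfl⟩
    · rintro ⟨q, h1, rfl⟩
      exact ⟨q.2.1, q.2.2, h1⟩
  rw [e, finsum_mem_coe_finset, Finset.sum_map]
  rfl

/-- the correction term -/
def be (h : ℕ) (n : ℝ) : ℝ := (n - 1) / (n * (n ^ h - 1))

theorem be_props (h : ℕ) (hh : 2 ≤ h) (n : ℝ) (hn : 2 ≤ n) :
    al h n = 1 / n - be h n ∧ 0 ≤ be h n ∧ be h n ≤ 1 / n ^ 2 := by
  obtain ⟨k, rfl⟩ : ∃ k, h = k + 2 := ⟨h - 2, by omega⟩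
  have hk : 1 ≤ n ^ k := one_le_pow₀ (by linarith)
  have e : n ^ (k + 2) = n ^ k * n ^ 2 := pow_add _ _ _
  have h1 : n * (n - 1) ≤ n ^ (k + 2) - 1 := by rw [e]; nlinarith
  have h2 : 0 < n ^ (k + 2) - 1 := by nlinarith
  unfold al be
  refine ⟨?_, ?_, ?_⟩
  · have e1 : k + 2 - 1 = k + 1 := by omega
    rw [e1]
    have h3 := h2.ne'
    field_simp
    ring
  · apply div_nonneg; linarith; positivity
  · rw [div_le_div_iff₀ (by positivity) (by positivity)]
    nlinarith

end finalsec

/-- Second moment of `ω` over `h`-free ideals of a number field. -/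
theorem second_moment_omega_hfree_ideals (K : Type*) [Field K] [NumberField K]
    (h : ℕ) (hh : 2 ≤ h) (A : ℝ) (hA : MertensK K A) :
    (fun x : ℝ =>
        (∑ᶠ I ∈ {I : Ideal (𝓞 K) | I ≠ ⊥ ∧ HFreeI h I ∧ (Ideal.absNorm I : ℝ) ≤ x},
            (omegaK I : ℝ) ^ 2)
          - kappaK K / zetaK K h * (x * Real.log (Real.log x) ^ 2)
          - kappaK K * (2 * C1K K h A + 1) / zetaK K h * (x * Real.log (Real.log x))
          - kappaK K * C2K K h A / zetaK K h * x)
      =O[atTop] fun x : ℝ => x * Real.log (Real.log x) / Real.log x := by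
  have hA' : Tendsto (fun x : ℝ => ∑ i ∈ (msK K).S x, 1 / (msK K).n i - Real.log (Real.log x)) atTop (𝓝 A) := by
    refine hA.congr fun x => ?_
    rw [mertens_conv]; rfl
  have ha : ∀ p : PK K, al h (nR p.1) = 1 / (msK K).n p - be h (nR p.1) := fun p => (be_props h hh _ (two_le_nR p)).1
  have hb0 : ∀ p : PK K, 0 ≤ be h (nR p.1) := fun p => (be_props h hh _ (two_le_nR p)).2.1
  have hb : ∀ p : PK K, be h (nR p.1) ≤ 1 / (msK K).n p ^ 2 := fun p => (be_props h hh _ (two_le_nR p)).2.2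
  have ha0 : ∀ p : PK K, 0 ≤ al h (nR p.1) := fun p => al_nonneg h (by linarith [two_le_nR p])
  have ha2 : ∀ p : PK K, al h (nR p.1) ^ 2 ≤ 1 / (msK K).n p ^ 2 := fun p => by
    rw [← one_div_pow]
    exact pow_le_pow_left₀ (ha0 p) (al_le h hh (two_le_nR p)) 2
  obtain ⟨θ, Ce, hθ0, hθ, hCe, hexp⟩ := expansion K h hh
  obtain ⟨Cm, hCm, hm⟩ := (msK K).M_asym A hA' _ _ ha hb0 hb ha0
  obtain ⟨Cq, hCq, hq⟩ := (msK K).Q_asym A hA' _ _ ha hb0 hb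
  obtain ⟨Ct, hCt, ht⟩ := (msK K).tail_bound
  obtain ⟨C2, hC2, h2⟩ := (msK K).err_two A hA' θ (by linarith) hθ
  have ht' := ht (fun p => al h (nR p.1) ^ 2) (fun p => by positivity) ha2
  have hc1 : C1K K h A = A - ∑' p : PK K, be h (nR p.1) := rfl
  have hc2 : C2K K h A = C1K K h A ^ 2 + C1K K h A + -(Real.pi ^ 2) / 6 - ∑' p : PK K, al h (nR p.1) ^ 2 := rfl
  rw [← hc1] at hm hq
  have hκ := kappa_pos K
  have hz := one_le_zeta K h hh
  have hc0 : 0 < kappaK K / zetaK K h := by positivity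
  have hz0 : zetaK K h ≠ 0 := by linarith
  have hLLev : ∀ᶠ x : ℝ in atTop, 1 ≤ Real.log (Real.log x) :=
    (Real.tendsto_log_atTop.comp Real.tendsto_log_atTop).eventually_ge_atTop 1
  refine IsBigO.of_bound (Ce * C2 + kappaK K / zetaK K h * (Cm + Cq + 2 * Ct)) ?_
  filter_upwards [eventually_ge_atTop 4, hLLev] with x hx hLL
  have hx0 : 0 < x := by linarith
  obtain ⟨hr2, hL1, hlr, hllr, -⟩ := (msK K).geo x hx
  have g1 := hexp x hx0
  have g2 := hm x hx hLL
  have g3 := hq x (by linarith)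
  have g4 := ht' _ hr2
  have g5 := h2 x hx hLL
  rw [hlr] at g4
  change |∑ p ∈ Sp K x, ∑ q ∈ Sp K (x / nR p.1), al h (nR p.1) * al h (nR q.1) - _| ≤ _ at g2
  change |∑ p ∈ Sp K x, al h (nR p.1) - _ - _| ≤ _ at g3
  change |∑ p ∈ Sp K (Real.sqrt x), al h (nR p.1) ^ 2 - _| ≤ _ at g4
  change ∑ p ∈ Sp K x, (x / nR p.1) ^ θ + ∑ p ∈ Sp K x, ∑ q ∈ Sp K (x / nR p.1), (x / nR p.1 / nR q.1) ^ θ ≤ _ at g5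
  replace g1 := g1.trans (mul_le_mul_of_nonneg_left g5 hCe)
  clear g5
  rw [hc2]
  have hL0 : 0 < Real.log x := by linarith
  rw [Real.norm_eq_abs, Real.norm_of_nonneg (by positivity)]
  generalize ∑ p ∈ Sp K x, ∑ q ∈ Sp K (x / nR p.1), al h (nR p.1) * al h (nR q.1) = M at *
  generalize ∑ p ∈ Sp K x, al h (nR p.1) = Q at *
  generalize ∑ p ∈ Sp K (Real.sqrt x), al h (nR p.1) ^ 2 = D at *
  generalize (∑' p : PK K, al h (nR p.1) ^ 2) = D' at *
  simp only [Set.mem_ofPred_eq] at g1 ⊢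
  generalize (∑ᶠ (I : Ideal (𝓞 K)) (_ : I ≠ ⊥ ∧ HFreeI h I ∧ (Ideal.absNorm I : ℝ) ≤ x), (omegaK I : ℝ) ^ 2) = W at g1 ⊢
  generalize C1K K h A = c at *
  generalize Real.log (Real.log x) = LL at *
  generalize Real.log x = L at *
  have e3 : kappaK K * (2 * c + 1) / zetaK K h = kappaK K / zetaK K h * (2 * c + 1) := by ring
  have e4 : kappaK K * (c ^ 2 + c + -(Real.pi ^ 2) / 6 - D') / zetaK K h =
    kappaK K / zetaK K h * (c ^ 2 + c + -(Real.pi ^ 2) / 6 - D') := by ring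
  rw [e3, e4]
  generalize kappaK K / zetaK K h = k at *
  have e5 : W - k * (x * LL ^ 2) - k * (2 * c + 1) * (x * LL) - k * (c ^ 2 + c + -(Real.pi ^ 2) / 6 - D') * x
    = (W - k * x * (Q + M - D)) + k * x * ((M - ((LL + c) ^ 2 - Real.pi ^ 2 / 6)) + (Q - LL - c) - (D - D')) := by ring
  rw [e5]
  have t1 := abs_add_le ((M - ((LL + c) ^ 2 - Real.pi ^ 2 / 6)) + (Q - LL - c)) (-(D - D'))
  have t2 := abs_add_le (M - ((LL + c) ^ 2 - Real.pi ^ 2 / 6)) (Q - LL - c)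
  rw [abs_neg, ← sub_eq_add_neg] at t1
  have b1 : 1 / L ≤ LL / L := by gcongr
  have b2 : Cq / L ≤ Cq * (LL / L) := by
    calc Cq / L = Cq * (1 / L) := by ring
      _ ≤ _ := by gcongr
  have b3 : Ct / (L / 2) ≤ 2 * Ct * (LL / L) := by
    calc Ct / (L / 2) = 2 * Ct * (1 / L) := by field_simp
      _ ≤ _ := by gcongr
  refine (abs_add_le _ _).trans ?_
  rw [abs_mul, abs_of_pos (by positivity : 0 < k * x)]
  have b4 : |(M - ((LL + c) ^ 2 - Real.pi ^ 2 / 6)) + (Q - LL - c) - (D - D')| ≤ (Cm + Cq + 2 * Ct) * (LL / L) := by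
    linarith
  calc _ ≤ Ce * (C2 * (x * LL / L)) + k * x * ((Cm + Cq + 2 * Ct) * (LL / L)) := by gcongr
    _ = _ := by ring
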